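/- arXiv:2507.15196 — 4 statements merged into one kernel-verified Lean document; each statement's English description precedes it below -/
import Mathlib

section
/- Let k, l be nonzero rational numbers. There exist a positive integer d₁ = d₁(k, l), a nonnegative integer d₂ = d₂(k, l) and a constant B = B(k, l) > 0 such that for all real random variables X and Y with bounded ranges (not necessarily independent) and all n ∈ ℕ, Hₙ(kX + lY) − (Hₙ(X) + Hₙ(Y))/2 ≤ d₁·( Hₙ(X + Y) − (Hₙ(X) + Hₙ(Y))/2 ) + d₂·( Hₙ(X) + Hₙ(Y) − Hₙ(X, Y) ) + B. -/
open MeasureTheory ProbabilityTheory Real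

/-- The dyadic discretization map `D_n(x) = 2^{-n} ⌊2^n x⌋`. -/
noncomputable def Dn (n : ℕ) (x : ℝ) : ℝ := (⌊(2 : ℝ) ^ n * x⌋ : ℝ) / (2 : ℝ) ^ n

/-- Shannon entropy (base 2) of the discrete random variable `f` under `P`. -/
noncomputable def entOf {Ω : Type*} [MeasurableSpace Ω] {S : Type*}
    (P : Measure Ω) (f : Ω → S) : ℝ :=
  ∑' s : S, -((P (f ⁻¹' {s})).toReal * Real.logb 2 (P (f ⁻¹' {s})).toReal)

/-- `H_n(X)`: entropy of `D_n(X)`. -/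
noncomputable def Hn {Ω : Type*} [MeasurableSpace Ω] (P : Measure Ω) (n : ℕ) (X : Ω → ℝ) : ℝ :=
  entOf P (fun ω => Dn n (X ω))

/-- `H_n(X,Y)`: entropy of `(D_n(X), D_n(Y))`. -/
noncomputable def Hn2 {Ω : Type*} [MeasurableSpace Ω] (P : Measure Ω) (n : ℕ)
    (X Y : Ω → ℝ) : ℝ :=
  entOf P (fun ω => (Dn n (X ω), Dn n (Y ω)))


open Classical in
/-- probability of the fibre of `f` through `x` -/
noncomputable def fib {α S : Type*} [Fintype α] (w : α → ℝ) (f : α → S) (x : α) : ℝ :=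
  ∑ y, if f y = f x then w y else 0

/-- finite entropy (natural log) -/
noncomputable def ent {α S : Type*} [Fintype α] (w : α → ℝ) (f : α → S) : ℝ :=
  -∑ x, w x * Real.log (fib w f x)

section finite
variable {α S S' S'' S''' : Type*} [Fintype α] {w : α → ℝ}

lemma fib_nonneg (hw : ∀ x, 0 ≤ w x) (f : α → S) (x : α) : 0 ≤ fib w f x := by
  unfold fib
  exact Finset.sum_nonneg fun y _ => by split_ifs <;> simp [hw]

lemma le_fib (hw : ∀ x, 0 ≤ w x) (f : α → S) (x : α) : w x ≤ fib w f x := by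
  classical
  unfold fib
  have := Finset.single_le_sum (f := fun y => if f y = f x then w y else 0)
    (fun y _ => by split_ifs <;> simp [hw]) (Finset.mem_univ x)
  simpa using this

lemma fib_congr {f : α → S} {x y : α} (h : f x = f y) : fib w f x = fib w f y := by
  unfold fib; rw [h]

lemma ent_mono (hw : ∀ x, 0 ≤ w x) {f : α → S} {g : α → S'}
    (h : ∀ x y, f x = f y → g x = g y) : ent w g ≤ ent w f := by
  unfold ent
  apply neg_le_neg
  apply Finset.sum_le_sum
  intro x _
  rcases (hw x).eq_or_lt with h0 | h0
  · simp [← h0]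
  apply mul_le_mul_of_nonneg_left _ (hw x)
  apply Real.log_le_log (h0.trans_le (le_fib hw f x))
  unfold fib
  apply Finset.sum_le_sum
  intro y _
  by_cases hy : f y = f x
  · simp [hy, h _ _ hy]
  · simp only [hy, if_false]; split_ifs <;> simp [hw]

lemma ent_congr (hw : ∀ x, 0 ≤ w x) {f : α → S} {g : α → S'}
    (h : ∀ x y, f x = f y ↔ g x = g y) : ent w g = ent w f :=
  le_antisymm (ent_mono hw fun x y => (h x y).1) (ent_mono hw fun x y => (h x y).2)

lemma sub_key (hw : ∀ x, 0 ≤ w x) (h1 : ∑ x, w x = 1) (Z : α → S) (U : α → S') (V : α → S'')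
    (hU : ∀ x y, U x = U y → Z x = Z y) (hV : ∀ x y, V x = V y → Z x = Z y) :
    ∑ x, w x * (fib w U x * fib w V x / (fib w (fun x => (U x, V x)) x * fib w Z x)) ≤ 1 := by
  classical
  set q := fib w (fun x => (U x, V x)) with hq
  have e1 : ∑ x, w x * (fib w U x * fib w V x / (q x * fib w Z x)) =
      ∑ y, ∑ z, ∑ x, (if U y = U x then w y else 0) * (if V z = V x then w z else 0) *
        (w x / (q x * fib w Z x)) := by
    rw [Finset.sum_congr rfl (fun y _ => Finset.sum_comm), Finset.sum_comm]
    refine Finset.sum_congr rfl fun x _ => ?_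
    simp_rw [← Finset.sum_mul, ← Finset.mul_sum]
    rw [← Finset.sum_mul]
    unfold fib
    ring
  have e2 : ∀ y z, ∑ x, (if U y = U x then w y else 0) * (if V z = V x then w z else 0) *
        (w x / (q x * fib w Z x)) ≤ w y / fib w Z y * (if Z z = Z y then w z else 0) := by
    intro y z
    have hR : 0 ≤ w y / fib w Z y * (if Z z = Z y then w z else 0) := by
      have := fib_nonneg hw Z y
      have := hw y
      have := hw z
      split_ifs <;> positivity
    by_cases hex : ∃ x0, U y = U x0 ∧ V z = V x0
    · obtain ⟨x0, hx1, hx2⟩ := hex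
      have hz : Z z = Z y := (hV _ _ hx2).trans (hU _ _ hx1).symm
      have : ∀ x, (if U y = U x then w y else 0) * (if V z = V x then w z else 0) *
        (w x / (q x * fib w Z x)) = (w y * w z / fib w Z y / q x0) *
          (if (fun x => (U x, V x)) x = (fun x => (U x, V x)) x0 then w x else 0) := by
        intro x
        by_cases hh : U y = U x ∧ V z = V x
        · have a1 : (fun x => (U x, V x)) x = (fun x => (U x, V x)) x0 := by
            simp [← hh.1, ← hh.2, hx1, hx2]
          have a2 : q x = q x0 := fib_congr a1
          have a3 : fib w Z x = fib w Z y := fib_congr (hU _ _ hh.1).symm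
          rw [if_pos hh.1, if_pos hh.2, if_pos a1, a2, a3]
          ring
        · have a1 : ¬ ((fun x => (U x, V x)) x = (fun x => (U x, V x)) x0) := by
            simp only [Prod.mk.injEq, ← hx1, ← hx2]
            intro h; exact hh ⟨h.1.symm, h.2.symm⟩
          rw [if_neg a1]
          by_cases h3 : U y = U x
          · have h4 : ¬ V z = V x := fun h => hh ⟨h3, h⟩
            simp [h4]
          · simp [h3]
      rw [Finset.sum_congr rfl fun x _ => this x, ← Finset.mul_sum, if_pos hz]
      have : (∑ x, if (fun x => (U x, V x)) x = (fun x => (U x, V x)) x0 then w x else 0) = q x0 := by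
        rw [hq]; unfold fib; congr!
      rw [this]
      by_cases h0 : q x0 = 0
      · rw [h0]; simpa [hz] using hR
      · field_simp; exact le_refl _
    · refine le_trans (le_of_eq ?_) hR
      apply Finset.sum_eq_zero
      intro x _
      by_cases h3 : U y = U x
      · have h4 : ¬ V z = V x := fun h => hex ⟨x, h3, h⟩
        simp [h4]
      · simp [h3]
  rw [e1]
  calc _ ≤ ∑ y, ∑ z, w y / fib w Z y * (if Z z = Z y then w z else 0) :=
        Finset.sum_le_sum fun y _ => Finset.sum_le_sum fun z _ => e2 y z
    _ ≤ ∑ y, w y := by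
        apply Finset.sum_le_sum
        intro y _
        rw [← Finset.mul_sum]
        change w y / fib w Z y * fib w Z y ≤ w y
        by_cases h0 : fib w Z y = 0
        · simp [h0, hw]
        · rw [div_mul_cancel₀ _ h0]
    _ = 1 := h1

/-- submodularity -/
lemma ent_submod (hw : ∀ x, 0 ≤ w x) (h1 : ∑ x, w x = 1) (Z : α → S) (U : α → S') (V : α → S'')
    (T : α → S''')
    (hU : ∀ x y, U x = U y → Z x = Z y) (hV : ∀ x y, V x = V y → Z x = Z y)
    (hT : ∀ x y, U x = U y → V x = V y → T x = T y) :
    ent w Z + ent w T ≤ ent w U + ent w V := by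
  have hm : ent w T ≤ ent w (fun x => (U x, V x)) := by
    apply ent_mono hw
    intro x y h
    simp only [Prod.mk.injEq] at h
    exact hT _ _ h.1 h.2
  have hk := sub_key hw h1 Z U V hU hV
  have : ∑ x, w x * (Real.log (fib w U x) + Real.log (fib w V x)
      - Real.log (fib w (fun x => (U x, V x)) x) - Real.log (fib w Z x)) ≤
      ∑ x, (w x * (fib w U x * fib w V x / (fib w (fun x => (U x, V x)) x * fib w Z x)) - w x) := by
    apply Finset.sum_le_sum
    intro x _
    rcases (hw x).eq_or_lt with h0 | h0
    · simp [← h0]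
    have p1 := h0.trans_le (le_fib hw U x)
    have p2 := h0.trans_le (le_fib hw V x)
    have p3 := h0.trans_le (le_fib hw Z x)
    have p4 := h0.trans_le (le_fib hw (fun x => (U x, V x)) x)
    have := Real.log_le_sub_one_of_pos (x := fib w U x * fib w V x / (fib w (fun x => (U x, V x)) x * fib w Z x)) (by positivity)
    rw [Real.log_div (by positivity) (by positivity), Real.log_mul p1.ne' p2.ne',
      Real.log_mul p4.ne' p3.ne'] at this
    have := mul_le_mul_of_nonneg_left this (hw x)
    linarith
  rw [Finset.sum_sub_distrib, h1] at this
  simp only [mul_sub, mul_add, Finset.sum_sub_distrib, Finset.sum_add_distrib] at this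
  have e : ent w Z + ent w (fun x => (U x, V x)) ≤ ent w U + ent w V := by
    unfold ent
    linarith
  linarith

lemma ent_const (h1 : ∑ x, w x = 1) (c : S) : ent w (fun _ : α => c) = 0 := by
  simp [ent, fib, h1]

lemma ent_pair (hw : ∀ x, 0 ≤ w x) (h1 : ∑ x, w x = 1) (U : α → S') (V : α → S'')
    (T : α → S''') (hT : ∀ x y, U x = U y → V x = V y → T x = T y) :
    ent w T ≤ ent w U + ent w V := by
  have := ent_submod hw h1 (fun _ => ()) U V T (by simp) (by simp) hT
  rw [ent_const h1] at this
  linarith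

lemma ent_card (hw : ∀ x, 0 ≤ w x) (h1 : ∑ x, w x = 1) (E : α → S) (s : Finset S)
    (hs : ∀ x, E x ∈ s) : ent w E ≤ Real.log s.card := by
  classical
  have hne : 0 < s.card := by
    have : ∃ x : α, True := by
      by_contra h
      push Not at h
      have : IsEmpty α := ⟨fun x => h x⟩
      simp at h1
    obtain ⟨x, _⟩ := this
    exact Finset.card_pos.2 ⟨_, hs x⟩
  have hN : (0 : ℝ) < s.card := by exact_mod_cast hne
  have k1 : ∑ x, w x / fib w E x ≤ s.card := by
    rw [← Finset.sum_fiberwise_of_maps_to (s := Finset.univ) (t := s) (g := E) (fun x _ => hs x)]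
    calc _ ≤ ∑ e ∈ s, (1 : ℝ) := ?_
      _ = _ := by simp
    apply Finset.sum_le_sum
    intro e _
    by_cases hex : ∃ x0, E x0 = e
    · obtain ⟨x0, rfl⟩ := hex
      have : ∑ x with E x = E x0, w x / fib w E x = ∑ x with E x = E x0, w x / fib w E x0 := by
        apply Finset.sum_congr rfl
        intro x hx
        rw [fib_congr (Finset.mem_filter.1 hx).2]
      rw [this, ← Finset.sum_div, Finset.sum_filter]
      exact div_self_le_one _
    · push Not at hex
      rw [Finset.sum_eq_zero]
      · norm_num
      · intro x hx
        exact absurd (Finset.mem_filter.1 hx).2 (hex x)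
  have : ∑ x, w x * (- Real.log (fib w E x) - Real.log s.card) ≤
      ∑ x, ((w x / fib w E x) / s.card - w x) := by
    apply Finset.sum_le_sum
    intro x _
    rcases (hw x).eq_or_lt with h0 | h0
    · simp [← h0]
    have p1 := h0.trans_le (le_fib hw E x)
    have := Real.log_le_sub_one_of_pos (x := 1 / (fib w E x * s.card)) (by positivity)
    rw [one_div, Real.log_inv, Real.log_mul p1.ne' hN.ne'] at this
    have := mul_le_mul_of_nonneg_left this (hw x)
    have e : w x * ((fib w E x * s.card)⁻¹ - 1) = (w x / fib w E x) / s.card - w x := by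
      field_simp
    linarith
  rw [Finset.sum_sub_distrib, h1, ← Finset.sum_div] at this
  simp only [mul_sub, Finset.sum_sub_distrib, ← Finset.sum_mul, h1, mul_neg, Finset.sum_neg_distrib] at this
  have : (∑ x, w x / fib w E x) / s.card ≤ 1 := by rw [div_le_one hN]; exact k1
  unfold ent
  linarith

open Classical in
lemma ent_map {β : Type*} [Fintype β] {W : β → ℝ} (φ : β → α)
    (h : ∀ g : α → ℝ, ∑ y, W y * g (φ y) = ∑ x, w x * g x) (f : α → S) :
    ent W (fun y => f (φ y)) = ent w f := by
  have hf : ∀ y, fib W (fun y => f (φ y)) y = fib w f (φ y) := by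
    intro y
    have := h (fun x => if f x = f (φ y) then 1 else 0)
    simpa [fib] using this
  unfold ent
  rw [← h]
  simp_rw [hf]

end finite

section triple
variable {α : Type*} [Fintype α] {w : α → ℝ}

open Classical in
/-- law of three copies of a point, conditionally independent given `b` -/
noncomputable def tri (w : α → ℝ) (b : α → ℤ) (t : α × α × α) : ℝ :=
  (if b t.2.1 = b t.1 then w t.2.1 else 0) * (if b t.2.2 = b t.1 then w t.2.2 else 0)
    * (w t.1 / (fib w b t.1) ^ 2)

lemma tri_nonneg (hw : ∀ x, 0 ≤ w x) (b : α → ℤ) (t : α × α × α) : 0 ≤ tri w b t := by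
  unfold tri
  have := hw t.1
  have := hw t.2.1
  have := hw t.2.2
  split_ifs <;> positivity

lemma tri_marg (hw : ∀ x, 0 ≤ w x) (b : α → ℤ) (g : α → ℝ) :
    ∑ t, tri w b t * g t.1 = ∑ x, w x * g x := by
  classical
  rw [Fintype.sum_prod_type]
  apply Finset.sum_congr rfl
  intro x _
  rw [Fintype.sum_prod_type]
  unfold tri
  simp only
  simp_rw [← Finset.sum_mul, ← Finset.mul_sum]
  rw [← Finset.sum_mul]
  have : (∑ y, if b y = b x then w y else 0) = fib w b x := by unfold fib; congr!
  rw [this]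
  rcases (hw x).eq_or_lt with h0 | h0
  · simp [← h0]
  have := h0.trans_le (le_fib hw b x)
  field_simp

lemma tri_swap (b : α → ℤ) (x y z : α) : tri w b (y, x, z) = tri w b (x, y, z) := by
  unfold tri
  simp only
  by_cases h : b x = b y
  · rw [fib_congr h, h]; simp; split_ifs <;> ring
  · simp [h, Ne.symm h]

lemma tri_swap' (b : α → ℤ) (x y z : α) : tri w b (x, z, y) = tri w b (x, y, z) := by
  unfold tri
  simp only
  ring

/-- transposition of the first two coordinates -/
def sw1 (t : α × α × α) : α × α × α := (t.2.1, t.1, t.2.2)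
/-- transposition of the last two coordinates -/
def sw2 (t : α × α × α) : α × α × α := (t.1, t.2.2, t.2.1)

lemma tri_sum1 (b : α → ℤ) (g : α × α × α → ℝ) :
    ∑ t, tri w b t * g (sw1 t) = ∑ t, tri w b t * g t := by
  refine Fintype.sum_equiv ⟨sw1, sw1, fun t => rfl, fun t => rfl⟩ _ _ ?_
  rintro ⟨x, y, z⟩
  change tri w b (x, y, z) * g (y, x, z) = tri w b (y, x, z) * g (y, x, z)
  rw [tri_swap b x y z]

lemma tri_sum2 (b : α → ℤ) (g : α × α × α → ℝ) :
    ∑ t, tri w b t * g (sw2 t) = ∑ t, tri w b t * g t := by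
  refine Fintype.sum_equiv ⟨sw2, sw2, fun t => rfl, fun t => rfl⟩ _ _ ?_
  rintro ⟨x, y, z⟩
  change tri w b (x, y, z) * g (x, z, y) = tri w b (x, z, y) * g (x, z, y)
  rw [tri_swap' b x y z]

lemma tri_ent1 {S : Type*} (b : α → ℤ) (f : α × α × α → S) :
    ent (tri w b) (fun t => f (sw1 t)) = ent (tri w b) f := ent_map sw1 (tri_sum1 b) f

lemma tri_ent2 {S : Type*} (b : α → ℤ) (f : α × α × α → S) :
    ent (tri w b) (fun t => f (sw2 t)) = ent (tri w b) f := ent_map sw2 (tri_sum2 b) f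

lemma tri_fib (b a : α → ℤ) (x y z : α) (hy : b y = b x) (hz : b z = b x) :
    fib (tri w b) (fun t => (a t.1, a t.2.1, a t.2.2, b t.1)) (x, y, z) =
      fib w (fun x => (a x, b x)) x * fib w (fun x => (a x, b x)) y * fib w (fun x => (a x, b x)) z
        / (fib w b x) ^ 2 := by
  classical
  have : ∀ x' y' z', (if (a x', a y', a z', b x') = (a x, a y, a z, b x) then
      tri w b (x', y', z') else 0) =
      (if (a y', b y') = (a y, b y) then w y' else 0) * (if (a z', b z') = (a z, b z) then w z' else 0)
       * ((if (a x', b x') = (a x, b x) then w x' else 0) / fib w b x ^ 2) := by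
    intro x' y' z'
    by_cases hb : b x' = b x
    · simp only [tri, Prod.mk.injEq, hb, hy, hz, fib_congr hb]
      by_cases h1 : a x' = a x <;> by_cases h2 : a y' = a y <;> by_cases h3 : a z' = a z <;> simp [h1, h2, h3]
    · simp [hb]
  conv_lhs => unfold fib
  rw [Fintype.sum_prod_type]
  simp_rw [Fintype.sum_prod_type]
  calc _ = ∑ x', ∑ y', ∑ z', (if (a y', b y') = (a y, b y) then w y' else 0) * (if (a z', b z') = (a z, b z) then w z' else 0)
       * ((if (a x', b x') = (a x, b x) then w x' else 0) / fib w b x ^ 2) := by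
        refine Finset.sum_congr rfl fun x' _ => Finset.sum_congr rfl fun y' _ =>
          Finset.sum_congr rfl fun z' _ => ?_
        rw [← this]
        congr!
    _ = _ := by
      simp_rw [← Finset.sum_mul, ← Finset.mul_sum, ← Finset.sum_mul, ← Finset.sum_div]
      have : ∀ u, (∑ y', if (a y', b y') = (a u, b u) then w y' else 0) = fib w (fun x => (a x, b x)) u := by
        intro u
        unfold fib; congr!
      rw [this, this, this]
      ring

lemma tri_ent (hw : ∀ x, 0 ≤ w x) (b a : α → ℤ) :
    ent (tri w b) (fun t => (a t.1, a t.2.1, a t.2.2, b t.1)) =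
      3 * ent w (fun x => (a x, b x)) - 2 * ent w b := by
  set q := fib w (fun x => (a x, b x)) with hq
  have key : ∀ t, tri w b t * Real.log (fib (tri w b) (fun t => (a t.1, a t.2.1, a t.2.2, b t.1)) t) =
     tri w b t * Real.log (q t.1) + tri w b t * Real.log (q t.2.1) + tri w b t * Real.log (q t.2.2)
      - 2 * (tri w b t * Real.log (fib w b t.1)) := by
    rintro ⟨x, y, z⟩
    rcases (tri_nonneg hw b (x, y, z)).eq_or_lt with h0 | h0
    · simp [← h0]
    have hy : b y = b x := by
      by_contra h; simp [tri, h] at h0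
    have hz : b z = b x := by
      by_contra h; simp [tri, h] at h0
    have pos : ∀ u, w u ≠ 0 → 0 < w u := fun u h => lt_of_le_of_ne (hw u) (Ne.symm h)
    have px : 0 < w x := pos x (by intro h; simp [tri, h] at h0)
    have py : 0 < w y := pos y (by intro h; simp [tri, h] at h0)
    have pz : 0 < w z := pos z (by intro h; simp [tri, h] at h0)
    have qx := px.trans_le (le_fib hw (fun x => (a x, b x)) x)
    have qy := py.trans_le (le_fib hw (fun x => (a x, b x)) y)
    have qz := pz.trans_le (le_fib hw (fun x => (a x, b x)) z)
    have bx := px.trans_le (le_fib hw b x)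
    rw [tri_fib b a x y z hy hz, Real.log_div (by positivity) (by positivity),
      Real.log_mul (by positivity) (by positivity), Real.log_mul (by positivity) (by positivity), Real.log_pow]
    push_cast
    ring
  have m1 := tri_marg hw b (fun x => Real.log (q x))
  have m2 := tri_sum1 (w := w) b (fun t => Real.log (q t.1))
  have m3 := tri_sum2 (w := w) b (fun t => Real.log (q t.2.1))
  have m4 := tri_marg hw b (fun x => Real.log (fib w b x))
  simp only [sw1, sw2] at m2 m3
  rw [ent, Finset.sum_congr rfl fun t _ => key t, Finset.sum_sub_distrib, Finset.sum_add_distrib,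
    Finset.sum_add_distrib, ← Finset.mul_sum, m3, m2, m1, m4]
  unfold ent
  ring

lemma ent_ae {S : Type*} {f g : α → S} (h : ∀ x, w x ≠ 0 → f x = g x) : ent w f = ent w g := by
  unfold ent
  congr 1
  apply Finset.sum_congr rfl
  intro x _
  by_cases hx : w x = 0
  · simp [hx]
  have : fib w f x = fib w g x := by
    unfold fib
    apply Finset.sum_congr rfl
    intro y _
    by_cases hy : w y = 0
    · simp [hy]
    rw [h x hx, h y hy]
  rw [this]

lemma core (hw : ∀ x, 0 ≤ w x) (h1 : ∑ x, w x = 1) (a1 a2 a3 b : α → ℤ) (hA hB hAB s : ℝ)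
    (e1 : ent w a1 = hA) (e2 : ent w a2 = hA) (eb : ent w b = hB)
    (s1 : ent w (fun x => a1 x + b x) = s) (s2 : ent w (fun x => a2 x + b x) = s)
    (d13 : ent w (fun x => a1 x - a3 x) = ent w (fun x => a1 x - a2 x))
    (d23 : ent w (fun x => a2 x - a3 x) = ent w (fun x => a1 x - a2 x))
    (hT : ent w (fun x => a1 x - a2 x - a3 x) = ent w (fun x => a1 x + a2 x - a3 x))
    (f32 : ∀ c : ℤ, ent w (fun x => a3 x + c * a2 x) = ent w (fun x => a1 x + c * a2 x))
    (f31 : ∀ c : ℤ, ent w (fun x => a3 x + c * a1 x) = ent w (fun x => a1 x + c * a2 x))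
    (h4 : ent w (fun x => (a1 x, a2 x, a3 x, b x)) = 3 * hAB - 2 * hB)
    (p1 : ent w (fun x => (a1 x, b x)) = hAB) (p3 : ent w (fun x => (a3 x, b x)) = hAB)
    (p r : ℤ) :
    ent w (fun x => p * a1 x + r * b x) ≤ s + ((p.natAbs + r.natAbs : ℕ) : ℝ) *
        (4 * s - 2 * hA - 2 * hB + 10 * (hA + hB - hAB)) + 5 * (hA + hB - hAB) := by
  have t3 : 3 * hAB - 3 * hB ≤ ent w (fun x => (a1 x, a2 x, a3 x)) := by
    have := ent_pair hw h1 (fun x => (a1 x, a2 x, a3 x)) b (fun x => (a1 x, a2 x, a3 x, b x))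
      (by simp only [Prod.mk.injEq]; grind)
    linarith
  have t12b : 2 * hAB - hB ≤ ent w (fun x => (a1 x, a2 x, b x)) := by
    have := ent_submod hw h1 b (fun x => (a1 x, a2 x, b x)) (fun x => (a3 x, b x))
      (fun x => (a1 x, a2 x, a3 x, b x)) (by simp only [Prod.mk.injEq]; grind)
      (by simp only [Prod.mk.injEq]; grind) (by simp only [Prod.mk.injEq]; grind)
    linarith
  have t12 : ent w (fun x => (a1 x, a2 x)) ≤ 2 * hA := by
    have := ent_pair hw h1 a1 a2 (fun x => (a1 x, a2 x)) (by simp only [Prod.mk.injEq]; grind)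
    linarith
  obtain ⟨D, hD⟩ : ∃ D, ent w (fun x => a1 x - a2 x) = D := ⟨_, rfl⟩
  obtain ⟨T, hTT⟩ : ∃ T, ent w (fun x => a1 x + a2 x - a3 x) = T := ⟨_, rfl⟩
  rw [hD] at d13 d23
  rw [hTT] at hT
  have bD : D ≤ 2 * s + 2 * hA - (2 * hAB - hB) := by
    have i1 := ent_submod hw h1 (fun x => a1 x - a2 x) (fun x => (a1 x + b x, a2 x + b x))
      (fun x => (a1 x, a2 x)) (fun x => (a1 x, a2 x, b x)) (by simp only [Prod.mk.injEq]; grind)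
      (by simp only [Prod.mk.injEq]; grind) (by simp only [Prod.mk.injEq]; grind)
    have i2 := ent_pair hw h1 (fun x => a1 x + b x) (fun x => a2 x + b x)
      (fun x => (a1 x + b x, a2 x + b x)) (by simp only [Prod.mk.injEq]; grind)
    linarith
  have bT : T ≤ 2 * D + 2 * hA - (3 * hAB - 3 * hB) := by
    have i1 := ent_submod hw h1 (fun x => a1 x + a2 x - a3 x) (fun x => (a1 x - a3 x, a2 x))
      (fun x => (a1 x, a2 x - a3 x)) (fun x => (a1 x, a2 x, a3 x)) (by simp only [Prod.mk.injEq]; grind)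
      (by simp only [Prod.mk.injEq]; grind) (by simp only [Prod.mk.injEq]; grind)
    have i2 := ent_pair hw h1 (fun x => a1 x - a3 x) a2
      (fun x => (a1 x - a3 x, a2 x)) (by simp only [Prod.mk.injEq]; grind)
    have i3 := ent_pair hw h1 a1 (fun x => a2 x - a3 x)
      (fun x => (a1 x, a2 x - a3 x)) (by simp only [Prod.mk.injEq]; grind)
    linarith
  have up : ∀ c : ℤ, ent w (fun x => a1 x + (c + 1 : ℤ) * a2 x) ≤
      ent w (fun x => a1 x + c * a2 x) + (T + 2 * hA - (3 * hAB - 3 * hB)) := by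
    intro c
    have i1 := ent_submod hw h1 (fun x => a1 x + (c + 1 : ℤ) * a2 x)
      (fun x => (a1 x + a2 x - a3 x, a3 x + c * a2 x))
      (fun x => (a1 x, a2 x)) (fun x => (a1 x, a2 x, a3 x)) (by simp only [Prod.mk.injEq]; grind)
      (by simp only [Prod.mk.injEq]; grind) (by simp only [Prod.mk.injEq]; grind)
    have i2 := ent_pair hw h1 (fun x => a1 x + a2 x - a3 x) (fun x => a3 x + c * a2 x)
      (fun x => (a1 x + a2 x - a3 x, a3 x + c * a2 x)) (by simp only [Prod.mk.injEq]; grind)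
    have := f32 c
    linarith
  have dn : ∀ c : ℤ, ent w (fun x => a1 x + (c - 1 : ℤ) * a2 x) ≤
      ent w (fun x => a1 x + c * a2 x) + (T + 2 * hA - (3 * hAB - 3 * hB)) := by
    intro c
    have i1 := ent_submod hw h1 (fun x => a1 x + (c - 1 : ℤ) * a2 x)
      (fun x => (a1 x - a2 x - a3 x, a3 x + c * a2 x))
      (fun x => (a1 x, a2 x)) (fun x => (a1 x, a2 x, a3 x)) (by simp only [Prod.mk.injEq]; grind)
      (by simp only [Prod.mk.injEq]; grind) (by simp only [Prod.mk.injEq]; grind)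
    have i2 := ent_pair hw h1 (fun x => a1 x - a2 x - a3 x) (fun x => a3 x + c * a2 x)
      (fun x => (a1 x - a2 x - a3 x, a3 x + c * a2 x)) (by simp only [Prod.mk.injEq]; grind)
    have := f32 c
    linarith
  set E := 4 * s - 2 * hA - 2 * hB + 10 * (hA + hB - hAB) with hE
  have bE : T + 2 * hA - (3 * hAB - 3 * hB) ≤ E := by linarith
  have fN : ∀ m : ℕ, ent w (fun x => a1 x + (m : ℤ) * a2 x) ≤ hA + m * E ∧
      ent w (fun x => a1 x + (-(m : ℤ)) * a2 x) ≤ hA + m * E := by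
    intro m
    induction m with
    | zero => simp [e1]
    | succ m ih =>
      have u1 := up m
      have u2 := dn (-(m : ℤ))
      have : (-(m : ℤ) - 1) = -((m + 1 : ℕ) : ℤ) := by push_cast; ring
      rw [this] at u2
      push_cast at u1 u2 ih ⊢
      constructor <;> linarith [ih.1, ih.2]
  have fZ : ∀ c : ℤ, ent w (fun x => a1 x + c * a2 x) ≤ hA + c.natAbs * E := by
    intro c
    rcases Int.natAbs_eq c with h | h
    · have := (fN c.natAbs).1
      rwa [← h] at this
    · have := (fN c.natAbs).2
      rwa [← h] at this
  have g : ent w (fun x => p * a1 x - r * a2 x) ≤ hA + (p.natAbs + r.natAbs : ℝ) * E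
      + 3 * (hA + hB - hAB) := by
    have i1 := ent_submod hw h1 (fun x => p * a1 x - r * a2 x)
      (fun x => (a3 x + p * a1 x, a3 x + r * a2 x))
      (fun x => (a1 x, a2 x)) (fun x => (a1 x, a2 x, a3 x)) (by simp only [Prod.mk.injEq]; grind)
      (by simp only [Prod.mk.injEq]; grind) (by simp only [Prod.mk.injEq]; grind)
    have i2 := ent_pair hw h1 (fun x => a3 x + p * a1 x) (fun x => a3 x + r * a2 x)
      (fun x => (a3 x + p * a1 x, a3 x + r * a2 x)) (by simp only [Prod.mk.injEq]; grind)
    have := f32 r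
    have := f31 p
    linarith [fZ p, fZ r]
  have i1 := ent_submod hw h1 (fun x => p * a1 x + r * b x)
      (fun x => (p * a1 x - r * a2 x, a2 x + b x))
      (fun x => (a1 x, b x)) (fun x => (a1 x, a2 x, b x)) (by simp only [Prod.mk.injEq]; grind)
      (by simp only [Prod.mk.injEq]; grind) (by simp only [Prod.mk.injEq]; grind)
  have i2 := ent_pair hw h1 (fun x => p * a1 x - r * a2 x) (fun x => a2 x + b x)
      (fun x => (p * a1 x - r * a2 x, a2 x + b x)) (by simp only [Prod.mk.injEq]; grind)
  have i3 := ent_pair hw h1 a1 b (fun x => (a1 x, b x)) (by simp only [Prod.mk.injEq]; grind)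
  push_cast
  linarith

lemma tri_pm {S : Type*} (hw : ∀ x, 0 ≤ w x) (b : α → ℤ) (f : α → S) :
    ent (tri w b) (fun t => f t.1) = ent w f :=
  ent_map (fun t : α × α × α => t.1) (tri_marg hw b) f

lemma tri_pm2 {S : Type*} (hw : ∀ x, 0 ≤ w x) (b : α → ℤ) (f : α → S) :
    ent (tri w b) (fun t => f t.2.1) = ent w f :=
  (tri_ent1 b (fun t => f t.1)).trans (tri_pm hw b f)

lemma tri_pm3 {S : Type*} (hw : ∀ x, 0 ≤ w x) (b : α → ℤ) (f : α → S) :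
    ent (tri w b) (fun t => f t.2.2) = ent w f :=
  (tri_ent2 b (fun t => f t.2.1)).trans (tri_pm2 hw b f)

/-- The finite integer-valued inequality. -/
lemma finite_main (hw : ∀ x, 0 ≤ w x) (h1 : ∑ x, w x = 1) (a b : α → ℤ) (p r : ℤ) :
    ent w (fun x => p * a x + r * b x) ≤
      ent w (fun x => a x + b x) + ((p.natAbs + r.natAbs : ℕ) : ℝ) *
        (4 * ent w (fun x => a x + b x) - 2 * ent w a - 2 * ent w b
          + 10 * (ent w a + ent w b - ent w (fun x => (a x, b x))))
        + 5 * (ent w a + ent w b - ent w (fun x => (a x, b x))) := by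
  have hW : ∀ t, 0 ≤ tri w b t := tri_nonneg hw b
  have hW1 : ∑ t, tri w b t = 1 := by
    have := tri_marg hw b (fun _ => 1)
    simpa [h1] using this
  have hsupp : ∀ t, tri w b t ≠ 0 → b t.2.1 = b t.1 ∧ b t.2.2 = b t.1 := by
    intro t ht
    constructor
    · by_contra h; simp [tri, h] at ht
    · by_contra h; simp [tri, h] at ht
  have S2 : ent (tri w b) (fun t => a t.2.1 + b t.1) = ent w (fun x => a x + b x) :=
    (ent_ae fun t ht => by rw [(hsupp t ht).1]).trans (tri_pm2 hw b (fun x => a x + b x))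
  have P3 : ent (tri w b) (fun t => (a t.2.2, b t.1)) = ent w (fun x => (a x, b x)) :=
    (ent_ae fun t ht => by rw [(hsupp t ht).2]).trans (tri_pm3 hw b (fun x => (a x, b x)))
  have D13 : ent (tri w b) (fun t => a t.1 - a t.2.2) = ent (tri w b) (fun t => a t.1 - a t.2.1) :=
    tri_ent2 b (fun t => a t.1 - a t.2.1)
  have D23 : ent (tri w b) (fun t => a t.2.1 - a t.2.2) = ent (tri w b) (fun t => a t.1 - a t.2.1) :=
    (tri_ent1 b (fun t => a t.1 - a t.2.2)).trans D13
  have T1 : ent (tri w b) (fun t => a t.1 - a t.2.1 - a t.2.2) =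
      ent (tri w b) (fun t => a t.1 + a t.2.1 - a t.2.2) := by
    have u1 : ent (tri w b) (fun t => a t.1 + a t.2.2 - a t.2.1) = _ :=
      tri_ent2 b (fun t => a t.1 + a t.2.1 - a t.2.2)
    have u2 : ent (tri w b) (fun t => a t.2.1 + a t.2.2 - a t.1) = _ :=
      tri_ent1 b (fun t => a t.1 + a t.2.2 - a t.2.1)
    rw [← u1, ← u2]
    apply ent_congr hW
    intro x y
    constructor <;> intro h <;> linarith
  have F21 : ∀ c : ℤ, ent (tri w b) (fun t => a t.2.1 + c * a t.1) =
      ent (tri w b) (fun t => a t.1 + c * a t.2.1) :=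
    fun c => tri_ent1 b (fun t => a t.1 + c * a t.2.1)
  have F31 : ∀ c : ℤ, ent (tri w b) (fun t => a t.2.2 + c * a t.1) =
      ent (tri w b) (fun t => a t.1 + c * a t.2.1) :=
    fun c => (tri_ent2 b (fun t => a t.2.1 + c * a t.1)).trans (F21 c)
  have F32 : ∀ c : ℤ, ent (tri w b) (fun t => a t.2.2 + c * a t.2.1) =
      ent (tri w b) (fun t => a t.1 + c * a t.2.1) :=
    fun c => (tri_ent1 b (fun t => a t.2.2 + c * a t.1)).trans (F31 c)
  have P1 : ent (tri w b) (fun t => (a t.1, b t.1)) = ent w (fun x => (a x, b x)) :=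
    tri_pm hw b (fun x => (a x, b x))
  have S1 : ent (tri w b) (fun t => a t.1 + b t.1) = ent w (fun x => a x + b x) :=
    tri_pm hw b (fun x => a x + b x)
  have G := core hW hW1 (fun t => a t.1) (fun t => a t.2.1) (fun t => a t.2.2) (fun t => b t.1)
    (ent w a) (ent w b) (ent w (fun x => (a x, b x))) (ent w (fun x => a x + b x))
    (tri_pm hw b a) (tri_pm2 hw b a) (tri_pm hw b b) S1 S2 D13 D23 T1 F32 F31 (tri_ent hw b a) P1 P3 p r
  have Q : ent (tri w b) (fun t => p * a t.1 + r * b t.1) = ent w (fun x => p * a x + r * b x) :=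
    tri_pm hw b (fun x => p * a x + r * b x)
  rw [Q] at G
  linarith

end triple

lemma entOf_eq {Ω : Type*} [MeasurableSpace Ω] (P : Measure Ω) [IsProbabilityMeasure P]
    {α S : Type*} [Fintype α] (F : Ω → α) (hF : ∀ a, MeasurableSet (F ⁻¹' {a})) (f : α → S) :
    entOf P (fun ω => f (F ω)) = ent (fun a => P.real (F ⁻¹' {a})) f / Real.log 2 := by
  classical
  set w := fun a => P.real (F ⁻¹' {a}) with hw
  have hp : ∀ s, (P ((fun ω => f (F ω)) ⁻¹' {s})).toReal = ∑ a, if f a = s then w a else 0 := by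
    intro s
    have : (fun ω => f (F ω)) ⁻¹' {s} = ⋃ a ∈ Finset.univ.filter (fun a => f a = s), F ⁻¹' {a} := by
      ext ω; simp
    rw [this, ← Measure.real, measureReal_biUnion_finset, Finset.sum_filter]
    · intro a _ b _ hab
      exact Disjoint.preimage _ (by simpa using hab)
    · intro a _; exact hF a
  unfold entOf
  simp_rw [hp]
  rw [tsum_eq_sum (s := Finset.univ.image f)]
  · unfold ent
    rw [← Finset.sum_neg_distrib, ← Finset.sum_fiberwise_of_maps_to (s := Finset.univ)
      (t := Finset.univ.image f) (g := f) (fun x _ => Finset.mem_image_of_mem _ (Finset.mem_univ x)),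
      Finset.sum_div]
    apply Finset.sum_congr rfl
    intro s _
    have : ∑ i with f i = s, -(w i * Real.log (fib w f i)) =
        ∑ i with f i = s, -(w i * Real.log (∑ a, if f a = s then w a else 0)) := by
      apply Finset.sum_congr rfl
      intro i hi
      have hi := (Finset.mem_filter.1 hi).2
      subst hi
      unfold fib
      congr!
    rw [this, Finset.sum_neg_distrib, ← Finset.sum_mul, Finset.sum_filter, Real.logb]
    ring
  · intro s hs
    have : (∑ a, if f a = s then w a else 0) = 0 := by
      apply Finset.sum_eq_zero
      intro a _
      rw [if_neg]
      rintro rfl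
      exact hs (Finset.mem_image_of_mem _ (Finset.mem_univ a))
    simp [this]

lemma floor_sub_mem (u v : ℝ) (K : ℕ) (h : |u - v| ≤ K) :
    ⌊u⌋ - ⌊v⌋ ∈ Finset.Icc (-((K : ℤ) + 1)) (K + 1) := by
  have := Int.floor_le u
  have := Int.floor_le v
  have := Int.lt_floor_add_one u
  have := Int.lt_floor_add_one v
  have := abs_le.1 h
  rw [Finset.mem_Icc]
  constructor
  · have : (-((K : ℤ) + 1) : ℝ) ≤ ((⌊u⌋ - ⌊v⌋ : ℤ) : ℝ) := by push_cast; linarith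
    exact_mod_cast this
  · have : ((⌊u⌋ - ⌊v⌋ : ℤ) : ℝ) ≤ ((K : ℤ) + 1 : ℝ) := by push_cast; linarith
    exact_mod_cast this

lemma floor_bdd (u : ℝ) (K : ℕ) (h : |u| ≤ K) :
    ⌊u⌋ ∈ Set.Icc (-((K : ℤ) + 1)) (K + 1) := by
  have := floor_sub_mem u 0 K (by simpa using h)
  simpa using this

/-- Theorem: for all nonzero rationals `k, l` there are a positive integer `d₁ = d₁(k,l)`,
a nonnegative integer `d₂ = d₂(k,l)` and a constant `B = B(k,l) > 0` such that for all real
random variables `X, Y` with bounded ranges (not necessarily independent) and all `n`,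
`Hₙ(kX+lY) − (Hₙ(X)+Hₙ(Y))/2 ≤ d₁(Hₙ(X+Y) − (Hₙ(X)+Hₙ(Y))/2) + d₂(Hₙ(X)+Hₙ(Y)−Hₙ(X,Y)) + B`. -/
theorem entropy_linear_combination (k l : ℚ) (hk : k ≠ 0) (hl : l ≠ 0) :
    ∃ (d₁ d₂ : ℕ) (B : ℝ), 0 < d₁ ∧ 0 < B ∧
      ∀ (Ω : Type) (mΩ : MeasurableSpace Ω) (P : Measure Ω),
        IsProbabilityMeasure P →
        ∀ (X Y : Ω → ℝ), Measurable X → Measurable Y →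
          ∀ c : ℝ, (∀ ω, |X ω| ≤ c ∧ |Y ω| ≤ c) →
            ∀ n : ℕ,
              Hn P n (fun ω => (k : ℝ) * X ω + (l : ℝ) * Y ω) -
                  (Hn P n X + Hn P n Y) / 2 ≤
                (d₁ : ℝ) * (Hn P n (fun ω => X ω + Y ω) - (Hn P n X + Hn P n Y) / 2) +
                  (d₂ : ℝ) * (Hn P n X + Hn P n Y - Hn2 P n X Y) + B := by
  obtain ⟨p, r, q, hq, hkq, hlq⟩ : ∃ p r : ℤ, ∃ q : ℝ, 0 < q ∧ (k : ℝ) = p / q ∧ (l : ℝ) = r / q := by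
    refine ⟨k.num * l.den, l.num * k.den, k.den * l.den, ?_, ?_, ?_⟩
    · have := k.den_pos
      have := l.den_pos
      positivity
    · have := k.den_pos
      have := l.den_pos
      rw [Rat.cast_def]
      push_cast
      field_simp
    · have := k.den_pos
      have := l.den_pos
      rw [Rat.cast_def]
      push_cast
      field_simp
  obtain ⟨K, hK⟩ := exists_nat_ge (|(k : ℝ)| + |(l : ℝ)|)
  set N := p.natAbs + r.natAbs with hN
  have hL : 0 < Real.log 2 := Real.log_pos (by norm_num)
  set m1 := (Finset.Icc (-((K : ℤ) + 1)) (K + 1)).card with hm1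
  set m2 := (Finset.Icc (-(((2 : ℕ) : ℤ) + 1)) ((2 : ℕ) + 1)).card with hm2
  have hl1 : 0 ≤ Real.log m1 := Real.log_natCast_nonneg _
  have hl2 : 0 ≤ Real.log m2 := Real.log_natCast_nonneg _
  refine ⟨4 * N + 1, 10 * N + 5,
    (Real.log m1 + (4 * N + 1) * Real.log m2) / Real.log 2 + 1, by omega, by positivity, ?_⟩
  intro Ω mΩ P hP X Y hX hY c hc n
  set A : Ω → ℤ := fun ω => ⌊(2 : ℝ) ^ n * X ω⌋ with hA
  set B : Ω → ℤ := fun ω => ⌊(2 : ℝ) ^ n * Y ω⌋ with hB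
  set C : Ω → ℤ := fun ω => ⌊(2 : ℝ) ^ n * (X ω + Y ω)⌋ with hC
  set Z : Ω → ℤ := fun ω => ⌊(2 : ℝ) ^ n * ((k : ℝ) * X ω + (l : ℝ) * Y ω)⌋ with hZ
  have mA : Measurable A := (measurable_const.mul hX).floor
  have mB : Measurable B := (measurable_const.mul hY).floor
  have mC : Measurable C := (measurable_const.mul (hX.add hY)).floor
  have mZ : Measurable Z :=
    (measurable_const.mul ((measurable_const.mul hX).add (measurable_const.mul hY))).floor
  set G : Ω → ℤ × ℤ × ℤ × ℤ := fun ω => (A ω, B ω, C ω, Z ω) with hG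
  have mG : Measurable G := mA.prodMk (mB.prodMk (mC.prodMk mZ))
  have bd : ∀ (D : ℝ) (V : Ω → ℝ), (∀ ω, |V ω| ≤ D) →
      ∃ M : ℕ, ∀ ω, ⌊(2 : ℝ) ^ n * V ω⌋ ∈ Set.Icc (-((M : ℤ) + 1)) (M + 1) := by
    intro D V hV
    obtain ⟨M, hM⟩ := exists_nat_ge ((2 : ℝ) ^ n * D)
    refine ⟨M, fun ω => floor_bdd _ _ ?_⟩
    rw [abs_mul, abs_of_pos (by positivity : (0 : ℝ) < 2 ^ n)]
    exact (mul_le_mul_of_nonneg_left (hV ω) (by positivity)).trans hM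
  have fin : (Set.range G).Finite := by
    obtain ⟨M1, h1⟩ := bd c X (fun ω => (hc ω).1)
    obtain ⟨M2, h2⟩ := bd c Y (fun ω => (hc ω).2)
    obtain ⟨M3, h3⟩ := bd (c + c) (fun ω => X ω + Y ω)
      (fun ω => (abs_add_le _ _).trans (add_le_add (hc ω).1 (hc ω).2))
    obtain ⟨M4, h4⟩ := bd (|(k : ℝ)| * c + |(l : ℝ)| * c) (fun ω => (k : ℝ) * X ω + (l : ℝ) * Y ω)
      (fun ω => (abs_add_le _ _).trans (add_le_add
        (by rw [abs_mul]; exact mul_le_mul_of_nonneg_left (hc ω).1 (abs_nonneg _))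
        (by rw [abs_mul]; exact mul_le_mul_of_nonneg_left (hc ω).2 (abs_nonneg _))))
    refine Set.Finite.subset ((Set.finite_Icc (-((M1 : ℤ) + 1)) (M1 + 1)).prod
      ((Set.finite_Icc (-((M2 : ℤ) + 1)) (M2 + 1)).prod
      ((Set.finite_Icc (-((M3 : ℤ) + 1)) (M3 + 1)).prod
      (Set.finite_Icc (-((M4 : ℤ) + 1)) (M4 + 1))))) ?_
    rintro _ ⟨ω, rfl⟩
    exact ⟨h1 ω, h2 ω, h3 ω, h4 ω⟩
  have : Fintype (Set.range G) := fin.fintype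
  set F : Ω → Set.range G := fun ω => ⟨G ω, ω, rfl⟩ with hFdef
  have mF : ∀ a, MeasurableSet (F ⁻¹' {a}) := by
    intro a
    have : F ⁻¹' {a} = G ⁻¹' {a.1} := by
      ext ω; simp [hFdef, Subtype.ext_iff]
    rw [this]
    exact mG (measurableSet_singleton _)
  set w : Set.range G → ℝ := fun a => P.real (F ⁻¹' {a}) with hw
  have w0 : ∀ a, 0 ≤ w a := fun a => measureReal_nonneg
  have w1 : ∑ a, w a = 1 := by
    have h : (⋃ a ∈ (Finset.univ : Finset (Set.range G)), F ⁻¹' {a}) = Set.univ := by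
      ext ω
      simp only [Set.mem_iUnion, Set.mem_univ, iff_true]
      exact ⟨F ω, Finset.mem_univ _, rfl⟩
    have := measureReal_biUnion_finset (μ := P) (s := Finset.univ) (f := fun a => F ⁻¹' {a})
      (fun a _ b _ hab => Disjoint.preimage _ (by simpa using hab)) (fun a _ => mF a)
    rw [h] at this
    simpa using this.symm
  have inj : ∀ x y : ℤ, (x : ℝ) / 2 ^ n = (y : ℝ) / 2 ^ n ↔ x = y := by
    intro x y
    rw [div_left_inj' (by positivity)]
    exact Int.cast_inj
  have eX : Hn P n X = ent w (fun a => a.1.1) / Real.log 2 := by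
    have := entOf_eq P F mF (fun a => (a.1.1 : ℝ) / 2 ^ n)
    rw [ent_congr w0 (f := fun a => a.1.1) (fun x y => (inj _ _).symm)] at this
    exact this
  have eY : Hn P n Y = ent w (fun a => a.1.2.1) / Real.log 2 := by
    have := entOf_eq P F mF (fun a => (a.1.2.1 : ℝ) / 2 ^ n)
    rw [ent_congr w0 (f := fun a => a.1.2.1) (fun x y => (inj _ _).symm)] at this
    exact this
  have eC : Hn P n (fun ω => X ω + Y ω) = ent w (fun a => a.1.2.2.1) / Real.log 2 := by
    have := entOf_eq P F mF (fun a => (a.1.2.2.1 : ℝ) / 2 ^ n)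
    rw [ent_congr w0 (f := fun a => a.1.2.2.1) (fun x y => (inj _ _).symm)] at this
    exact this
  have eZ : Hn P n (fun ω => (k : ℝ) * X ω + (l : ℝ) * Y ω)
      = ent w (fun a => a.1.2.2.2) / Real.log 2 := by
    have := entOf_eq P F mF (fun a => (a.1.2.2.2 : ℝ) / 2 ^ n)
    rw [ent_congr w0 (f := fun a => a.1.2.2.2) (fun x y => (inj _ _).symm)] at this
    exact this
  have eXY : Hn2 P n X Y = ent w (fun a => (a.1.1, a.1.2.1)) / Real.log 2 := by
    have := entOf_eq P F mF (fun a => ((a.1.1 : ℝ) / 2 ^ n, (a.1.2.1 : ℝ) / 2 ^ n))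
    rw [ent_congr w0 (f := fun a => (a.1.1, a.1.2.1))
      (fun x y => by simp only [Prod.mk.injEq, inj])] at this
    exact this
  have main := finite_main w0 w1 (fun a => a.1.1) (fun a => a.1.2.1) p r
  have bC : ent w (fun a => a.1.1 + a.1.2.1) ≤ ent w (fun a => a.1.2.2.1) + Real.log m2 := by
    have c1 := ent_pair w0 w1 (fun a => a.1.2.2.1) (fun a => a.1.2.2.1 - (a.1.1 + a.1.2.1))
      (fun a => a.1.1 + a.1.2.1) (fun x y h1 h2 => by omega)
    have c2 := ent_card w0 w1 (fun a => a.1.2.2.1 - (a.1.1 + a.1.2.1))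
      (Finset.Icc (-(((2 : ℕ) : ℤ) + 1)) ((2 : ℕ) + 1)) (by
        rintro ⟨_, ω, rfl⟩
        have h := floor_sub_mem ((2 : ℝ) ^ n * (X ω + Y ω)) ((A ω + B ω : ℤ) : ℝ) 2 (by
          have := Int.floor_le ((2 : ℝ) ^ n * X ω)
          have := Int.floor_le ((2 : ℝ) ^ n * Y ω)
          have := Int.lt_floor_add_one ((2 : ℝ) ^ n * X ω)
          have := Int.lt_floor_add_one ((2 : ℝ) ^ n * Y ω)
          rw [abs_le]
          push_cast
          simp only [hA, hB]
          constructor <;> linarith)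
        rw [Int.floor_intCast] at h
        exact h)
    linarith
  have bZ : ent w (fun a => a.1.2.2.2) ≤ ent w (fun a => p * a.1.1 + r * a.1.2.1) + Real.log m1 := by
    have c1 := ent_pair w0 w1 (fun a => p * a.1.1 + r * a.1.2.1)
      (fun a => a.1.2.2.2 - ⌊((p * a.1.1 + r * a.1.2.1 : ℤ) : ℝ) / q⌋)
      (fun a => a.1.2.2.2) (fun x y h1 h2 => by
        rw [h1] at h2
        omega)
    have c2 := ent_card w0 w1 (fun a => a.1.2.2.2 - ⌊((p * a.1.1 + r * a.1.2.1 : ℤ) : ℝ) / q⌋)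
      (Finset.Icc (-((K : ℤ) + 1)) (K + 1)) (by
        rintro ⟨_, ω, rfl⟩
        refine floor_sub_mem ((2 : ℝ) ^ n * ((k : ℝ) * X ω + (l : ℝ) * Y ω))
          (((p * A ω + r * B ω : ℤ) : ℝ) / q) K ?_
        have e : (2 : ℝ) ^ n * ((k : ℝ) * X ω + (l : ℝ) * Y ω) - ((p * A ω + r * B ω : ℤ) : ℝ) / q
          = k * Int.fract ((2 : ℝ) ^ n * X ω) + l * Int.fract ((2 : ℝ) ^ n * Y ω) := by
          rw [Int.fract, Int.fract, hkq, hlq]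
          push_cast
          simp only [hA, hB]
          field_simp
          ring
        rw [e]
        refine ((abs_add_le _ _).trans (add_le_add ?_ ?_)).trans hK
        · rw [abs_mul, Int.abs_fract]
          exact mul_le_of_le_one_right (abs_nonneg _) (Int.fract_lt_one _).le
        · rw [abs_mul, Int.abs_fract]
          exact mul_le_of_le_one_right (abs_nonneg _) (Int.fract_lt_one _).le)
    linarith
  rw [eX, eY, eC, eZ, eXY]
  generalize ent w (fun a => a.1.1) = x1 at *
  generalize ent w (fun a => a.1.2.1) = x2 at *
  generalize ent w (fun a => a.1.2.2.1) = x3 at *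
  generalize ent w (fun a => a.1.2.2.2) = x4 at *
  generalize ent w (fun a => (a.1.1, a.1.2.1)) = x5 at *
  generalize ent w (fun a => a.1.1 + a.1.2.1) = x6 at *
  generalize ent w (fun a => p * a.1.1 + r * a.1.2.1) = x7 at *
  have hmul := mul_le_mul_of_nonneg_left bC (by positivity : (0 : ℝ) ≤ 4 * N + 1)
  have fin1 : x4 - (x1 + x2) / 2 ≤ (4 * N + 1) * (x3 - (x1 + x2) / 2) +
      (10 * N + 5) * (x1 + x2 - x5) + (Real.log m1 + (4 * N + 1) * Real.log m2) := by
    rw [← hN] at main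
    linarith
  have fin2 := div_le_div_of_nonneg_right fin1 hL.le
  push_cast
  have e1 : (x4 - (x1 + x2) / 2) / Real.log 2 =
    x4 / Real.log 2 - (x1 / Real.log 2 + x2 / Real.log 2) / 2 := by ring
  have e2 : ((4 * N + 1) * (x3 - (x1 + x2) / 2) +
      (10 * N + 5) * (x1 + x2 - x5) + (Real.log m1 + (4 * N + 1) * Real.log m2)) / Real.log 2 =
      (4 * N + 1) * (x3 / Real.log 2 - (x1 / Real.log 2 + x2 / Real.log 2) / 2) +
      (10 * N + 5) * (x1 / Real.log 2 + x2 / Real.log 2 - x5 / Real.log 2) +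
      (Real.log m1 + (4 * N + 1) * Real.log m2) / Real.log 2 := by ring
  rw [e1, e2] at fin2
  linarith
end

section
/- There is an absolute constant A > 0 such that the following holds. Let X and Y be independent real random variables with bounded ranges, let κ ≥ 2, and let f, g be weakly κ-bi-Lipschitz real-valued functions defined on the essential ranges of X and Y respectively. Let (X₁, Y₁) and (X₂, Y₂) be independent copies of (X, Y) (so X₁, Y₁, X₂, Y₂ are independent). Then for all n ∈ ℕ: (a) Hₙ(f(X₁) + f(X₂) + g(Y₁) + g(Y₂)) ≤ 3·Hₙ(f(X) + g(Y)) − Hₙ(X) − Hₙ(Y) + A·log κ; (b) Hₙ(f(X₁) − f(X₂) + g(Y₁) − g(Y₂)) ≤ 7·Hₙ(f(X) + g(Y)) − 3·Hₙ(X) − 3·Hₙ(Y) + A·log κ; (c) Hₙ(f(X₁) + f(X₂) − g(Y₁) − g(Y₂)) ≤ 9·Hₙ(f(X) + g(Y)) − 4·Hₙ(X) − 4·Hₙ(Y) + A·log κ. -/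
open MeasureTheory ProbabilityTheory Real

/-- `f` is weakly κ-bi-Lipschitz on `D` with at most `L` pieces: `f` is κ-Lipschitz on `D`,
and `D` decomposes into at most `L` pieces on each of which `f` has a κ-Lipschitz inverse. -/
def WeaklyBiLipschitzOn (f : ℝ → ℝ) (D : Set ℝ) (κ : ℝ) (L : ℕ) : Prop :=
  (∀ x ∈ D, ∀ y ∈ D, |f x - f y| ≤ κ * |x - y|) ∧
    ∃ R : Fin L → Set ℝ, D ⊆ (⋃ i, R i) ∧
      ∀ i : Fin L, ∀ x ∈ D ∩ R i, ∀ y ∈ D ∩ R i, |x - y| ≤ κ * |f x - f y|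

open Classical in
/-- Mass of the fibre of `F` through `a`. -/
noncomputable def fmass {α β : Type*} [Fintype α] (p : α → ℝ) (F : α → β) (a : α) : ℝ :=
  ∑ b, p b * (if F b = F a then 1 else 0)

/-- Entropy of `F` on a finite weighted space. -/
noncomputable def fent {α β : Type*} [Fintype α] (p : α → ℝ) (F : α → β) : ℝ :=
  -∑ a, p a * Real.logb 2 (fmass p F a)

/-- `pm` pushes `p` to `q`. -/
def FPush {α β : Type*} [Fintype α] [Fintype β] (p : α → ℝ) (pm : α → β) (q : β → ℝ) : Prop :=
  ∀ φ : β → ℝ, ∑ a, p a * φ (pm a) = ∑ b, q b * φ b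

/-- probability weights -/
def FProb {α : Type*} [Fintype α] (p : α → ℝ) : Prop := (∀ a, 0 ≤ p a) ∧ ∑ a, p a = 1

/-- product weights -/
def fprod {α β : Type*} (p : α → ℝ) (q : β → ℝ) : α × β → ℝ := fun z => p z.1 * q z.2

section fin
variable {α β γ δ ε : Type*} [Fintype α]

lemma fmass_nonneg {p : α → ℝ} (hp : ∀ a, 0 ≤ p a) (F : α → β) (a : α) : 0 ≤ fmass p F a := by
  classical
  unfold fmass
  refine Finset.sum_nonneg fun b _ => mul_nonneg (hp b) ?_
  split_ifs <;> norm_num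

lemma fmass_ge {p : α → ℝ} (hp : ∀ a, 0 ≤ p a) (F : α → β) (a : α) : p a ≤ fmass p F a := by
  classical
  unfold fmass
  have := Finset.single_le_sum (f := fun b => p b * (if F b = F a then (1:ℝ) else 0))
    (fun b _ => mul_nonneg (hp b) (by split_ifs <;> norm_num)) (Finset.mem_univ a)
  simpa using this

lemma fmass_pos {p : α → ℝ} (hp : ∀ a, 0 ≤ p a) (F : α → β) {a : α} (ha : p a ≠ 0) :
    0 < fmass p F a :=
  lt_of_lt_of_le (lt_of_le_of_ne (hp a) ha.symm) (fmass_ge hp F a)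

lemma fmass_congr {p : α → ℝ} {F : α → β} {a b : α} (h : F a = F b) :
    fmass p F a = fmass p F b := by
  unfold fmass; rw [h]

/-- Gibbs-type inequality. -/
lemma sum_logb_le {p : α → ℝ} (hp : FProb p) (r : α → ℝ) (hr : ∀ a, p a ≠ 0 → 0 < r a)
    (h : ∑ a, p a * r a ≤ 1) : ∑ a, p a * Real.logb 2 (r a) ≤ 0 := by
  have h2 : 0 < Real.log 2 := Real.log_pos (by norm_num)
  have : ∑ a, p a * Real.log (r a) ≤ ∑ a, (p a * r a - p a) := by
    refine Finset.sum_le_sum fun a _ => ?_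
    by_cases ha : p a = 0
    · simp [ha]
    · have := Real.log_le_sub_one_of_pos (hr a ha)
      nlinarith [hp.1 a]
  rw [Finset.sum_sub_distrib, hp.2] at this
  have e : ∑ a, p a * Real.logb 2 (r a) = (∑ a, p a * Real.log (r a)) / Real.log 2 := by
    rw [Finset.sum_div]; refine Finset.sum_congr rfl fun a _ => ?_
    unfold Real.logb; ring
  rw [e]
  exact div_nonpos_of_nonpos_of_nonneg (by linarith) h2.le

lemma fent_submod {p : α → ℝ} (hp : FProb p) (E : α → β) (S : α → γ) (T : α → δ) (T' : α → ε)
    (hE : ∀ a b, p a ≠ 0 → p b ≠ 0 → T a = T b → T' a = T' b → E a = E b)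
    (hS : ∀ a b, p a ≠ 0 → p b ≠ 0 → T a = T b → S a = S b)
    (hS' : ∀ a b, p a ≠ 0 → p b ≠ 0 → T' a = T' b → S a = S b) :
    fent p E + fent p S ≤ fent p T + fent p T' := by
  classical
  have hp0 := hp.1
  set r : α → ℝ := fun a => fmass p T a * fmass p T' a / (fmass p E a * fmass p S a) with hr
  have key : ∑ a, p a * r a ≤ 1 := by
    have e1 : ∑ a, p a * r a = ∑ b, ∑ c, p b * p c * ∑ a,
        (if T b = T a then 1 else 0) * (if T' c = T' a then 1 else 0) *
          (p a / (fmass p E a * fmass p S a)) := by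
      have : ∀ a, p a * r a = ∑ b, ∑ c, p b * p c *
        ((if T b = T a then 1 else 0) * (if T' c = T' a then 1 else 0) *
          (p a / (fmass p E a * fmass p S a))) := by
        intro a
        rw [hr]; simp only
        rw [show p a * (fmass p T a * fmass p T' a / (fmass p E a * fmass p S a)) =
          (fmass p T a * fmass p T' a) * (p a / (fmass p E a * fmass p S a)) by ring]
        rw [fmass, fmass, Finset.sum_mul_sum, Finset.sum_mul]
        refine Finset.sum_congr rfl fun b _ => ?_
        rw [Finset.sum_mul]
        refine Finset.sum_congr rfl fun c _ => ?_
        ring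
      simp_rw [this, Finset.mul_sum]
      rw [Finset.sum_comm]
      refine Finset.sum_congr rfl fun b _ => ?_
      rw [Finset.sum_comm]
    rw [e1]
    have e2 : ∀ b c, p b ≠ 0 → p c ≠ 0 → ∑ a,
        (if T b = T a then 1 else 0) * (if T' c = T' a then 1 else 0) *
          (p a / (fmass p E a * fmass p S a)) ≤ (if S c = S b then 1 else 0) / fmass p S b := by
      intro b c hb hc
      by_cases hex : ∃ a, p a ≠ 0 ∧ T b = T a ∧ T' c = T' a
      · obtain ⟨a₀, ha₀, h1, h2⟩ := hex
        have hSb : S b = S a₀ := hS _ _ hb ha₀ h1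
        have hSc : S c = S a₀ := hS' _ _ hc ha₀ h2
        rw [if_pos (hSc.trans hSb.symm)]
        have hM := fmass_pos hp0 E ha₀
        have hSpos := fmass_pos hp0 S hb
        have : ∑ a, (if T b = T a then 1 else 0) * (if T' c = T' a then 1 else 0) *
          (p a / (fmass p E a * fmass p S a)) ≤
          ∑ a, p a * (if E a = E a₀ then 1 else 0) * (1 / (fmass p E a₀ * fmass p S b)) := by
          refine Finset.sum_le_sum fun a _ => ?_
          by_cases ha : p a = 0
          · simp [ha]
          by_cases h3 : T b = T a
          · by_cases h4 : T' c = T' a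
            · have hEa : E a = E a₀ := hE _ _ ha ha₀ (h3.symm.trans h1) (h4.symm.trans h2)
              have hSa : S a = S b := hS _ _ ha hb h3.symm
              rw [if_pos h3, if_pos h4, if_pos hEa, fmass_congr hEa, fmass_congr hSa]
              apply le_of_eq; ring
            · rw [if_neg h4]; simp only [mul_zero, zero_mul]
              have := hp0 a
              split_ifs <;> positivity
          · rw [if_neg h3]; simp only [zero_mul]
            have := hp0 a
            split_ifs <;> positivity
        refine this.trans ?_
        rw [← Finset.sum_mul]
        change fmass p E a₀ * _ ≤ _
        apply le_of_eq
        field_simp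
      · push Not at hex
        have : ∑ a, (if T b = T a then 1 else 0) * (if T' c = T' a then 1 else 0) *
          (p a / (fmass p E a * fmass p S a)) = 0 := by
          refine Finset.sum_eq_zero fun a _ => ?_
          by_cases ha : p a = 0
          · simp [ha]
          by_cases h3 : T b = T a
          · rw [if_neg (hex a ha h3)]; simp
          · rw [if_neg h3]; simp
        rw [this]
        have := fmass_nonneg hp0 S b
        split_ifs <;> positivity
    calc _ ≤ ∑ b, ∑ c, p b * p c * ((if S c = S b then 1 else 0) / fmass p S b) := by
          refine Finset.sum_le_sum fun b _ => Finset.sum_le_sum fun c _ => ?_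
          by_cases hb : p b = 0
          · simp [hb]
          by_cases hc : p c = 0
          · simp [hc]
          exact mul_le_mul_of_nonneg_left (e2 b c hb hc) (mul_nonneg (hp0 b) (hp0 c))
      _ = ∑ b, p b * (fmass p S b / fmass p S b) := by
          refine Finset.sum_congr rfl fun b _ => ?_
          conv_rhs => rw [show fmass p S b / fmass p S b =
            (∑ c, p c * (if S c = S b then 1 else 0)) / fmass p S b from rfl]
          rw [Finset.sum_div, Finset.mul_sum]
          refine Finset.sum_congr rfl fun c _ => ?_
          ring
      _ ≤ ∑ b, p b := by
          refine Finset.sum_le_sum fun b _ => ?_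
          exact mul_le_of_le_one_right (hp0 b) (div_self_le_one _)
      _ = 1 := hp.2
  have h := sum_logb_le hp r (fun a ha => by
    have := fmass_pos hp0 E ha
    have := fmass_pos hp0 S ha
    have := fmass_pos hp0 T ha
    have := fmass_pos hp0 T' ha
    positivity) key
  have e : ∑ a, p a * Real.logb 2 (r a) = fent p E + fent p S - fent p T - fent p T' := by
    unfold fent
    rw [sub_neg_eq_add, sub_neg_eq_add, ← neg_add, ← Finset.sum_add_distrib,
      ← Finset.sum_neg_distrib, ← Finset.sum_add_distrib, ← Finset.sum_add_distrib]
    refine Finset.sum_congr rfl fun a _ => ?_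
    by_cases ha : p a = 0
    · simp [ha]
    have h1 := (fmass_pos hp0 E ha).ne'
    have h2 := (fmass_pos hp0 S ha).ne'
    have h3 := (fmass_pos hp0 T ha).ne'
    have h4 := (fmass_pos hp0 T' ha).ne'
    rw [hr]; simp only
    rw [Real.logb_div (mul_ne_zero h3 h4) (mul_ne_zero h1 h2), Real.logb_mul h3 h4,
      Real.logb_mul h1 h2]
    ring
  linarith

lemma fent_const {p : α → ℝ} (hp : FProb p) : fent p (fun _ => ()) = 0 := by
  simp [fent, fmass, hp.2]

lemma fent_mono {p : α → ℝ} (hp : FProb p) (S : α → β) (T : α → γ)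
    (h : ∀ a b, p a ≠ 0 → p b ≠ 0 → T a = T b → S a = S b) : fent p S ≤ fent p T := by
  have := fent_submod hp S (fun _ => ()) T (fun _ => ()) (fun a b ha hb h1 _ => h a b ha hb h1)
    (fun _ _ _ _ _ => rfl) (fun _ _ _ _ _ => rfl)
  rw [fent_const hp] at this
  linarith

lemma fent_subadd {p : α → ℝ} (hp : FProb p) (E : α → β) (T : α → δ) (T' : α → ε)
    (hE : ∀ a b, p a ≠ 0 → p b ≠ 0 → T a = T b → T' a = T' b → E a = E b) :
    fent p E ≤ fent p T + fent p T' := by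
  have := fent_submod hp E (fun _ => ()) T T' hE
    (fun _ _ _ _ _ => rfl) (fun _ _ _ _ _ => rfl)
  rw [fent_const hp] at this
  linarith

lemma fent_le_card [Fintype γ] {p : α → ℝ} (hp : FProb p) (F : α → γ) :
    fent p F ≤ Real.logb 2 (Fintype.card γ) := by
  classical
  have hp0 := hp.1
  have hα : Nonempty α := by
    by_contra hne
    rw [not_nonempty_iff] at hne
    have := hp.2
    simp at this
  have hK : (0:ℝ) < Fintype.card γ := by
    have : Nonempty γ := hα.map F
    exact_mod_cast Fintype.card_pos
  have key : ∑ a, p a / fmass p F a ≤ Fintype.card γ := by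
    rw [← Finset.sum_fiberwise (g := F)]
    rw [← Finset.card_univ, Finset.cast_card]
    refine Finset.sum_le_sum fun c _ => ?_
    by_cases h : ∃ a, F a = c
    · obtain ⟨a₀, rfl⟩ := h
      have : ∑ a with F a = F a₀, p a / fmass p F a = fmass p F a₀ / fmass p F a₀ := by
        conv_rhs => rw [show fmass p F a₀ / fmass p F a₀ =
            (∑ c, p c * (if F c = F a₀ then 1 else 0)) / fmass p F a₀ from rfl]
        rw [Finset.sum_div, Finset.sum_filter]
        refine Finset.sum_congr rfl fun c _ => ?_
        split_ifs with h
        · rw [fmass_congr h, mul_one]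
        · simp
      rw [this]; exact div_self_le_one _
    · push Not at h
      rw [Finset.filter_false_of_mem (fun a _ => h a)]; simp
  have h := sum_logb_le hp (fun a => 1 / (fmass p F a * Fintype.card γ)) (fun a ha => by
    have := fmass_pos hp0 F ha
    positivity) (by
      have : ∑ a, p a * (1 / (fmass p F a * Fintype.card γ)) =
          (∑ a, p a / fmass p F a) / Fintype.card γ := by
        rw [Finset.sum_div]; refine Finset.sum_congr rfl fun a _ => ?_
        rw [div_div]; ring
      rw [this]
      exact (div_le_one hK).2 key)
  have e : ∑ a, p a * Real.logb 2 (1 / (fmass p F a * Fintype.card γ)) =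
      fent p F - (∑ a, p a) * Real.logb 2 (Fintype.card γ) := by
    unfold fent
    rw [Finset.sum_mul, ← Finset.sum_neg_distrib, ← Finset.sum_sub_distrib]
    refine Finset.sum_congr rfl fun a _ => ?_
    by_cases ha : p a = 0
    · simp [ha]
    have h1 := (fmass_pos hp0 F ha).ne'
    rw [one_div, Real.logb_inv, Real.logb_mul h1 hK.ne']
    ring
  rw [e, hp.2] at h
  linarith

lemma fent_push [Fintype β] {p : α → ℝ} {pm : α → β} {q : β → ℝ} (h : FPush p pm q) (F : β → ε) :
    fent p (fun a => F (pm a)) = fent q F := by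
  classical
  have hm : ∀ a, fmass p (fun a => F (pm a)) a = fmass q F (pm a) := by
    intro a
    exact h (fun b => if F b = F (pm a) then 1 else 0)
  unfold fent
  simp_rw [hm]
  rw [h (fun b => Real.logb 2 (fmass q F b))]

lemma FPush.comp [Fintype β] [Fintype γ] {p : α → ℝ} {pm : α → β} {q : β → ℝ} {pn : β → γ} {r : γ → ℝ}
    (h : FPush p pm q) (h' : FPush q pn r) : FPush p (fun a => pn (pm a)) r := by
  intro φ
  rw [h (fun b => φ (pn b)), h' φ]

lemma sum_fprod [Fintype β] (p : α → ℝ) (q : β → ℝ) (φ : α × β → ℝ) :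
    ∑ z, fprod p q z * φ z = ∑ a, p a * ∑ b, q b * φ (a, b) := by
  rw [Fintype.sum_prod_type]
  refine Finset.sum_congr rfl fun a _ => ?_
  rw [Finset.mul_sum]
  refine Finset.sum_congr rfl fun b _ => ?_
  simp only [fprod]; ring

lemma FProb.prod [Fintype β] {p : α → ℝ} {q : β → ℝ} (hp : FProb p) (hq : FProb q) : FProb (fprod p q) := by
  refine ⟨fun z => mul_nonneg (hp.1 _) (hq.1 _), ?_⟩
  have := sum_fprod p q (fun _ => 1)
  simpa [hp.2, hq.2] using this

lemma fpush_fst [Fintype β] (p : α → ℝ) {q : β → ℝ} (hq : FProb q) : FPush (fprod p q) Prod.fst p := by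
  intro φ
  rw [sum_fprod p q (fun z => φ z.1)]
  simp only [← Finset.sum_mul, hq.2, one_mul]

lemma fpush_swap [Fintype β] (p : α → ℝ) (q : β → ℝ) : FPush (fprod p q) Prod.swap (fprod q p) := by
  intro φ
  rw [sum_fprod p q (fun z => φ z.swap), sum_fprod]
  simp only [Finset.mul_sum, Prod.swap_prod_mk]
  rw [Finset.sum_comm]
  refine Finset.sum_congr rfl fun a _ => Finset.sum_congr rfl fun b _ => ?_
  ring

lemma fpush_snd [Fintype β] {p : α → ℝ} (q : β → ℝ) (hp : FProb p) : FPush (fprod p q) Prod.snd q :=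
  (fpush_swap p q).comp (fpush_fst q hp)

lemma fpush_map [Fintype β] [Fintype γ] [Fintype δ] {p : α → ℝ} {q : β → ℝ} {pm : α → γ} {pn : β → δ} {p' : γ → ℝ} {q' : δ → ℝ}
    (h : FPush p pm p') (h' : FPush q pn q') :
    FPush (fprod p q) (fun z => (pm z.1, pn z.2)) (fprod p' q') := by
  intro φ
  rw [sum_fprod p q (fun z => φ (pm z.1, pn z.2)), sum_fprod]
  simp only
  have : ∀ a, ∑ b, q b * φ (pm a, pn b) = ∑ d, q' d * φ (pm a, d) := fun a =>
    h' (fun d => φ (pm a, d))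
  simp_rw [this]
  exact h (fun c => ∑ d, q' d * φ (c, d))

lemma fpush_id (p : α → ℝ) : FPush p (fun a => a) p := fun _ => rfl

lemma fent_prod [Fintype β] {p : α → ℝ} {q : β → ℝ} (hp : FProb p) (hq : FProb q) (F : α → γ) (G : β → δ) :
    fent (fprod p q) (fun z => (F z.1, G z.2)) = fent p F + fent q G := by
  classical
  have hm : ∀ z, fmass (fprod p q) (fun z => (F z.1, G z.2)) z = fmass p F z.1 * fmass q G z.2 := by
    intro z
    unfold fmass
    rw [Fintype.sum_prod_type, Finset.sum_mul_sum]
    refine Finset.sum_congr rfl fun a _ => Finset.sum_congr rfl fun b _ => ?_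
    simp only [Prod.mk.injEq, fprod]
    by_cases h1 : F a = F z.1 <;> by_cases h2 : G b = G z.2 <;> simp [h1, h2]
  have e1 := fpush_fst p hq (fun a => Real.logb 2 (fmass p F a))
  have e2 := fpush_snd q hp (fun a => Real.logb 2 (fmass q G a))
  unfold fent
  rw [← e1, ← e2, ← neg_add, ← Finset.sum_add_distrib]
  congr 1
  refine Finset.sum_congr rfl fun z _ => ?_
  rw [hm]
  by_cases hz : fprod p q z = 0
  · simp [hz]
  have h1 : p z.1 ≠ 0 := left_ne_zero_of_mul hz
  have h2 : q z.2 ≠ 0 := right_ne_zero_of_mul hz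
  rw [Real.logb_mul (fmass_pos hp.1 F h1).ne' (fmass_pos hq.1 G h2).ne']
  ring

open Classical in
/-- conditionally independent self-coupling of `r` over `D`. -/
noncomputable def fcoup (r : α → ℝ) (D : α → ε) : α × α → ℝ :=
  fun z => r z.1 * r z.2 * (if D z.2 = D z.1 then 1 else 0) / fmass r D z.1

lemma fcoup_fst {r : α → ℝ} (hr : FProb r) (D : α → ε) : FPush (fcoup r D) Prod.fst r := by
  classical
  intro φ
  rw [Fintype.sum_prod_type]
  refine Finset.sum_congr rfl fun a _ => ?_
  simp only [fcoup]
  by_cases ha : r a = 0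
  · simp [ha]
  have : ∑ b, r a * r b * (if D b = D a then 1 else 0) / fmass r D a * φ a =
      (∑ b, r b * (if D b = D a then 1 else 0)) * (r a * φ a / fmass r D a) := by
    rw [Finset.sum_mul]
    refine Finset.sum_congr rfl fun b _ => ?_
    ring
  rw [this]
  change fmass r D a * _ = _
  have := (fmass_pos hr.1 D ha).ne'
  field_simp

lemma fcoup_swap (r : α → ℝ) (D : α → ε) (a b : α) : fcoup r D (a, b) = fcoup r D (b, a) := by
  classical
  simp only [fcoup]
  by_cases h : D b = D a
  · rw [fmass_congr h]; simp [h]; ring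
  · have : ¬ D a = D b := fun h' => h h'.symm
    simp [h, this]

lemma fcoup_snd {r : α → ℝ} (hr : FProb r) (D : α → ε) : FPush (fcoup r D) Prod.snd r := by
  intro φ
  rw [← fcoup_fst hr D φ, Fintype.sum_prod_type, Fintype.sum_prod_type, Finset.sum_comm]
  refine Finset.sum_congr rfl fun a _ => Finset.sum_congr rfl fun b _ => ?_
  rw [fcoup_swap]

lemma fcoup_prob {r : α → ℝ} (hr : FProb r) (D : α → ε) : FProb (fcoup r D) := by
  classical
  constructor
  · intro z
    unfold fcoup
    have := fmass_nonneg hr.1 D z.1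
    have := hr.1 z.1
    have := hr.1 z.2
    split_ifs <;> positivity
  · have := fcoup_fst hr D (fun _ => 1)
    simpa [hr.2] using this

lemma fcoup_supp {r : α → ℝ} {D : α → ε} {z : α × α} (h : fcoup r D z ≠ 0) :
    D z.2 = D z.1 ∧ r z.1 ≠ 0 ∧ r z.2 ≠ 0 := by
  classical
  unfold fcoup at h
  refine ⟨?_, ?_, ?_⟩
  · by_contra h'; simp [h'] at h
  · intro h'; simp [h'] at h
  · intro h'; simp [h'] at h

lemma fent_fcoup {r : α → ℝ} (hr : FProb r) (D : α → ε) (F : α → β)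
    (hFD : ∀ a b, F a = F b → D a = D b) :
    fent (fcoup r D) (fun z => (F z.1, F z.2)) = 2 * fent r F - fent r D := by
  classical
  have hm : ∀ z, fcoup r D z ≠ 0 → fmass (fcoup r D) (fun z => (F z.1, F z.2)) z =
      fmass r F z.1 * fmass r F z.2 / fmass r D z.1 := by
    intro z hz
    obtain ⟨hD, -, -⟩ := fcoup_supp hz
    conv_lhs => unfold fmass
    rw [Fintype.sum_prod_type, show fmass r F z.1 * fmass r F z.2 =
      (∑ b, r b * (if F b = F z.1 then 1 else 0)) * (∑ b, r b * (if F b = F z.2 then 1 else 0))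
      from rfl, Finset.sum_mul_sum, Finset.sum_div]
    refine Finset.sum_congr rfl fun a _ => ?_
    rw [Finset.sum_div]
    refine Finset.sum_congr rfl fun b _ => ?_
    simp only [Prod.mk.injEq, fcoup]
    by_cases h1 : F a = F z.1
    · by_cases h2 : F b = F z.2
      · have h3 := hFD _ _ h1
        have h4 := hFD _ _ h2
        have h5 : D b = D a := by rw [h3, h4, hD]
        rw [fmass_congr h3]
        simp [h1, h2, h5]
      · simp [h2]
    · simp [h1]
  have e1 := fcoup_fst hr D (fun a => Real.logb 2 (fmass r F a))
  have e2 := fcoup_snd hr D (fun a => Real.logb 2 (fmass r F a))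
  have e3 := fcoup_fst hr D (fun a => Real.logb 2 (fmass r D a))
  have : ∑ z, fcoup r D z * Real.logb 2 (fmass (fcoup r D) (fun z => (F z.1, F z.2)) z) =
      ∑ a, fcoup r D a * Real.logb 2 (fmass r F a.1) + ∑ a, fcoup r D a * Real.logb 2 (fmass r F a.2)
        - ∑ a, fcoup r D a * Real.logb 2 (fmass r D a.1) := by
    rw [← Finset.sum_add_distrib, ← Finset.sum_sub_distrib]
    refine Finset.sum_congr rfl fun z _ => ?_
    by_cases hz : fcoup r D z = 0
    · simp [hz]
    rw [hm z hz]
    obtain ⟨hD, h1, h2⟩ := fcoup_supp hz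
    have h3 := (fmass_pos hr.1 F h1).ne'
    have h4 := (fmass_pos hr.1 F h2).ne'
    have h5 := (fmass_pos hr.1 D h1).ne'
    rw [Real.logb_div (mul_ne_zero h3 h4) h5, Real.logb_mul h3 h4]
    ring
  rw [e1, e2, e3] at this
  unfold fent
  linarith

/-- Sum-difference inequality. -/
lemma fent_sub_le [Fintype β] {p : α → ℝ} {q : β → ℝ} (hp : FProb p) (hq : FProb q) (a : α → ℤ) (b : β → ℤ) :
    fent (fprod p q) (fun z => a z.1 - b z.2) ≤
      3 * fent (fprod p q) (fun z => a z.1 + b z.2) - fent p a - fent q b := by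
  set r := fprod p q with hrdef
  have hr : FProb r := hp.prod hq
  set D : α × β → ℤ := fun z => a z.1 + b z.2 with hD
  set F : α × β → ℤ × ℤ := fun z => (a z.1, b z.2) with hF
  have hrF : fent r F = fent p a + fent q b := fent_prod hp hq a b
  set w := fcoup r D with hw
  have hwp : FProb w := fcoup_prob hr D
  have hwF : fent w (fun z => (F z.1, F z.2)) = 2 * fent r F - fent r D := by
    refine fent_fcoup hr D F ?_
    intro x y h
    simp only [hF, Prod.mk.injEq] at h
    simp only [hD, h.1, h.2]
  set W := fprod w r with hW
  have hWp : FProb W := hwp.prod hr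
  have hE : fent W (fun z => ((F z.1.1, F z.1.2), F z.2)) = 3 * fent r F - fent r D := by
    have := fent_prod hwp hr (fun z => (F z.1, F z.2)) F
    rw [hW, this, hwF]; ring
  -- marginals
  have P1 : FPush W (fun z => z.1.1) r := (fpush_fst w hr).comp (fcoup_fst hr D)
  have P2 : FPush W (fun z => z.1.2) r := (fpush_fst w hr).comp (fcoup_snd hr D)
  have P3 : FPush W (fun z => z.2) r := fpush_snd r hwp
  have P32 : FPush W (fun z => (z.2.1, z.1.2.2)) r :=
    (fpush_swap w r).comp (fpush_map (fpush_fst p hq) ((fcoup_snd hr D).comp (fpush_snd q hp)))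
  have P13 : FPush W (fun z => (z.1.1.1, z.2.2)) r :=
    fpush_map ((fcoup_fst hr D).comp (fpush_fst p hq)) (fpush_snd q hp)
  have h3 : fent W (fun z => F z.2) = fent r F := fent_push P3 F
  have hS : fent W (fun z => a z.2.1 - b z.2.2) = fent r (fun z => a z.1 - b z.2) :=
    fent_push P3 (fun z => a z.1 - b z.2)
  have h32 : fent W (fun z => a z.2.1 + b z.1.2.2) = fent r D := fent_push P32 D
  have h13 : fent W (fun z => a z.1.1.1 + b z.2.2) = fent r D := fent_push P13 D
  have hx2 : fent W (fun z => a z.1.2.1) = fent p a := fent_push (P2.comp (fpush_fst p hq)) a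
  have hy1 : fent W (fun z => b z.1.1.2) = fent q b := fent_push (P1.comp (fpush_snd q hp)) b
  have sub := fent_submod hWp (fun z => ((F z.1.1, F z.1.2), F z.2)) (fun z => a z.2.1 - b z.2.2)
    (fun z => ((a z.2.1 + b z.1.2.2, a z.1.1.1 + b z.2.2), (a z.1.2.1, b z.1.1.2)))
    (fun z => F z.2)
    (by
      intro x y _ _ h h'
      simp only [hF, Prod.mk.injEq] at h h' ⊢
      omega)
    (by
      intro x y hx hy h
      have hx' := (fcoup_supp (left_ne_zero_of_mul hx)).1
      have hy' := (fcoup_supp (left_ne_zero_of_mul hy)).1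
      simp only [hD, Prod.mk.injEq] at h hx' hy' ⊢
      omega)
    (by
      intro x y _ _ h
      simp only [hF, Prod.mk.injEq] at h ⊢
      omega)
  have s1 := fent_subadd hWp
    (fun z => ((a z.2.1 + b z.1.2.2, a z.1.1.1 + b z.2.2), (a z.1.2.1, b z.1.1.2)))
    (fun z => (a z.2.1 + b z.1.2.2, a z.1.1.1 + b z.2.2)) (fun z => (a z.1.2.1, b z.1.1.2))
    (fun x y _ _ h h' => Prod.ext h h')
  have s2 := fent_subadd hWp (fun z => (a z.2.1 + b z.1.2.2, a z.1.1.1 + b z.2.2))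
    (fun z => a z.2.1 + b z.1.2.2) (fun z => a z.1.1.1 + b z.2.2)
    (fun x y _ _ h h' => Prod.ext h h')
  have s3 := fent_subadd hWp (fun z => (a z.1.2.1, b z.1.1.2))
    (fun z => a z.1.2.1) (fun z => b z.1.1.2)
    (fun x y _ _ h h' => Prod.ext h h')
  linarith

lemma fent_add_self {s : α → ℝ} (hs : FProb s) (f : α → ℤ) :
    fent s f ≤ fent (fprod s s) (fun z => f z.1 + f z.2) := by
  have c1 := fent_prod hs hs f f
  have c2 := fent_subadd (hs.prod hs) (fun z => (f z.1, f z.2)) (fun z => f z.1 + f z.2)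
    (fun z => f z.2) (by intro x y _ _ h h'; simp only [Prod.mk.injEq] at h h' ⊢; omega)
  have c3 : fent (fprod s s) (fun z => f z.2) = fent s f := fent_push (fpush_snd s hs) f
  linarith

lemma fent_four [Fintype β] {p : α → ℝ} {q : β → ℝ} (hp : FProb p) (hq : FProb q) (u : α → ℤ) (v : β → ℤ) :
    fent (fprod (fprod p q) (fprod p q)) (fun z => u z.1.1 + u z.2.1 + v z.1.2 + v z.2.2) ≤
      3 * fent (fprod p q) (fun z => u z.1 + v z.2) - fent p u - fent q v ∧
    fent (fprod (fprod p q) (fprod p q)) (fun z => u z.1.1 - u z.2.1 + v z.1.2 - v z.2.2) ≤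
      7 * fent (fprod p q) (fun z => u z.1 + v z.2) - 3 * fent p u - 3 * fent q v ∧
    fent (fprod (fprod p q) (fprod p q)) (fun z => u z.1.1 + u z.2.1 - v z.1.2 - v z.2.2) ≤
      9 * fent (fprod p q) (fun z => u z.1 + v z.2) - 4 * fent p u - 4 * fent q v := by
  set r := fprod p q with hrdef
  have hr : FProb r := hp.prod hq
  set W := fprod r r with hW
  have hWp : FProb W := hr.prod hr
  set Z : α × β → ℤ := fun z => u z.1 + v z.2 with hZ
  have P1 : FPush W (fun z => z.1) r := fpush_fst r hr
  have P2 : FPush W (fun z => z.2) r := fpush_snd r hr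
  have P12 : FPush W (fun z => (z.1.1, z.2.2)) r := fpush_map (fpush_fst p hq) (fpush_snd q hp)
  have hF : fent r (fun z => (u z.1, v z.2)) = fent p u + fent q v := fent_prod hp hq u v
  have hall : fent W (fun z => ((u z.1.1, v z.1.2), (u z.2.1, v z.2.2))) =
      2 * fent p u + 2 * fent q v := by
    have := fent_prod hr hr (fun z => (u z.1, v z.2)) (fun z => (u z.1, v z.2))
    rw [hW, this, hF]; ring
  have hu1 : fent W (fun z => u z.1.1) = fent p u := fent_push (P1.comp (fpush_fst p hq)) u
  have hv1 : fent W (fun z => v z.1.2) = fent q v := fent_push (P1.comp (fpush_snd q hp)) v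
  have hu2 : fent W (fun z => u z.2.1) = fent p u := fent_push (P2.comp (fpush_fst p hq)) u
  have hv2 : fent W (fun z => v z.2.2) = fent q v := fent_push (P2.comp (fpush_snd q hp)) v
  have hz1 : fent W (fun z => u z.1.1 + v z.1.2) = fent r Z := fent_push P1 Z
  have hz2 : fent W (fun z => u z.2.1 + v z.2.2) = fent r Z := fent_push P2 Z
  have hz12 : fent W (fun z => u z.1.1 + v z.2.2) = fent r Z := fent_push P12 Z
  have hF2 : fent W (fun z => (u z.2.1, v z.2.2)) = fent p u + fent q v := by
    rw [← hF]; exact fent_push P2 (fun z => (u z.1, v z.2))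
  have ha : fent W (fun z => u z.1.1 + u z.2.1 + v z.1.2 + v z.2.2) ≤
      3 * fent r Z - fent p u - fent q v := by
    have A1 := fent_submod hWp (fun z => ((u z.1.1, v z.1.2), (u z.2.1, v z.2.2)))
      (fun z => u z.1.1 + u z.2.1 + v z.1.2 + v z.2.2)
      (fun z => (v z.1.2, u z.1.1 + u z.2.1 + v z.2.2))
      (fun z => (u z.1.1 + v z.1.2, (u z.2.1, v z.2.2)))
      (by intro x y _ _ h h'; simp only [Prod.mk.injEq] at h h' ⊢; omega)
      (by intro x y _ _ h; simp only [Prod.mk.injEq] at h ⊢; omega)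
      (by intro x y _ _ h; simp only [Prod.mk.injEq] at h ⊢; omega)
    have A2 := fent_subadd hWp (fun z => (v z.1.2, u z.1.1 + u z.2.1 + v z.2.2))
      (fun z => v z.1.2) (fun z => u z.1.1 + u z.2.1 + v z.2.2) (fun x y _ _ h h' => Prod.ext h h')
    have A3 := fent_subadd hWp (fun z => (u z.1.1 + v z.1.2, (u z.2.1, v z.2.2)))
      (fun z => u z.1.1 + v z.1.2) (fun z => (u z.2.1, v z.2.2)) (fun x y _ _ h h' => Prod.ext h h')
    -- three variables
    have B0 := fent_subadd hWp (fun z => ((u z.1.1, v z.1.2), (u z.2.1, v z.2.2)))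
      (fun z => v z.1.2) (fun z => (u z.1.1, (u z.2.1, v z.2.2)))
      (by intro x y _ _ h h'; simp only [Prod.mk.injEq] at h h' ⊢; omega)
    have B1 := fent_submod hWp (fun z => (u z.1.1, (u z.2.1, v z.2.2)))
      (fun z => u z.1.1 + u z.2.1 + v z.2.2)
      (fun z => (u z.1.1, u z.2.1 + v z.2.2))
      (fun z => (u z.1.1 + v z.2.2, u z.2.1))
      (by intro x y _ _ h h'; simp only [Prod.mk.injEq] at h h' ⊢; omega)
      (by intro x y _ _ h; simp only [Prod.mk.injEq] at h ⊢; omega)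
      (by intro x y _ _ h; simp only [Prod.mk.injEq] at h ⊢; omega)
    have B2 := fent_subadd hWp (fun z => (u z.1.1, u z.2.1 + v z.2.2))
      (fun z => u z.1.1) (fun z => u z.2.1 + v z.2.2) (fun x y _ _ h h' => Prod.ext h h')
    have B3 := fent_subadd hWp (fun z => (u z.1.1 + v z.2.2, u z.2.1))
      (fun z => u z.1.1 + v z.2.2) (fun z => u z.2.1) (fun x y _ _ h h' => Prod.ext h h')
    linarith
  refine ⟨ha, ?_, ?_⟩
  · have h := fent_sub_le hr hr Z Z
    have e1 : (fun z : (α × β) × (α × β) => Z z.1 - Z z.2) =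
        fun z => u z.1.1 - u z.2.1 + v z.1.2 - v z.2.2 := by
      funext z; simp only [hZ]; ring
    have e2 : (fun z : (α × β) × (α × β) => Z z.1 + Z z.2) =
        fun z => u z.1.1 + u z.2.1 + v z.1.2 + v z.2.2 := by
      funext z; simp only [hZ]; ring
    rw [e1, e2] at h
    linarith
  · have h := fent_sub_le (hp.prod hp) (hq.prod hq) (fun z => u z.1 + u z.2) (fun z => v z.1 + v z.2)
    have hperm : FPush W (fun z => ((z.1.1, z.2.1), (z.1.2, z.2.2)))
        (fprod (fprod p p) (fprod q q)) := by
      intro φ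
      refine Fintype.sum_equiv (Equiv.prodProdProdComm α β α β) _ _ ?_
      intro z
      simp only [hW, hrdef, fprod, Equiv.prodProdProdComm_apply]
      ring
    have e1 := fent_push hperm (fun z => (u z.1.1 + u z.1.2) - (v z.2.1 + v z.2.2))
    have e2 := fent_push hperm (fun z => (u z.1.1 + u z.1.2) + (v z.2.1 + v z.2.2))
    rw [← e1, ← e2] at h
    have e3 : (fun z : (α × β) × (α × β) => (u z.1.1 + u z.2.1) - (v z.1.2 + v z.2.2)) =
        fun z => u z.1.1 + u z.2.1 - v z.1.2 - v z.2.2 := by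
      funext z; ring
    have e4 : (fun z : (α × β) × (α × β) => (u z.1.1 + u z.2.1) + (v z.1.2 + v z.2.2)) =
        fun z => u z.1.1 + u z.2.1 + v z.1.2 + v z.2.2 := by
      funext z; ring
    simp only [e3, e4] at h
    have l1 := fent_add_self hp u
    have l2 := fent_add_self hq v
    linarith

end fin

section bridge
variable {Ω : Type*} [MeasurableSpace Ω] {P : Measure Ω} [IsProbabilityMeasure P]
variable {τ S ι : Type*} [Fintype ι]

open Classical in
lemma bridge_measure (T : Ω → τ) (e : ι → τ) (he : Function.Injective e)
    (hm : ∀ i, MeasurableSet (T ⁻¹' {e i})) (hae : ∀ᵐ ω ∂P, T ω ∈ Set.range e) (q : ι → ℝ)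
    (hq : ∀ i, q i = (P (T ⁻¹' {e i})).toReal) (F : τ → S) (s : S) :
    (P ((fun ω => F (T ω)) ⁻¹' {s})).toReal = ∑ i, q i * (if F (e i) = s then 1 else 0) := by
  have h1 : P ((fun ω => F (T ω)) ⁻¹' {s}) =
      P (⋃ i ∈ Finset.univ.filter (fun i => F (e i) = s), T ⁻¹' {e i}) := by
    apply measure_congr
    filter_upwards [hae] with ω hω
    obtain ⟨i, hi⟩ := hω
    apply propext
    simp only [Set.preimage, Set.mem_singleton_iff, Finset.mem_filter, Finset.mem_univ, true_and]
    change F (T ω) = s ↔ ω ∈ ⋃ i, ⋃ (_ : F (e i) = s), {x | T x = e i}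
    simp only [Set.mem_iUnion, Set.mem_ofPred_eq, exists_prop]
    constructor
    · intro h; exact ⟨i, by rw [hi]; exact h, hi.symm⟩
    · rintro ⟨j, hj, hj'⟩; rw [hj']; exact hj
  rw [h1, measure_biUnion_finset]
  · rw [ENNReal.toReal_sum (fun _ _ => measure_ne_top _ _), Finset.sum_filter]
    refine Finset.sum_congr rfl fun i _ => ?_
    split_ifs <;> simp [hq]
  · intro i _ j _ hij
    refine Disjoint.preimage _ ?_
    rw [Set.disjoint_singleton]
    exact fun h => hij (he h)
  · intro i _; exact hm i

lemma bridge_prob (T : Ω → τ) (e : ι → τ) (he : Function.Injective e)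
    (hm : ∀ i, MeasurableSet (T ⁻¹' {e i})) (hae : ∀ᵐ ω ∂P, T ω ∈ Set.range e) (q : ι → ℝ)
    (hq : ∀ i, q i = (P (T ⁻¹' {e i})).toReal) : FProb q := by
  refine ⟨fun i => by rw [hq]; exact ENNReal.toReal_nonneg, ?_⟩
  have := bridge_measure T e he hm hae q hq (fun _ => ()) ()
  simpa using this.symm

lemma bridge_ent (T : Ω → τ) (e : ι → τ) (he : Function.Injective e)
    (hm : ∀ i, MeasurableSet (T ⁻¹' {e i})) (hae : ∀ᵐ ω ∂P, T ω ∈ Set.range e) (q : ι → ℝ)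
    (hq : ∀ i, q i = (P (T ⁻¹' {e i})).toReal) (F : τ → S) :
    entOf P (fun ω => F (T ω)) = fent q (fun i => F (e i)) := by
  classical
  set M : S → ℝ := fun s => ∑ i, q i * (if F (e i) = s then 1 else 0) with hM
  have hP : ∀ s, (P ((fun ω => F (T ω)) ⁻¹' {s})).toReal = M s := fun s => by
    rw [bridge_measure T e he hm hae q hq F s]
  unfold entOf
  simp_rw [hP]
  rw [tsum_eq_sum (s := Finset.univ.image (fun i => F (e i)))]
  · have h1 : ∀ s ∈ Finset.univ.image (fun i => F (e i)), -(M s * Real.logb 2 (M s)) =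
        ∑ i, -(q i * (if F (e i) = s then Real.logb 2 (M s) else 0)) := by
      intro s _
      rw [Finset.sum_neg_distrib]
      congr 1
      conv_lhs => rw [hM]
      simp only
      rw [Finset.sum_mul]
      refine Finset.sum_congr rfl fun i _ => ?_
      split_ifs <;> simp [hM]
    rw [Finset.sum_congr rfl h1, Finset.sum_comm]
    unfold fent
    rw [← Finset.sum_neg_distrib]
    refine Finset.sum_congr rfl fun i _ => ?_
    rw [Finset.sum_neg_distrib, ← Finset.mul_sum, Finset.sum_ite_eq]
    simp only [Finset.mem_image, Finset.mem_univ, true_and, exists_apply_eq_apply, if_true]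
    rfl
  · intro s hs
    have : M s = 0 := by
      refine Finset.sum_eq_zero fun i _ => ?_
      rw [if_neg, mul_zero]
      intro h
      exact hs (Finset.mem_image.2 ⟨i, Finset.mem_univ _, h⟩)
    rw [this]; simp

lemma entOf_inj {S' : Type*} (f : Ω → S) (m : S → S') (hm : Function.Injective m) :
    entOf P (fun ω => m (f ω)) = entOf P f := by
  unfold entOf
  have h1 : ∀ s, (fun ω => m (f ω)) ⁻¹' {m s} = f ⁻¹' {s} := by
    intro s; ext ω; simp [hm.eq_iff]
  rw [← hm.tsum_eq]
  · simp_rw [h1]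
  · intro t ht
    by_contra hne
    apply ht
    have : (fun ω => m (f ω)) ⁻¹' {t} = ∅ := by
      ext ω
      simp only [Set.mem_preimage, Set.mem_singleton_iff, Set.mem_empty_iff_false, iff_false]
      intro h; exact hne ⟨_, h⟩
    simp [this]

lemma entOf_le_code {Γ : Type*} [Fintype Γ] (W W' : Ω → ℤ) (hW : Measurable W) (hW' : Measurable W')
    (s : Finset (ℤ × ℤ)) (hs : ∀ᵐ ω ∂P, (W ω, W' ω) ∈ s) (C : ℤ × ℤ → Γ)
    (hC : ∀ ω ω', W' ω = W' ω' → C (W ω, W' ω) = C (W ω', W' ω') → W ω = W ω') :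
    entOf P W ≤ entOf P W' + Real.logb 2 (Fintype.card Γ) := by
  set T : Ω → ℤ × ℤ := fun ω => (W ω, W' ω) with hT
  have hTm : Measurable T := hW.prodMk hW'
  set e : s → ℤ × ℤ := fun i => i.1 with he
  have hei : Function.Injective e := Subtype.val_injective
  have hm : ∀ i, MeasurableSet (T ⁻¹' {e i}) := fun i => hTm (measurableSet_singleton _)
  have hae : ∀ᵐ ω ∂P, T ω ∈ Set.range e := by
    filter_upwards [hs] with ω hω
    exact ⟨⟨_, hω⟩, rfl⟩
  set q : s → ℝ := fun i => (P (T ⁻¹' {e i})).toReal with hq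
  have hqp : FProb q := bridge_prob T e hei hm hae q (fun _ => rfl)
  have e1 : entOf P W = fent q (fun i => (e i).1) :=
    bridge_ent T e hei hm hae q (fun _ => rfl) (fun t => t.1)
  have e2 : entOf P W' = fent q (fun i => (e i).2) :=
    bridge_ent T e hei hm hae q (fun _ => rfl) (fun t => t.2)
  rw [e1, e2]
  have real : ∀ i, q i ≠ 0 → ∃ ω, T ω = e i := by
    intro i hi
    by_contra hne
    push Not at hne
    apply hi
    have : T ⁻¹' {e i} = ∅ := by
      ext ω; simp [hne ω]
    simp [hq, this]
  have h1 := fent_subadd hqp (fun i => (e i).1) (fun i => (e i).2) (fun i => C (e i)) (by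
    intro i j hi hj h2 h3
    obtain ⟨ω, hω⟩ := real i hi
    obtain ⟨ω', hω'⟩ := real j hj
    simp only [← hω, ← hω'] at h2 h3 ⊢
    exact hC ω ω' h2 h3)
  have h2 := fent_le_card hqp (fun i => C (e i))
  linarith

lemma entOf_le_shift (W W' : Ω → ℤ) (hW : Measurable W) (hW' : Measurable W')
    (h : ∀ ω, |W ω - W' ω| ≤ 4) (B : ℤ) (hB : ∀ᵐ ω ∂P, |W' ω| ≤ B) :
    entOf P W ≤ entOf P W' + 4 := by
  have h1 := entOf_le_code (P := P) (Γ := Fin 16) W W' hW hW'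
    (Finset.Icc (-B - 4) (B + 4) ×ˢ Finset.Icc (-B - 4) (B + 4))
    (by
      filter_upwards [hB] with ω hω
      have := h ω
      rw [abs_le] at this hω
      simp only [Finset.mem_product, Finset.mem_Icc]
      omega)
    (fun t => ⟨(t.1 - t.2 + 4).toNat % 16, Nat.mod_lt _ (by norm_num)⟩)
    (by
      intro ω ω' h1 h2
      simp only [Fin.mk.injEq] at h2
      have a1 := h ω
      have a2 := h ω'
      rw [abs_le] at a1 a2
      omega)
  have h2 : Real.logb 2 (Fintype.card (Fin 16)) = 4 := by
    rw [Fintype.card_fin, show ((16 : ℕ) : ℝ) = 2 ^ (4:ℝ) by norm_num]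
    exact Real.logb_rpow (by norm_num) (by norm_num)
  linarith

end bridge

/-- scaled floor -/
noncomputable def fl (n : ℕ) (x : ℝ) : ℤ := ⌊(2 : ℝ) ^ n * x⌋

lemma fl_meas (n : ℕ) : Measurable (fl n) := by
  unfold fl
  exact Int.measurable_floor.comp (measurable_const.mul measurable_id)

lemma Hn_eq {Ω : Type*} [MeasurableSpace Ω] (P : Measure Ω) [IsProbabilityMeasure P]
    (n : ℕ) (X : Ω → ℝ) : Hn P n X = entOf P (fun ω => fl n (X ω)) := by
  unfold Hn
  exact entOf_inj (fun ω => fl n (X ω)) (fun k : ℤ => (k : ℝ) / 2 ^ n) (by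
    intro a b h
    have h2 : (2 : ℝ) ^ n ≠ 0 := by positivity
    simp only at h
    rw [div_left_inj' h2] at h
    exact_mod_cast h)

lemma fl_bound {n : ℕ} {x c : ℝ} (h : |x| ≤ c) : |fl n x| ≤ ⌈(2 : ℝ) ^ n * c⌉ + 1 := by
  unfold fl
  have h2 : (0 : ℝ) < 2 ^ n := by positivity
  rw [abs_le] at h
  have a1 := mul_le_mul_of_nonneg_left h.1 h2.le
  have a2 := mul_le_mul_of_nonneg_left h.2 h2.le
  have a3 := Int.le_ceil ((2:ℝ) ^ n * c)
  have a4 := Int.floor_le ((2:ℝ) ^ n * x)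
  have a5 := Int.lt_floor_add_one ((2:ℝ) ^ n * x)
  rw [abs_le]
  constructor
  · have : (-(⌈(2 : ℝ) ^ n * c⌉ + 1) : ℝ) ≤ ⌊(2:ℝ) ^ n * x⌋ := by linarith
    exact_mod_cast this
  · have : (⌊(2:ℝ) ^ n * x⌋ : ℝ) ≤ ⌈(2 : ℝ) ^ n * c⌉ + 1 := by linarith
    exact_mod_cast this

lemma f_bound {Ω : Type*} {X : Ω → ℝ} {f : ℝ → ℝ} {κ c : ℝ} {L : ℕ} [Nonempty Ω]
    (hX : ∀ ω, |X ω| ≤ c) (hκ : 2 ≤ κ) (hf : WeaklyBiLipschitzOn f (Set.range X) κ L) :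
    ∃ c', ∀ ω, |f (X ω)| ≤ c' := by
  obtain ⟨ω₀⟩ := ‹Nonempty Ω›
  refine ⟨|f (X ω₀)| + κ * (2 * c), fun ω => ?_⟩
  have h1 := hf.1 _ ⟨ω, rfl⟩ _ ⟨ω₀, rfl⟩
  have h2 : |X ω - X ω₀| ≤ 2 * c := by
    have := abs_sub (X ω) (X ω₀)
    linarith [hX ω, hX ω₀]
  have h3 : |f (X ω)| - |f (X ω₀)| ≤ |f (X ω) - f (X ω₀)| := abs_sub_abs_le_abs_sub _ _
  nlinarith

lemma Hn_le_Hn_f {Ω : Type*} [MeasurableSpace Ω] {P : Measure Ω} [IsProbabilityMeasure P]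
    {X : Ω → ℝ} {f : ℝ → ℝ} {κ c : ℝ} {L : ℕ} (hXm : Measurable X) (hfm : Measurable f)
    (hX : ∀ ω, |X ω| ≤ c) (hκ : 2 ≤ κ) (hf : WeaklyBiLipschitzOn f (Set.range X) κ L) (n : ℕ) :
    Hn P n X ≤ entOf P (fun ω => fl n (f (X ω))) + (Real.logb 2 L + 4) * Real.logb 2 κ := by
  have hne : Nonempty Ω := nonempty_of_isProbabilityMeasure P
  obtain ⟨c', hc'⟩ := f_bound hX hκ hf
  obtain ⟨-, R, hR, hRl⟩ := hf
  have : ∀ ω, ∃ i, X ω ∈ R i := fun ω => by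
    have := hR ⟨ω, rfl⟩
    simpa using this
  choose ix hix using this
  rw [Hn_eq]
  set W : Ω → ℤ := fun ω => fl n (X ω) with hW
  set W' : Ω → ℤ := fun ω => fl n (f (X ω)) with hW'
  set K : ℕ := ⌈κ⌉₊ + 1 with hK
  have close : ∀ ω ω', ix ω = ix ω' → W' ω = W' ω' → |W ω - W ω'| ≤ K := by
    intro ω ω' hi hw
    have h1 := hRl (ix ω) _ ⟨⟨ω, rfl⟩, hix ω⟩ _ ⟨⟨ω', rfl⟩, hi ▸ hix ω'⟩
    have h2 : |(2:ℝ) ^ n * f (X ω) - 2 ^ n * f (X ω')| < 1 :=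
      Int.abs_sub_lt_one_of_floor_eq_floor hw
    have hN : (0 : ℝ) < 2 ^ n := by positivity
    rw [← mul_sub, abs_mul, abs_of_pos hN] at h2
    have h3 : |(2:ℝ) ^ n * X ω - 2 ^ n * X ω'| ≤ κ := by
      rw [← mul_sub, abs_mul, abs_of_pos hN]
      nlinarith
    have a1 := Int.floor_le ((2:ℝ) ^ n * X ω)
    have a2 := Int.lt_floor_add_one ((2:ℝ) ^ n * X ω)
    have a3 := Int.floor_le ((2:ℝ) ^ n * X ω')
    have a4 := Int.lt_floor_add_one ((2:ℝ) ^ n * X ω')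
    have a5 := Nat.le_ceil κ
    rw [abs_le] at h3
    have hKr : (K : ℝ) = ⌈κ⌉₊ + 1 := by rw [hK]; push_cast; ring
    simp only [hW, fl]
    rw [abs_le]
    constructor
    · have : (-(K : ℝ)) ≤ ⌊(2:ℝ) ^ n * X ω⌋ - ⌊(2:ℝ) ^ n * X ω'⌋ := by linarith
      exact_mod_cast this
    · have : (⌊(2:ℝ) ^ n * X ω⌋ - ⌊(2:ℝ) ^ n * X ω'⌋ : ℝ) ≤ K := by linarith
      exact_mod_cast this
  set T : Ω → ℤ × ℤ := fun ω => (W ω, W' ω) with hT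
  set Q : Ω → Fin L × ℤ := fun ω => (ix ω, W' ω) with hQ
  set g := Function.invFun T with hg
  set gQ := Function.invFun Q with hgQ
  have hgT : ∀ ω, T (g (T ω)) = T ω := fun ω => Function.invFun_eq ⟨ω, rfl⟩
  have hgQQ : ∀ ω, Q (gQ (Q ω)) = Q ω := fun ω => Function.invFun_eq ⟨ω, rfl⟩
  set B := max (⌈(2 : ℝ) ^ n * c⌉ + 1) (⌈(2 : ℝ) ^ n * c'⌉ + 1) with hB
  have key := entOf_le_code (P := P) (Γ := Fin L × Fin (2 * K + 1)) W W'
    ((fl_meas n).comp hXm) ((fl_meas n).comp (hfm.comp hXm))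
    (Finset.Icc (-B) B ×ˢ Finset.Icc (-B) B)
    (Filter.Eventually.of_forall fun ω => by
      have b1 : |W ω| ≤ B := (fl_bound (hX ω)).trans (le_max_left _ _)
      have b2 : |W' ω| ≤ B := (fl_bound (hc' ω)).trans (le_max_right _ _)
      rw [abs_le] at b1 b2
      simp only [Finset.mem_product, Finset.mem_Icc]
      exact ⟨b1, b2⟩)
    (fun t => (ix (g t), ⟨(t.1 - W (gQ (ix (g t), t.2)) + K).toNat % (2 * K + 1),
      Nat.mod_lt _ (by omega)⟩))
    (by
      intro ω ω' h1 h2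
      simp only [Prod.mk.injEq, Fin.mk.injEq] at h2
      obtain ⟨hi, hmod⟩ := h2
      change ix (g (T ω)) = ix (g (T ω')) at hi
      change (W ω - W (gQ (ix (g (T ω)), W' ω)) + K).toNat % (2 * K + 1) =
        (W ω' - W (gQ (ix (g (T ω')), W' ω')) + K).toNat % (2 * K + 1) at hmod
      have t1 := hgT ω
      have t2 := hgT ω'
      simp only [hT, Prod.mk.injEq] at t1 t2
      set η := g (T ω) with hη
      set η' := g (T ω') with hη'
      change W η = W ω ∧ W' η = W' ω at t1
      change W η' = W ω' ∧ W' η' = W' ω' at t2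
      have q1 := hgQQ η
      simp only [hQ, Prod.mk.injEq] at q1
      change ix (gQ (ix η, W' η)) = ix η ∧ W' (gQ (ix η, W' η)) = W' η at q1
      rw [t1.2] at q1
      rw [← hi, ← h1] at hmod
      set z := gQ (ix η, W' ω) with hz
      have c1 := close η z q1.1.symm (by rw [q1.2, t1.2])
      have c2 := close η' z (by rw [q1.1, hi]) (by rw [q1.2, t2.2, h1])
      rw [t1.1, abs_le] at c1
      rw [t2.1, abs_le] at c2
      rw [Nat.mod_eq_of_lt (by omega), Nat.mod_eq_of_lt (by omega)] at hmod
      omega)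
  have hL : 0 < L := Fin.pos (ix hne.some)
  have hL' : (1 : ℝ) ≤ L := by exact_mod_cast hL
  have hlogκ : 1 ≤ Real.logb 2 κ := by
    rw [Real.le_logb_iff_rpow_le (by norm_num) (by linarith)]
    simpa using hκ
  have hlogL : 0 ≤ Real.logb 2 L := Real.logb_nonneg (by norm_num) hL'
  have hcard : Real.logb 2 (Fintype.card (Fin L × Fin (2 * K + 1))) ≤
      (Real.logb 2 L + 4) * Real.logb 2 κ := by
    rw [Fintype.card_prod, Fintype.card_fin, Fintype.card_fin]
    push_cast
    rw [Real.logb_mul (by positivity) (by positivity)]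
    have hle : (2 * (K : ℝ) + 1) ≤ κ ^ (4 : ℕ) := by
      have : (K : ℝ) ≤ κ + 2 := by
        rw [hK]; push_cast
        have := Nat.ceil_lt_add_one (show 0 ≤ κ by linarith)
        linarith
      have h8 : 8 ≤ κ ^ 3 := by
        have : (2:ℝ) ^ 3 ≤ κ ^ 3 := pow_le_pow_left₀ (by norm_num) hκ 3
        linarith
      have : κ ^ 4 = κ ^ 3 * κ := by ring
      nlinarith
    have : Real.logb 2 (2 * (K : ℝ) + 1) ≤ 4 * Real.logb 2 κ := by
      have := Real.logb_le_logb_of_le (b := 2) (by norm_num) (by positivity) hle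
      rwa [Real.logb_pow] at this
    nlinarith
  linarith

lemma fl_four (n : ℕ) (a b c d : ℝ) :
    |fl n (a + b + c + d) - (fl n a + fl n b + fl n c + fl n d)| ≤ 4 ∧
    |fl n (a - b + c - d) - (fl n a - fl n b + fl n c - fl n d)| ≤ 4 ∧
    |fl n (a + b - c - d) - (fl n a + fl n b - fl n c - fl n d)| ≤ 4 ∧
    |(fl n a + fl n b) - fl n (a + b)| ≤ 4 := by
  have key : ∀ x : ℝ, (fl n x : ℝ) ≤ 2 ^ n * x ∧ 2 ^ n * x < fl n x + 1 := fun x =>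
    ⟨Int.floor_le _, Int.lt_floor_add_one _⟩
  have ha := key a
  have hb := key b
  have hc := key c
  have hd := key d
  have cast : ∀ z : ℤ, |(z : ℝ)| ≤ 4 → |z| ≤ 4 := fun z h => by exact_mod_cast h
  refine ⟨cast _ ?_, cast _ ?_, cast _ ?_, cast _ ?_⟩
  · have h := key (a + b + c + d)
    rw [mul_add, mul_add, mul_add] at h
    push_cast; rw [abs_le]; constructor <;> linarith
  · have h := key (a - b + c - d)
    rw [mul_sub, mul_add, mul_sub] at h
    push_cast; rw [abs_le]; constructor <;> linarith
  · have h := key (a + b - c - d)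
    rw [mul_sub, mul_sub, mul_add] at h
    push_cast; rw [abs_le]; constructor <;> linarith
  · have h := key (a + b)
    rw [mul_add] at h
    push_cast; rw [abs_le]; constructor <;> linarith

/-- Lemma (four functions): for any bound `L` on the number of pieces in the weak
bi-Lipschitz decompositions there is `A > 0` such that for all bounded independent `X, Y`,
all independent copies `(X₁,Y₁)`, `(X₂,Y₂)` of `(X,Y)`, all `κ ≥ 2` and all weakly
κ-bi-Lipschitz `f, g`, for all `n`:
(a) `Hₙ(f(X₁)+f(X₂)+g(Y₁)+g(Y₂)) ≤ 3Hₙ(f(X)+g(Y)) − Hₙ(X) − Hₙ(Y) + A log κ`;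
(b) `Hₙ(f(X₁)−f(X₂)+g(Y₁)−g(Y₂)) ≤ 7Hₙ(f(X)+g(Y)) − 3Hₙ(X) − 3Hₙ(Y) + A log κ`;
(c) `Hₙ(f(X₁)+f(X₂)−g(Y₁)−g(Y₂)) ≤ 9Hₙ(f(X)+g(Y)) − 4Hₙ(X) − 4Hₙ(Y) + A log κ`. -/
theorem four_functions_entropy (L : ℕ) :
    ∃ A : ℝ, 0 < A ∧
      ∀ (Ω : Type) (mΩ : MeasurableSpace Ω) (P : Measure Ω),
        IsProbabilityMeasure P →
        ∀ (X Y X₁ Y₁ X₂ Y₂ : Ω → ℝ), Measurable X → Measurable Y →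
          Measurable X₁ → Measurable Y₁ → Measurable X₂ → Measurable Y₂ →
          ∀ c : ℝ, (∀ ω, |X ω| ≤ c ∧ |Y ω| ≤ c) →
            IndepFun X Y P →
            IndepFun (fun ω => (X₁ ω, Y₁ ω)) (fun ω => (X₂ ω, Y₂ ω)) P →
            Measure.map (fun ω => (X₁ ω, Y₁ ω)) P = Measure.map (fun ω => (X ω, Y ω)) P →
            Measure.map (fun ω => (X₂ ω, Y₂ ω)) P = Measure.map (fun ω => (X ω, Y ω)) P →
            ∀ κ : ℝ, 2 ≤ κ →
              ∀ f g : ℝ → ℝ, Measurable f → Measurable g →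
                WeaklyBiLipschitzOn f (Set.range X) κ L →
                WeaklyBiLipschitzOn g (Set.range Y) κ L →
                ∀ n : ℕ,
                  Hn P n (fun ω => f (X₁ ω) + f (X₂ ω) + g (Y₁ ω) + g (Y₂ ω)) ≤
                      3 * Hn P n (fun ω => f (X ω) + g (Y ω)) - Hn P n X - Hn P n Y +
                        A * Real.logb 2 κ ∧
                  Hn P n (fun ω => f (X₁ ω) - f (X₂ ω) + g (Y₁ ω) - g (Y₂ ω)) ≤
                      7 * Hn P n (fun ω => f (X ω) + g (Y ω)) - 3 * Hn P n X - 3 * Hn P n Y +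
                        A * Real.logb 2 κ ∧
                  Hn P n (fun ω => f (X₁ ω) + f (X₂ ω) - g (Y₁ ω) - g (Y₂ ω)) ≤
                      9 * Hn P n (fun ω => f (X ω) + g (Y ω)) - 4 * Hn P n X - 4 * Hn P n Y +
                        A * Real.logb 2 κ := by
  refine ⟨8 * Real.logb 2 L + 72, ?_, ?_⟩
  · rcases Nat.eq_zero_or_pos L with h | h
    · simp [h]
    · have : 0 ≤ Real.logb 2 L := Real.logb_nonneg (by norm_num) (by exact_mod_cast h)
      linarith
  intro Ω mΩ P hP X Y X₁ Y₁ X₂ Y₂ hX hY hX₁ hY₁ hX₂ hY₂ c hc hXY hind hl1 hl2 κ hκ f g hf hg hfL hgL n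
  have hne : Nonempty Ω := nonempty_of_isProbabilityMeasure P
  have EX := Hn_le_Hn_f (P := P) hX hf (fun ω => (hc ω).1) hκ hfL n
  have EY := Hn_le_Hn_f (P := P) hY hg (fun ω => (hc ω).2) hκ hgL n
  obtain ⟨c₁, hc₁⟩ := f_bound (fun ω => (hc ω).1) hκ hfL
  obtain ⟨c₂, hc₂⟩ := f_bound (fun ω => (hc ω).2) hκ hgL
  have hlogκ : 1 ≤ Real.logb 2 κ := by
    rw [Real.le_logb_iff_rpow_le (by norm_num) (by linarith)]
    simpa using hκ
  set F : ℝ → ℤ := fun x => fl n (f x) with hF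
  set G : ℝ → ℤ := fun x => fl n (g x) with hG
  have hFm : Measurable F := (fl_meas n).comp hf
  have hGm : Measurable G := (fl_meas n).comp hg
  obtain ⟨B, hB⟩ : ∃ B : ℤ, ∀ ω, |F (X ω)| ≤ B ∧ |G (Y ω)| ≤ B :=
    ⟨max (⌈(2 : ℝ) ^ n * c₁⌉ + 1) (⌈(2 : ℝ) ^ n * c₂⌉ + 1), fun ω =>
      ⟨(fl_bound (hc₁ ω)).trans (le_max_left _ _), (fl_bound (hc₂ ω)).trans (le_max_right _ _)⟩⟩
  have law : ∀ X' Y' : Ω → ℝ, Measurable X' → Measurable Y' →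
      Measure.map (fun ω => (X' ω, Y' ω)) P = Measure.map (fun ω => (X ω, Y ω)) P →
      (∀ᵐ ω ∂P, |F (X' ω)| ≤ B ∧ |G (Y' ω)| ≤ B) ∧
      ∀ x y : ℤ, P ((fun ω => (X' ω, Y' ω)) ⁻¹' ((F ⁻¹' {x}) ×ˢ (G ⁻¹' {y}))) =
        P ((fun ω => F (X ω)) ⁻¹' {x}) * P ((fun ω => G (Y ω)) ⁻¹' {y}) := by
    intro X' Y' hX' hY' hl
    constructor
    · have hms : MeasurableSet {z : ℝ × ℝ | |F z.1| ≤ B ∧ |G z.2| ≤ B} := by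
        have m1 : Measurable (fun z : ℝ × ℝ => (F z.1, G z.2)) :=
          (hFm.comp measurable_fst).prodMk (hGm.comp measurable_snd)
        exact m1 (MeasurableSet.of_discrete (s := {z : ℤ × ℤ | |z.1| ≤ B ∧ |z.2| ≤ B}))
      have h1 := (ae_map_iff (μ := P) (hX.prodMk hY).aemeasurable hms).2
        (Filter.Eventually.of_forall hB)
      rw [← hl] at h1
      exact (ae_map_iff (hX'.prodMk hY').aemeasurable hms).1 h1
    · intro x y
      have m1 : MeasurableSet (F ⁻¹' {x}) := hFm (measurableSet_singleton x)
      have m2 : MeasurableSet (G ⁻¹' {y}) := hGm (measurableSet_singleton y)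
      rw [← Measure.map_apply (hX'.prodMk hY') (m1.prod m2), hl,
        Measure.map_apply (hX.prodMk hY) (m1.prod m2), Set.mk_preimage_prod]
      exact hXY.measure_inter_preimage_eq_mul _ _ m1 m2
  obtain ⟨ae1, law1⟩ := law X₁ Y₁ hX₁ hY₁ hl1
  obtain ⟨ae2, law2⟩ := law X₂ Y₂ hX₂ hY₂ hl2
  obtain ⟨-, law0⟩ := law X Y hX hY rfl
  let I := {k : ℤ // k ∈ Finset.Icc (-B) B}
  have memI : ∀ k : ℤ, |k| ≤ B → k ∈ Finset.Icc (-B) B := fun k hk => by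
    rw [Finset.mem_Icc]; exact abs_le.1 hk
  let p : I → ℝ := fun i => (P ((fun ω => F (X ω)) ⁻¹' {i.1})).toReal
  let q : I → ℝ := fun i => (P ((fun ω => G (Y ω)) ⁻¹' {i.1})).toReal
  have hFX : Measurable (fun ω => F (X ω)) := hFm.comp hX
  have hGY : Measurable (fun ω => G (Y ω)) := hGm.comp hY
  -- single variables
  have mU : ∀ i : I, MeasurableSet ((fun ω => F (X ω)) ⁻¹' {i.1}) := fun i =>
    hFX (measurableSet_singleton _)
  have mV : ∀ i : I, MeasurableSet ((fun ω => G (Y ω)) ⁻¹' {i.1}) := fun i =>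
    hGY (measurableSet_singleton _)
  have aU : ∀ᵐ ω ∂P, F (X ω) ∈ Set.range (fun i : I => i.1) :=
    Filter.Eventually.of_forall fun ω => ⟨⟨_, memI _ (hB ω).1⟩, rfl⟩
  have aV : ∀ᵐ ω ∂P, G (Y ω) ∈ Set.range (fun i : I => i.1) :=
    Filter.Eventually.of_forall fun ω => ⟨⟨_, memI _ (hB ω).2⟩, rfl⟩
  have hp : FProb p := bridge_prob (fun ω => F (X ω)) (fun i : I => i.1) Subtype.val_injective
    mU aU p (fun _ => rfl)
  have hq : FProb q := bridge_prob (fun ω => G (Y ω)) (fun i : I => i.1) Subtype.val_injective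
    mV aV q (fun _ => rfl)
  have HU : entOf P (fun ω => F (X ω)) = fent p (fun i : I => i.1) :=
    bridge_ent (fun ω => F (X ω)) (fun i : I => i.1) Subtype.val_injective mU aU p
      (fun _ => rfl) (fun k => k)
  have HV : entOf P (fun ω => G (Y ω)) = fent q (fun i : I => i.1) :=
    bridge_ent (fun ω => G (Y ω)) (fun i : I => i.1) Subtype.val_injective mV aV q
      (fun _ => rfl) (fun k => k)
  have pre : ∀ (X' Y' : Ω → ℝ) (x y : ℤ), (fun ω => (F (X' ω), G (Y' ω))) ⁻¹' {(x, y)} =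
      (fun ω => (X' ω, Y' ω)) ⁻¹' ((F ⁻¹' {x}) ×ˢ (G ⁻¹' {y})) := by
    intro X' Y' x y; ext ω; simp
  have HZ : entOf P (fun ω => F (X ω) + G (Y ω)) =
      fent (fprod p q) (fun z : I × I => z.1.1 + z.2.1) := by
    refine bridge_ent (fun ω => (F (X ω), G (Y ω))) (fun z : I × I => (z.1.1, z.2.1)) ?_ ?_ ?_
      (fprod p q) ?_ (fun t => t.1 + t.2)
    · intro a b h
      simp only [Prod.mk.injEq] at h
      exact Prod.ext (Subtype.ext h.1) (Subtype.ext h.2)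
    · intro z; exact (hFX.prodMk hGY) (measurableSet_singleton _)
    · exact Filter.Eventually.of_forall fun ω =>
        ⟨(⟨_, memI _ (hB ω).1⟩, ⟨_, memI _ (hB ω).2⟩), rfl⟩
    · intro z
      rw [pre, law0, ENNReal.toReal_mul]; rfl
  have H4 : ∀ Φ : (ℤ × ℤ) × (ℤ × ℤ) → ℤ,
      entOf P (fun ω => Φ ((F (X₁ ω), G (Y₁ ω)), (F (X₂ ω), G (Y₂ ω)))) =
      fent (fprod (fprod p q) (fprod p q))
        (fun z : (I × I) × (I × I) => Φ ((z.1.1.1, z.1.2.1), (z.2.1.1, z.2.2.1))) := by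
    intro Φ
    refine bridge_ent (fun ω => ((F (X₁ ω), G (Y₁ ω)), (F (X₂ ω), G (Y₂ ω))))
      (fun z : (I × I) × (I × I) => ((z.1.1.1, z.1.2.1), (z.2.1.1, z.2.2.1))) ?_ ?_ ?_
      (fprod (fprod p q) (fprod p q)) ?_ Φ
    · intro a b h
      simp only [Prod.mk.injEq] at h
      exact Prod.ext (Prod.ext (Subtype.ext h.1.1) (Subtype.ext h.1.2))
        (Prod.ext (Subtype.ext h.2.1) (Subtype.ext h.2.2))
    · intro z
      exact (((hFm.comp hX₁).prodMk (hGm.comp hY₁)).prodMk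
        ((hFm.comp hX₂).prodMk (hGm.comp hY₂))) (measurableSet_singleton _)
    · filter_upwards [ae1, ae2] with ω h1 h2
      exact ⟨((⟨_, memI _ h1.1⟩, ⟨_, memI _ h1.2⟩), (⟨_, memI _ h2.1⟩, ⟨_, memI _ h2.2⟩)), rfl⟩
    · intro z
      have e1 : (fun ω => ((F (X₁ ω), G (Y₁ ω)), (F (X₂ ω), G (Y₂ ω)))) ⁻¹'
          {((z.1.1.1, z.1.2.1), (z.2.1.1, z.2.2.1))} =
          (fun ω => (X₁ ω, Y₁ ω)) ⁻¹' ((F ⁻¹' {z.1.1.1}) ×ˢ (G ⁻¹' {z.1.2.1})) ∩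
          (fun ω => (X₂ ω, Y₂ ω)) ⁻¹' ((F ⁻¹' {z.2.1.1}) ×ˢ (G ⁻¹' {z.2.2.1})) := by
        rw [← pre, ← pre]; ext ω; simp
      have ms : ∀ x y : ℤ, MeasurableSet ((F ⁻¹' {x}) ×ˢ (G ⁻¹' {y})) := fun x y =>
        (hFm (measurableSet_singleton x)).prod (hGm (measurableSet_singleton y))
      rw [e1, hind.measure_inter_preimage_eq_mul _ _ (ms _ _) (ms _ _), law1, law2,
        ENNReal.toReal_mul, ENNReal.toReal_mul, ENNReal.toReal_mul]
      rfl
  obtain ⟨Fa, Fb, Fc⟩ := fent_four hp hq (fun i : I => i.1) (fun i : I => i.1)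
  have H4a := H4 (fun t => t.1.1 + t.2.1 + t.1.2 + t.2.2)
  have H4b := H4 (fun t => t.1.1 - t.2.1 + t.1.2 - t.2.2)
  have H4c := H4 (fun t => t.1.1 + t.2.1 - t.1.2 - t.2.2)
  have mF1 : Measurable (fun ω => F (X₁ ω)) := hFm.comp hX₁
  have mF2 : Measurable (fun ω => F (X₂ ω)) := hFm.comp hX₂
  have mG1 : Measurable (fun ω => G (Y₁ ω)) := hGm.comp hY₁
  have mG2 : Measurable (fun ω => G (Y₂ ω)) := hGm.comp hY₂
  have mf1 : Measurable (fun ω => f (X₁ ω)) := hf.comp hX₁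
  have mf2 : Measurable (fun ω => f (X₂ ω)) := hf.comp hX₂
  have mg1 : Measurable (fun ω => g (Y₁ ω)) := hg.comp hY₁
  have mg2 : Measurable (fun ω => g (Y₂ ω)) := hg.comp hY₂
  have Sa := entOf_le_shift (P := P)
    (fun ω => fl n (f (X₁ ω) + f (X₂ ω) + g (Y₁ ω) + g (Y₂ ω)))
    (fun ω => F (X₁ ω) + F (X₂ ω) + G (Y₁ ω) + G (Y₂ ω))
    ((fl_meas n).comp (((mf1.add mf2).add mg1).add mg2)) (((mF1.add mF2).add mG1).add mG2)
    (fun ω => (fl_four n _ _ _ _).1) (4 * B)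
    (by filter_upwards [ae1, ae2] with ω h1 h2
        simp only [abs_le] at h1 h2 ⊢
        omega)
  have Sb := entOf_le_shift (P := P)
    (fun ω => fl n (f (X₁ ω) - f (X₂ ω) + g (Y₁ ω) - g (Y₂ ω)))
    (fun ω => F (X₁ ω) - F (X₂ ω) + G (Y₁ ω) - G (Y₂ ω))
    ((fl_meas n).comp (((mf1.sub mf2).add mg1).sub mg2)) (((mF1.sub mF2).add mG1).sub mG2)
    (fun ω => (fl_four n _ _ _ _).2.1) (4 * B)
    (by filter_upwards [ae1, ae2] with ω h1 h2
        simp only [abs_le] at h1 h2 ⊢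
        omega)
  have Sc := entOf_le_shift (P := P)
    (fun ω => fl n (f (X₁ ω) + f (X₂ ω) - g (Y₁ ω) - g (Y₂ ω)))
    (fun ω => F (X₁ ω) + F (X₂ ω) - G (Y₁ ω) - G (Y₂ ω))
    ((fl_meas n).comp (((mf1.add mf2).sub mg1).sub mg2)) (((mF1.add mF2).sub mG1).sub mG2)
    (fun ω => (fl_four n _ _ _ _).2.2.1) (4 * B)
    (by filter_upwards [ae1, ae2] with ω h1 h2
        simp only [abs_le] at h1 h2 ⊢
        omega)
  have hab : ∀ ω, |(F (X ω) + G (Y ω)) - fl n (f (X ω) + g (Y ω))| ≤ 4 := fun ω =>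
    (fl_four n (f (X ω)) (g (Y ω)) 0 0).2.2.2
  have Sz := entOf_le_shift (P := P)
    (fun ω => F (X ω) + G (Y ω)) (fun ω => fl n (f (X ω) + g (Y ω)))
    (hFX.add hGY) ((fl_meas n).comp ((hf.comp hX).add (hg.comp hY))) hab (2 * B + 4)
    (Filter.Eventually.of_forall fun ω => by
      have h1 := hB ω
      have h2 := hab ω
      simp only [abs_le] at h1 h2 ⊢
      omega)
  rw [Hn_eq P n (fun ω => f (X₁ ω) + f (X₂ ω) + g (Y₁ ω) + g (Y₂ ω)),
    Hn_eq P n (fun ω => f (X₁ ω) - f (X₂ ω) + g (Y₁ ω) - g (Y₂ ω)),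
    Hn_eq P n (fun ω => f (X₁ ω) + f (X₂ ω) - g (Y₁ ω) - g (Y₂ ω)),
    Hn_eq P n (fun ω => f (X ω) + g (Y ω))]
  change Hn P n X ≤ entOf P (fun ω => F (X ω)) + _ at EX
  change Hn P n Y ≤ entOf P (fun ω => G (Y ω)) + _ at EY
  have hlogL : 0 ≤ Real.logb 2 L := by
    rcases Nat.eq_zero_or_pos L with h | h
    · simp [h]
    · exact Real.logb_nonneg (by norm_num) (by exact_mod_cast h)
  have hLκ : 0 ≤ Real.logb 2 L * Real.logb 2 κ := mul_nonneg hlogL (by linarith)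
  rw [HU] at EX
  rw [HV] at EY
  rw [HZ] at Sz
  simp only at H4a H4b H4c
  rw [H4a] at Sa
  rw [H4b] at Sb
  rw [H4c] at Sc
  rw [add_mul] at EX EY
  rw [add_mul, mul_assoc]
  refine ⟨?_, ?_, ?_⟩ <;> linarith
end

section
/- There is an absolute constant A > 0 such that for all real random variables X and Y with bounded ranges (not necessarily independent) and all n ∈ ℕ, Hₙ(X − Y) ≤ 3·Hₙ(X + Y) + 4·Hₙ(X) + 4·Hₙ(Y) − 5·Hₙ(X, Y) + A. -/
open MeasureTheory ProbabilityTheory Real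

namespace EDB

open Classical in
/-- mass of the fibre of `f` through `a` -/
noncomputable def mass {α β : Type} [Fintype α] (p : α → ℝ) (f : α → β) (a : α) : ℝ :=
  ∑ a', if f a' = f a then p a' else 0

/-- Shannon entropy in nats of `f` under the mass function `p`. -/
noncomputable def H {α β : Type} [Fintype α] (p : α → ℝ) (f : α → β) : ℝ :=
  -∑ a, p a * Real.log (mass p f a)

def IsP {α : Type} [Fintype α] (p : α → ℝ) : Prop := (∀ a, 0 ≤ p a) ∧ ∑ a, p a = 1

open Classical in
def Push {α γ : Type} [Fintype α] (p : α → ℝ) (τ : α → γ) (q : γ → ℝ) : Prop :=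
  ∀ c, ∑ a, (if τ a = c then p a else 0) = q c

section basic
variable {α β γ δ : Type} [Fintype α] [Fintype γ] {p : α → ℝ}

lemma le_mass (hp : IsP p) (f : α → β) (a : α) : p a ≤ mass p f a := by
  classical
  unfold mass
  have := Finset.single_le_sum (f := fun a' => if f a' = f a then p a' else 0)
    (fun i _ => by split_ifs; exacts [hp.1 i, le_rfl]) (Finset.mem_univ a)
  simpa using this

lemma pos_of_ne (hp : IsP p) {a : α} (h : p a ≠ 0) : 0 < p a :=
  lt_of_le_of_ne (hp.1 a) (Ne.symm h)

lemma mass_pos (hp : IsP p) (f : α → β) {a : α} (h : p a ≠ 0) : 0 < mass p f a :=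
  (pos_of_ne hp h).trans_le (le_mass hp f a)

lemma mass_nonneg (hp : IsP p) (f : α → β) (a : α) : 0 ≤ mass p f a :=
  (hp.1 a).trans (le_mass hp f a)

lemma mass_congr (f : α → β) {a b : α} (h : f a = f b) : mass p f a = mass p f b := by
  unfold mass; rw [h]

/-- `g` determines `f` on the support of `p` -/
def Det (p : α → ℝ) (g : α → β) (f : α → γ) : Prop :=
  ∀ a a', p a ≠ 0 → p a' ≠ 0 → g a = g a' → f a = f a'

lemma mass_le_of_det (hp : IsP p) {g : α → β} {f : α → δ}
    (h : ∀ a a', p a ≠ 0 → p a' ≠ 0 → g a = g a' → f a = f a') {a : α} (ha : p a ≠ 0) :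
    mass p g a ≤ mass p f a := by
  classical
  unfold mass
  apply Finset.sum_le_sum
  intro i _
  by_cases hi : p i = 0
  · simp [hi]
  · by_cases hg : g i = g a
    · rw [if_pos hg, if_pos (h i a hi ha hg)]
    · rw [if_neg hg]; split_ifs; exacts [hp.1 i, le_rfl]

lemma H_mono (hp : IsP p) {g : α → β} {f : α → δ}
    (h : ∀ a a', p a ≠ 0 → p a' ≠ 0 → g a = g a' → f a = f a') : H p f ≤ H p g := by
  unfold H
  apply neg_le_neg
  apply Finset.sum_le_sum
  intro a _
  by_cases ha : p a = 0
  · simp [ha]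
  · apply mul_le_mul_of_nonneg_left _ (hp.1 a)
    exact Real.log_le_log (mass_pos hp g ha) (mass_le_of_det hp h ha)

/-- grouping: sum over a fibre of `p / mass` is at most one -/
lemma fibre_sum_le (hp : IsP p) (f : α → β) (s : Finset α)
    (hs : ∀ a ∈ s, ∀ a' ∈ s, f a = f a') : ∑ a ∈ s, p a / mass p f a ≤ 1 := by
  classical
  rcases s.eq_empty_or_nonempty with rfl | ⟨b, hb⟩
  · simp
  have h1 : ∀ a ∈ s, p a / mass p f a = p a / mass p f b := fun a ha => by
    rw [mass_congr f (hs a ha b hb)]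
  rw [Finset.sum_congr rfl h1, ← Finset.sum_div]
  apply div_le_one_of_le₀ _ (mass_nonneg hp f b)
  unfold mass
  rw [← Finset.sum_filter]
  apply Finset.sum_le_sum_of_subset_of_nonneg
  · intro a ha; simp [hs a ha b hb]
  · intro i _ _; exact hp.1 i

/-- Gibbs-type inequality -/
lemma gibbs (hp : IsP p) (R : α → ℝ) (hR : ∀ a, p a ≠ 0 → 0 < R a)
    (C : ℝ) (hC : 0 < C) (h : ∑ a, p a * R a ≤ C) : ∑ a, p a * Real.log (R a) ≤ Real.log C := by
  have h1 : ∀ a, p a * Real.log (R a) ≤ p a * Real.log C + (p a * R a) / C - p a := by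
    intro a
    by_cases ha : p a = 0
    · simp [ha]
    have hr := hR a ha
    have := Real.log_le_sub_one_of_pos (div_pos hr hC)
    rw [Real.log_div hr.ne' hC.ne'] at this
    have h2 := mul_le_mul_of_nonneg_left this (hp.1 a)
    have : p a * (R a / C - 1) = (p a * R a) / C - p a := by ring
    nlinarith
  calc _ ≤ ∑ a, (p a * Real.log C + (p a * R a) / C - p a) := Finset.sum_le_sum fun a _ => h1 a
    _ = Real.log C + (∑ a, p a * R a) / C - 1 := by
      rw [Finset.sum_sub_distrib, Finset.sum_add_distrib, ← Finset.sum_mul, ← Finset.sum_div, hp.2]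
      ring
    _ ≤ Real.log C := by
      have := div_le_one_of_le₀ h hC.le
      linarith

lemma submod {β₁ β₂ β₃ : Type} (hp : IsP p) {f : α → β₁} {g : α → β₂} {c : α → β₃}
    (hf : ∀ a a', p a ≠ 0 → p a' ≠ 0 → f a = f a' → c a = c a')
    (hg : ∀ a a', p a ≠ 0 → p a' ≠ 0 → g a = g a' → c a = c a') :
    H p (fun a => (f a, g a)) + H p c ≤ H p f + H p g := by
  classical
  set fg : α → β₁ × β₂ := fun a => (f a, g a) with hfg
  have key : ∑ a, p a * (mass p f a * mass p g a / (mass p fg a * mass p c a)) ≤ 1 := by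
    have e1 : ∀ a, p a * (mass p f a * mass p g a / (mass p fg a * mass p c a)) =
        ∑ x, ∑ y, (if f x = f a ∧ g y = g a then
          p x * p y * (p a / mass p fg a) / mass p c a else 0) := by
      intro a
      have : mass p f a * mass p g a = ∑ x, ∑ y, (if f x = f a ∧ g y = g a then p x * p y else 0) := by
        unfold mass
        rw [Finset.sum_mul_sum]
        refine Finset.sum_congr rfl fun x _ => Finset.sum_congr rfl fun y _ => ?_
        by_cases h1 : f x = f a <;> by_cases h2 : g y = g a <;> simp [h1, h2]
      rw [this, Finset.sum_div, Finset.mul_sum]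
      refine Finset.sum_congr rfl fun x _ => ?_
      rw [Finset.sum_div, Finset.mul_sum]
      refine Finset.sum_congr rfl fun y _ => ?_
      split_ifs
      · rw [div_mul_eq_div_div]; ring
      · simp
    rw [Finset.sum_congr rfl fun a _ => e1 a, Finset.sum_comm]
    have e2 : ∀ x, ∑ a, ∑ y, (if f x = f a ∧ g y = g a then
          p x * p y * (p a / mass p fg a) / mass p c a else 0) ≤ p x := by
      intro x
      by_cases hx : p x = 0
      · simp [hx]
      rw [Finset.sum_comm]
      have hm := mass_pos hp c hx
      have e3 : ∀ y, ∑ a, (if f x = f a ∧ g y = g a then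
          p x * p y * (p a / mass p fg a) / mass p c a else 0) ≤
          (if c y = c x then p y else 0) * (p x / mass p c x) := by
        intro y
        by_cases hy : p y = 0
        · simp [hy]
        by_cases hc : c y = c x
        · rw [if_pos hc]
          have e4 : ∀ a, (if f x = f a ∧ g y = g a then
              p x * p y * (p a / mass p fg a) / mass p c a else 0) =
              (p y * (p x / mass p c x)) *
                (if f x = f a ∧ g y = g a then p a / mass p fg a else 0) := by
            intro a
            by_cases ha : p a = 0
            · simp [ha]
            split_ifs with h
            · rw [mass_congr c (hf x a hx ha h.1)]; ring
            · simp
          rw [Finset.sum_congr rfl fun a _ => e4 a, ← Finset.mul_sum, ← Finset.sum_filter]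
          apply mul_le_of_le_one_right
          · exact mul_nonneg (hp.1 y) (div_nonneg (hp.1 x) hm.le)
          · apply fibre_sum_le hp
            intro a ha a' ha'
            simp only [Finset.mem_filter, Finset.mem_univ, true_and] at ha ha'
            simp only [hfg]
            rw [← ha.1, ← ha.2, ← ha'.1, ← ha'.2]
        · rw [if_neg hc, zero_mul]
          apply le_of_eq
          apply Finset.sum_eq_zero
          intro a _
          by_cases ha : p a = 0
          · simp [ha]
          rw [if_neg]
          rintro ⟨h1, h2⟩
          exact hc ((hg y a hy ha h2).trans (hf x a hx ha h1).symm)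
      refine (Finset.sum_le_sum fun y _ => e3 y).trans (le_of_eq ?_)
      rw [← Finset.sum_mul]
      change mass p c x * (p x / mass p c x) = p x
      field_simp
    exact (Finset.sum_le_sum fun x _ => e2 x).trans hp.2.le
  have := gibbs hp (fun a => mass p f a * mass p g a / (mass p fg a * mass p c a))
    (fun a ha => div_pos (mul_pos (mass_pos hp f ha) (mass_pos hp g ha))
      (mul_pos (mass_pos hp fg ha) (mass_pos hp c ha))) 1 one_pos key
  rw [Real.log_one] at this
  have e : ∑ a, p a * Real.log (mass p f a * mass p g a / (mass p fg a * mass p c a)) =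
      H p fg + H p c - H p f - H p g := by
    unfold H
    have : ∀ a, p a * Real.log (mass p f a * mass p g a / (mass p fg a * mass p c a)) =
      p a * Real.log (mass p f a) + p a * Real.log (mass p g a)
        - p a * Real.log (mass p fg a) - p a * Real.log (mass p c a) := by
      intro a
      by_cases ha : p a = 0
      · simp [ha]
      have h1 := (mass_pos hp f ha).ne'
      have h2 := (mass_pos hp g ha).ne'
      have h3 := (mass_pos hp fg ha).ne'
      have h4 := (mass_pos hp c ha).ne'
      rw [Real.log_div (mul_ne_zero h1 h2) (mul_ne_zero h3 h4), Real.log_mul h1 h2,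
        Real.log_mul h3 h4]
      ring
    rw [Finset.sum_congr rfl fun a _ => this a, Finset.sum_sub_distrib, Finset.sum_sub_distrib,
      Finset.sum_add_distrib]
    ring
  rw [e] at this
  linarith

lemma H_nonneg_const (hp : IsP p) : H p (fun _ => ()) = 0 := by
  unfold H mass
  simp [hp.2]

lemma subadd {β₁ β₂ : Type} (hp : IsP p) (f : α → β₁) (g : α → β₂) :
    H p (fun a => (f a, g a)) ≤ H p f + H p g := by
  have := submod hp (f := f) (g := g) (c := fun _ => ()) (fun _ _ _ _ _ => rfl)
    (fun _ _ _ _ _ => rfl)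
  rw [H_nonneg_const hp] at this
  linarith

lemma H_bool (hp : IsP p) (f : α → Bool) : H p f ≤ Real.log 2 := by
  classical
  have key : ∑ a, p a * (mass p f a)⁻¹ ≤ 2 := by
    rw [← Finset.sum_filter_add_sum_filter_not Finset.univ (fun a => f a = true)]
    have h1 := fibre_sum_le hp f (Finset.univ.filter fun a => f a = true)
      (by intro a ha a' ha'; simp at ha ha'; rw [ha, ha'])
    have h2 := fibre_sum_le hp f (Finset.univ.filter fun a => ¬ f a = true)
      (by intro a ha a' ha'; simp at ha ha'; rw [ha, ha'])
    simp only [div_eq_mul_inv] at h1 h2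
    linarith
  have := gibbs hp (fun a => (mass p f a)⁻¹) (fun a ha => inv_pos.2 (mass_pos hp f ha)) 2
    two_pos key
  simpa [H, Real.log_inv] using this

lemma H_perturb {β₁ β₂ : Type} (hp : IsP p) {f : α → β₁} {g : α → β₂} (h : α → Bool)
    (hd : ∀ a a', p a ≠ 0 → p a' ≠ 0 → g a = g a' → h a = h a' → f a = f a') :
    H p f ≤ H p g + Real.log 2 := by
  have h1 : H p f ≤ H p (fun a => (g a, h a)) := H_mono hp fun a a' ha ha' e =>
    hd a a' ha ha' (congrArg Prod.fst e) (congrArg Prod.snd e)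
  have := subadd hp g h
  have := H_bool hp h
  linarith

lemma Push.sum {q : γ → ℝ} {τ : α → γ} (h : Push p τ q) (F : γ → ℝ) :
    ∑ a, p a * F (τ a) = ∑ c, q c * F c := by
  classical
  have e : ∀ c, q c * F c = ∑ a, (if τ a = c then p a else 0) * F c := fun c => by
    rw [← h c, Finset.sum_mul]
  simp_rw [e]
  rw [Finset.sum_comm]
  refine Finset.sum_congr rfl fun a _ => ?_
  simp [ite_mul]

lemma Push.mass {q : γ → ℝ} {τ : α → γ} (h : Push p τ q) (f : γ → β) (a : α) :
    mass p (fun a => f (τ a)) a = mass q f (τ a) := by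
  classical
  have := h.sum (fun c => if f c = f (τ a) then 1 else 0)
  simpa [EDB.mass] using this

lemma Push.H {q : γ → ℝ} {τ : α → γ} (h : Push p τ q) (f : γ → β) :
    H p (fun a => f (τ a)) = H q f := by
  unfold EDB.H
  rw [← h.sum (fun c => Real.log (EDB.mass q f c))]
  simp only [h.mass f]

lemma Push.isP {q : γ → ℝ} {τ : α → γ} (hp : IsP p) (h : Push p τ q) : IsP q := by
  classical
  constructor
  · intro c; rw [← h c]
    exact Finset.sum_nonneg fun a _ => by split_ifs; exacts [hp.1 a, le_rfl]
  · have := h.sum (fun _ => 1)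
    simpa [hp.2] using this.symm

lemma Push.ne {q : γ → ℝ} {τ : α → γ} (hp : IsP p) (h : Push p τ q) {a : α} (ha : p a ≠ 0) :
    q (τ a) ≠ 0 := by
  classical
  rw [← h (τ a)]
  have := Finset.single_le_sum (f := fun a' => if τ a' = τ a then p a' else 0)
    (fun i _ => by split_ifs; exacts [hp.1 i, le_rfl]) (Finset.mem_univ a)
  simp only [if_true] at this
  exact ((pos_of_ne hp ha).trans_le this).ne'

lemma Push.id (p : α → ℝ) : Push p (fun a => a) p := by
  classical
  intro c; simp

lemma Push.comp [Fintype δ] {q : γ → ℝ} {τ : α → γ} {r : δ → ℝ} {ρ : γ → δ}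
    (h : Push p τ q) (h' : Push q ρ r) : Push p (fun a => ρ (τ a)) r := by
  classical
  intro d
  rw [← h' d]
  have := h.sum (fun c => if ρ c = d then 1 else 0)
  simpa using this

lemma mass_id (a : α) : mass p (fun a => a) a = p a := by
  classical
  simp [mass]

lemma H_id : H p (fun a => a) = -∑ a, p a * Real.log (p a) := by
  simp only [H, mass_id]

lemma glue {q : γ → ℝ} {τ : α → γ} (hp : IsP p) (h : Push p τ q) (f : γ → β) :
    ∃ r : α × γ → ℝ, IsP r ∧ Push r Prod.fst p ∧ Push r Prod.snd q ∧
      (∀ z, r z ≠ 0 → f (τ z.1) = f z.2) ∧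
      H r (fun z => z) = H p (fun a => a) + H q (fun c => c) - H q f := by
  classical
  have hq := h.isP hp
  let r : α × γ → ℝ := fun z => if f (τ z.1) = f z.2 then p z.1 * q z.2 / mass q f z.2 else 0
  have hr0 : ∀ z, 0 ≤ r z := by
    intro z; dsimp only [r]; split_ifs
    · exact div_nonneg (mul_nonneg (hp.1 _) (hq.1 _)) (mass_nonneg hq _ _)
    · exact le_rfl
  have hfst : Push r Prod.fst p := by
    intro a
    rw [Fintype.sum_prod_type, Finset.sum_eq_single a]
    · simp only [if_true, r]
      by_cases ha : p a = 0
      · simp [ha]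
      have hm := mass_pos hq f (h.ne hp ha)
      have : ∀ c, (if f (τ a) = f c then p a * q c / mass q f c else 0) =
          (p a / mass q f (τ a)) * (if f c = f (τ a) then q c else 0) := by
        intro c
        by_cases hc : f (τ a) = f c
        · rw [if_pos hc, if_pos hc.symm, mass_congr f hc]; ring
        · rw [if_neg hc, if_neg (Ne.symm hc)]; simp
      rw [Finset.sum_congr rfl fun c _ => this c, ← Finset.mul_sum]
      change p a / mass q f (τ a) * mass q f (τ a) = p a
      field_simp
    · intro b _ hb; simp [hb]
    · simp
  have hsnd : Push r Prod.snd q := by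
    intro c
    rw [Fintype.sum_prod_type_right, Finset.sum_eq_single c]
    · simp only [if_true, r]
      by_cases hc : q c = 0
      · simp [hc]
      have hm := mass_pos hq f hc
      have : ∀ a, (if f (τ a) = f c then p a * q c / mass q f c else 0) =
          p a * (if f (τ a) = f c then q c / mass q f c else 0) := by
        intro a
        split_ifs
        · ring
        · simp
      rw [Finset.sum_congr rfl fun a _ => this a,
        h.sum (fun d => if f d = f c then q c / mass q f c else 0)]
      have : ∀ d, q d * (if f d = f c then q c / mass q f c else 0) =
        (q c / mass q f c) * (if f d = f c then q d else 0) := by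
        intro d; split_ifs
        · ring
        · simp
      rw [Finset.sum_congr rfl fun c _ => this c, ← Finset.mul_sum]
      change q c / mass q f c * mass q f c = q c
      field_simp
    · intro b _ hb; simp [hb]
    · simp
  have hrP : IsP r := by
    refine ⟨hr0, ?_⟩
    have := hfst.sum (fun _ => 1)
    simpa [hp.2] using this
  refine ⟨r, hrP, hfst, hsnd, ?_, ?_⟩
  · intro z hz
    by_contra hne
    exact hz (by simp [r, hne])
  · rw [H_id, H_id, H_id]
    unfold H
    rw [← hfst.sum (fun a => Real.log (p a)), ← hsnd.sum (fun c => Real.log (q c)),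
      ← hsnd.sum (fun c => Real.log (mass q f c))]
    rw [← Finset.sum_neg_distrib, ← Finset.sum_neg_distrib, ← Finset.sum_neg_distrib,
      ← Finset.sum_neg_distrib, ← Finset.sum_add_distrib, ← Finset.sum_sub_distrib]
    refine Finset.sum_congr rfl fun z _ => ?_
    by_cases hz : r z = 0
    · simp [hz]
    have h1 := hfst.ne hrP hz
    have h2 := hsnd.ne hrP hz
    have h3 := (mass_pos hq f h2).ne'
    have hv : r z = p z.1 * q z.2 / mass q f z.2 := by
      by_contra hne
      apply hz
      simp only [r] at hne ⊢
      split_ifs at hne ⊢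
      · exact absurd rfl hne
      · rfl
    have hl : Real.log (r z) = Real.log (p z.1) + Real.log (q z.2) - Real.log (mass q f z.2) := by
      rw [hv, Real.log_div (mul_ne_zero h1 h2) h3, Real.log_mul h1 h2]
    rw [hl]; ring

end basic

theorem discrete {α : Type} [Fintype α] {p : α → ℝ} (hp : IsP p) (X Y : α → ℤ)
    (hinj : ∀ a a', X a = X a' → Y a = Y a' → a = a') :
    H p (fun a => X a - Y a) ≤ 3 * H p (fun a => X a + Y a) + 4 * H p X + 4 * H p Y
      - 5 * H p (fun a => (X a, Y a)) := by
  have hG : H p (fun a => a) ≤ H p (fun a => (X a, Y a)) := H_mono hp fun a a' _ _ e =>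
    hinj a a' (congrArg Prod.fst e) (congrArg Prod.snd e)
  have hG' : H p (fun a => (X a, Y a)) ≤ H p (fun a => a) := H_mono hp fun a a' _ _ e => by
    rw [e]
  obtain ⟨q, hq, q1, q2, qs, qH⟩ := glue hp (Push.id p) X
  have bnd : ∀ F G : α → ℤ, H q (fun v => (F v.1, G v.2)) ≤ H p F + H p G := by
    intro F G
    have := subadd hq (fun v => F v.1) (fun v => G v.2)
    rwa [q1.H F, q2.H G] at this
  obtain ⟨r, hr, r1, r2, rs, rH⟩ := glue hq (Push.id q)
    (fun v => (X v.1 + Y v.1, X v.2 + Y v.2))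
  have b1 := bnd (fun a => X a + Y a) (fun a => X a + Y a)
  obtain ⟨s, hs, s1, s2, ss, sH⟩ := glue hr r2 (fun v => (Y v.1, Y v.2))
  have b2 := bnd Y Y
  obtain ⟨t, ht, t1, t2, ts, tH⟩ := glue hs s2 (fun v => (X v.1 + Y v.1, Y v.2))
  have b3 := bnd (fun a => X a + Y a) Y
  -- projections to the four triples
  have P0 : Push t (fun z => z.1.1.1) q := (t1.comp s1).comp r1
  have P1 : Push t (fun z => z.1.1.2) q := (t1.comp s1).comp r2
  have P2 : Push t (fun z => z.1.2) q := t1.comp s2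
  have P3 : Push t (fun z => z.2) q := t2
  have sup : ∀ z, t z ≠ 0 →
      (X z.1.1.1.1 = X z.1.1.1.2 ∧ X z.1.1.2.1 = X z.1.1.2.2 ∧ X z.1.2.1 = X z.1.2.2 ∧
        X z.2.1 = X z.2.2) ∧
      (X z.1.1.1.1 + Y z.1.1.1.1 = X z.1.1.2.1 + Y z.1.1.2.1 ∧
        X z.1.1.1.2 + Y z.1.1.1.2 = X z.1.1.2.2 + Y z.1.1.2.2) ∧
      (Y z.1.1.2.1 = Y z.1.2.1 ∧ Y z.1.1.2.2 = Y z.1.2.2) ∧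
      (X z.1.2.1 + Y z.1.2.1 = X z.2.1 + Y z.2.1 ∧ Y z.1.2.2 = Y z.2.2) := by
    intro z hz
    have e3 := ts z hz
    have e2 := ss z.1 (t1.ne ht hz)
    have e1 := rs z.1.1 ((t1.comp s1).ne ht hz)
    simp only [Prod.mk.injEq] at e1 e2 e3
    exact ⟨⟨qs _ (P0.ne ht hz), qs _ (P1.ne ht hz), qs _ (P2.ne ht hz), qs _ (P3.ne ht hz)⟩,
      e1, e2, e3⟩
  have hsub := submod ht (f := fun z => (z.1.1.1, (X z.1.2.1, Y z.2.1)))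
    (g := fun z => z.2.2) (c := fun z => X z.2.2 - Y z.2.2)
    (by
      intro z z' hz hz' e
      simp only [Prod.mk.injEq] at e
      obtain ⟨e0, e1, e2⟩ := e
      have c1 : X z.1.1.1.1 = X z'.1.1.1.1 := by rw [e0]
      have c2 : Y z.1.1.1.1 = Y z'.1.1.1.1 := by rw [e0]
      have c3 : Y z.1.1.1.2 = Y z'.1.1.1.2 := by rw [e0]
      have := sup z hz
      have := sup z' hz'
      omega)
    (fun z z' _ _ e => congrArg (fun a => X a - Y a) e)
  have hall : H t (fun z => z) ≤ H t (fun z => ((z.1.1.1, (X z.1.2.1, Y z.2.1)), z.2.2)) := by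
    apply H_mono ht
    intro z z' hz hz' e
    simp only [Prod.mk.injEq] at e
    obtain ⟨⟨e0, e1, e2⟩, e3⟩ := e
    have c1 : X z.1.1.1.1 = X z'.1.1.1.1 := by rw [e0]
    have c2 : Y z.1.1.1.1 = Y z'.1.1.1.1 := by rw [e0]
    have c3 : Y z.1.1.1.2 = Y z'.1.1.1.2 := by rw [e0]
    have c4 : X z.2.2 = X z'.2.2 := by rw [e3]
    have c5 : Y z.2.2 = Y z'.2.2 := by rw [e3]
    have h1 := sup z hz
    have h2 := sup z' hz'
    refine Prod.ext (Prod.ext (Prod.ext e0 (Prod.ext ?_ ?_)) (Prod.ext ?_ ?_)) (Prod.ext ?_ e3)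
      <;> apply hinj <;> omega
  have k1 := subadd ht (fun z => z.1.1.1) (fun z => (X z.1.2.1, Y z.2.1))
  have k2 := subadd ht (fun z => X z.1.2.1) (fun z => Y z.2.1)
  have k3 : H t (fun z => z.1.1.1) = H q (fun v => v) := P0.H (fun v => v)
  have k4 : H t (fun z => X z.1.2.1) = H p X := (P2.comp q1).H X
  have k5 : H t (fun z => Y z.2.1) = H p Y := (P3.comp q1).H Y
  have k6 : H t (fun z => z.2.2) = H p (fun a => a) := (P3.comp q2).H (fun a => a)
  have k7 : H t (fun z => X z.2.2 - Y z.2.2) = H p (fun a => X a - Y a) :=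
    (P3.comp q2).H (fun a => X a - Y a)
  linarith

lemma bridge {Ω : Type} [MeasurableSpace Ω] (P : Measure Ω) [IsProbabilityMeasure P]
    {T S : Type} [Fintype T] (Z : Ω → T) (hZ : ∀ t, MeasurableSet (Z ⁻¹' {t})) (h : T → S) :
    entOf P (fun ω => h (Z ω)) = H (fun t => (P (Z ⁻¹' {t})).toReal) h / Real.log 2 := by
  classical
  set p : T → ℝ := fun t => (P (Z ⁻¹' {t})).toReal with hp
  have hm : ∀ s, (P ((fun ω => h (Z ω)) ⁻¹' {s})).toReal =
      ∑ t ∈ Finset.univ.filter (fun t => h t = s), p t := by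
    intro s
    have : (fun ω => h (Z ω)) ⁻¹' {s} =
        ⋃ t ∈ Finset.univ.filter (fun t => h t = s), Z ⁻¹' {t} := by
      ext ω; simp
    rw [this, measure_biUnion_finset, ENNReal.toReal_sum]
    · intro t _; exact measure_ne_top _ _
    · intro a _ b _ hab
      refine Set.disjoint_left.2 fun ω h1 h2 => hab ?_
      simp only [Set.mem_preimage, Set.mem_singleton_iff] at h1 h2
      rw [← h1, h2]
    · intro t _; exact hZ t
  unfold entOf
  simp only [hm]
  rw [tsum_eq_sum (s := Finset.univ.image h)]
  · unfold H
    rw [← Finset.sum_neg_distrib, Finset.sum_div,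
      ← Finset.sum_fiberwise_of_maps_to (s := Finset.univ) (t := Finset.univ.image h) (g := h)
        (fun t _ => Finset.mem_image_of_mem h (Finset.mem_univ t))]
    refine Finset.sum_congr rfl fun s _ => ?_
    rw [Finset.sum_mul, ← Finset.sum_neg_distrib]
    refine Finset.sum_congr rfl fun t ht => ?_
    have hts : h t = s := by simpa using ht
    have : mass p h t = ∑ t ∈ Finset.univ.filter (fun t => h t = s), p t := by
      unfold mass; rw [hts, Finset.sum_filter]
    rw [this, Real.logb]; ring
  · intro s hs
    have : Finset.univ.filter (fun t => h t = s) = ∅ := by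
      ext t
      simp only [Finset.mem_filter, Finset.mem_univ, true_and, Finset.notMem_empty, iff_false]
      rintro rfl
      exact hs (Finset.mem_image_of_mem h (Finset.mem_univ t))
    rw [this]; simp

lemma isP_of {Ω : Type} [MeasurableSpace Ω] (P : Measure Ω) [IsProbabilityMeasure P]
    {T : Type} [Fintype T] (Z : Ω → T) (hZ : ∀ t, MeasurableSet (Z ⁻¹' {t})) :
    IsP (fun t => (P (Z ⁻¹' {t})).toReal) := by
  classical
  refine ⟨fun t => ENNReal.toReal_nonneg, ?_⟩
  rw [← ENNReal.toReal_sum (fun t _ => measure_ne_top _ _),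
    ← measure_biUnion_finset]
  · have : (⋃ t ∈ (Finset.univ : Finset T), Z ⁻¹' {t}) = Set.univ := by
      ext ω; simp
    rw [this]; simp
  · intro a _ b _ hab
    refine Set.disjoint_left.2 fun ω h1 h2 => hab ?_
    simp only [Set.mem_preimage, Set.mem_singleton_iff] at h1 h2
    rw [← h1, h2]
  · intro t _; exact hZ t

lemma H_congr {α β δ : Type} [Fintype α] {p : α → ℝ} (hp : IsP p) {f : α → β} {g : α → δ}
    (h : ∀ a a', f a = f a' ↔ g a = g a') : H p f = H p g :=
  le_antisymm (H_mono hp fun a a' _ _ e => (h a a').2 e) (H_mono hp fun a a' _ _ e => (h a a').1 e)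

lemma dn_inj (n : ℕ) (a b : ℤ) : (a : ℝ) / 2 ^ n = (b : ℝ) / 2 ^ n ↔ a = b := by
  have : (2 : ℝ) ^ n ≠ 0 := by positivity
  rw [div_left_inj' this, Int.cast_inj]

lemma floor_mem {M : ℤ} {x : ℝ} (h : |x| ≤ (M : ℝ) - 1) : ⌊x⌋ ∈ Finset.Icc (-M) M := by
  rw [abs_le] at h
  rw [Finset.mem_Icc]
  constructor
  · rw [Int.le_floor]; push_cast; linarith
  · have := Int.floor_le x
    have h2 : ((⌊x⌋ : ℤ) : ℝ) ≤ M := by linarith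
    exact_mod_cast h2

theorem final {Ω : Type} [MeasurableSpace Ω] (P : Measure Ω) [IsProbabilityMeasure P]
    (X Y : Ω → ℝ) (hX : Measurable X) (hY : Measurable Y) (c : ℝ)
    (hc : ∀ ω, |X ω| ≤ c ∧ |Y ω| ≤ c) (n : ℕ) :
    Hn P n (fun ω => X ω - Y ω) ≤
      3 * Hn P n (fun ω => X ω + Y ω) + 4 * Hn P n X + 4 * Hn P n Y - 5 * Hn2 P n X Y + 4 := by
  classical
  set M : ℤ := ⌈(2 : ℝ) ^ n * (2 * c)⌉ + 1 with hM
  have h2n : (0 : ℝ) < 2 ^ n := by positivity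
  have hb : ∀ x : ℝ, |x| ≤ 2 * c → ⌊(2 : ℝ) ^ n * x⌋ ∈ Finset.Icc (-M) M := by
    intro x hx
    apply floor_mem
    rw [abs_mul, abs_of_pos h2n, hM]
    push_cast
    have := Int.le_ceil ((2 : ℝ) ^ n * (2 * c))
    have := mul_le_mul_of_nonneg_left hx h2n.le
    linarith
  have bX : ∀ ω, |X ω| ≤ 2 * c := fun ω => by
    have := (hc ω).1; have := abs_nonneg (X ω); linarith
  have bY : ∀ ω, |Y ω| ≤ 2 * c := fun ω => by
    have := (hc ω).2; have := abs_nonneg (Y ω); linarith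
  have bS : ∀ ω, |X ω + Y ω| ≤ 2 * c := fun ω => by
    have := abs_add_le (X ω) (Y ω); have := hc ω; linarith
  have bD : ∀ ω, |X ω - Y ω| ≤ 2 * c := fun ω => by
    have := abs_sub (X ω) (Y ω); have := hc ω; linarith
  let I := {m : ℤ // m ∈ Finset.Icc (-M) M}
  let Z : Ω → (I × I) × (I × I) := fun ω =>
    ((⟨_, hb _ (bX ω)⟩, ⟨_, hb _ (bY ω)⟩), (⟨_, hb _ (bS ω)⟩, ⟨_, hb _ (bD ω)⟩))
  have hmeas : ∀ (W : Ω → ℝ), Measurable W → ∀ m : ℤ,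
      MeasurableSet {ω | ⌊(2 : ℝ) ^ n * W ω⌋ = m} := by
    intro W hW m
    have : Measurable fun ω => ⌊(2 : ℝ) ^ n * W ω⌋ := (hW.const_mul _).floor
    exact this (measurableSet_singleton m)
  have hZ : ∀ t, MeasurableSet (Z ⁻¹' {t}) := by
    rintro ⟨⟨⟨a, ha⟩, ⟨b, hb⟩⟩, ⟨⟨d, hd⟩, ⟨e, he⟩⟩⟩
    have := ((hmeas X hX a).inter (hmeas Y hY b)).inter
      ((hmeas _ (hX.add hY) d).inter (hmeas _ (hX.sub hY) e))
    convert this using 1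
    ext ω
    simp [Z, I, Prod.ext_iff, Subtype.ext_iff]
  have hp := isP_of P Z hZ
  set p : (I × I) × (I × I) → ℝ := fun t => (P (Z ⁻¹' {t})).toReal with hpdef
  have hsup : ∀ t, p t ≠ 0 → ∃ ω, Z ω = t := by
    intro t ht
    by_contra hne
    push Not at hne
    apply ht
    have : Z ⁻¹' {t} = ∅ := by
      ext ω; simp [hne ω]
    simp [hpdef, this]
  have e1 : Hn P n X = H p (fun t => (t.1.1 : ℤ)) / Real.log 2 := by
    have := bridge P Z hZ (fun t => ((t.1.1 : ℤ) : ℝ) / 2 ^ n)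
    rw [H_congr hp (g := fun t => (t.1.1 : ℤ)) (fun a a' => dn_inj n _ _)] at this
    exact this
  have e2 : Hn P n Y = H p (fun t => (t.1.2 : ℤ)) / Real.log 2 := by
    have := bridge P Z hZ (fun t => ((t.1.2 : ℤ) : ℝ) / 2 ^ n)
    rw [H_congr hp (g := fun t => (t.1.2 : ℤ)) (fun a a' => dn_inj n _ _)] at this
    exact this
  have e3 : Hn P n (fun ω => X ω + Y ω) = H p (fun t => (t.2.1 : ℤ)) / Real.log 2 := by
    have := bridge P Z hZ (fun t => ((t.2.1 : ℤ) : ℝ) / 2 ^ n)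
    rw [H_congr hp (g := fun t => (t.2.1 : ℤ)) (fun a a' => dn_inj n _ _)] at this
    exact this
  have e4 : Hn P n (fun ω => X ω - Y ω) = H p (fun t => (t.2.2 : ℤ)) / Real.log 2 := by
    have := bridge P Z hZ (fun t => ((t.2.2 : ℤ) : ℝ) / 2 ^ n)
    rw [H_congr hp (g := fun t => (t.2.2 : ℤ)) (fun a a' => dn_inj n _ _)] at this
    exact this
  have e5 : Hn2 P n X Y = H p (fun t => ((t.1.1 : ℤ), (t.1.2 : ℤ))) / Real.log 2 := by
    have := bridge P Z hZ (fun t => (((t.1.1 : ℤ) : ℝ) / 2 ^ n, ((t.1.2 : ℤ) : ℝ) / 2 ^ n))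
    rw [H_congr hp (g := fun t => ((t.1.1 : ℤ), (t.1.2 : ℤ)))
      (fun a a' => by simp only [Prod.mk.injEq, dn_inj])] at this
    exact this
  -- the discrete inequality
  let q : I × I → ℝ := fun c => ∑ a, (if a.1 = c then p a else 0)
  have hpq : Push p Prod.fst q := fun c => by
    simp only [q]
    exact Finset.sum_congr rfl fun a _ => by congr
  have hd := discrete (hpq.isP hp) (fun a => (a.1 : ℤ)) (fun a => (a.2 : ℤ))
    (fun a a' h1 h2 => Prod.ext (Subtype.ext h1) (Subtype.ext h2))
  rw [← hpq.H (fun a => (a.1 : ℤ) - (a.2 : ℤ)), ← hpq.H (fun a => (a.1 : ℤ) + (a.2 : ℤ)),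
    ← hpq.H (fun a => (a.1 : ℤ)), ← hpq.H (fun a => (a.2 : ℤ)),
    ← hpq.H (fun a => ((a.1 : ℤ), (a.2 : ℤ)))] at hd
  have hS : H p (fun t => (t.1.1 : ℤ) + (t.1.2 : ℤ)) ≤ H p (fun t => (t.2.1 : ℤ)) + Real.log 2 := by
    have key : ∀ t, p t ≠ 0 → (t.2.1 : ℤ) = t.1.1 + t.1.2 ∨ (t.2.1 : ℤ) = t.1.1 + t.1.2 + 1 := by
      intro t ht
      obtain ⟨ω, rfl⟩ := hsup t ht
      simp only [Z, mul_add]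
      have := Int.le_floor_add ((2 : ℝ) ^ n * X ω) ((2 : ℝ) ^ n * Y ω)
      have := Int.le_floor_add_floor ((2 : ℝ) ^ n * X ω) ((2 : ℝ) ^ n * Y ω)
      omega
    apply H_perturb hp (fun t => decide ((t.2.1 : ℤ) = t.1.1 + t.1.2))
    intro a a' ha ha' h1 h2
    have k1 := key a ha
    have k2 := key a' ha'
    rw [decide_eq_decide] at h2
    omega
  have hD : H p (fun t => (t.2.2 : ℤ)) ≤ H p (fun t => (t.1.1 : ℤ) - (t.1.2 : ℤ)) + Real.log 2 := by
    have key : ∀ t, p t ≠ 0 → (t.2.2 : ℤ) = t.1.1 - t.1.2 ∨ (t.2.2 : ℤ) = t.1.1 - t.1.2 - 1 := by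
      intro t ht
      obtain ⟨ω, rfl⟩ := hsup t ht
      simp only [Z, mul_sub]
      have h1 := Int.le_floor_add ((2 : ℝ) ^ n * X ω - (2 : ℝ) ^ n * Y ω) ((2 : ℝ) ^ n * Y ω)
      have h2 := Int.le_floor_add_floor ((2 : ℝ) ^ n * X ω - (2 : ℝ) ^ n * Y ω) ((2 : ℝ) ^ n * Y ω)
      rw [sub_add_cancel] at h1 h2
      omega
    apply H_perturb hp (fun t => decide ((t.2.2 : ℤ) = t.1.1 - t.1.2))
    intro a a' ha ha' h1 h2
    have k1 := key a ha
    have k2 := key a' ha'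
    rw [decide_eq_decide] at h2
    omega
  have hl : 0 < Real.log 2 := Real.log_pos one_lt_two
  rw [e1, e2, e3, e4, e5]
  have : ∀ a b c d e : ℝ, 3 * (a / Real.log 2) + 4 * (b / Real.log 2) + 4 * (c / Real.log 2)
      - 5 * (d / Real.log 2) + 4 = (3 * a + 4 * b + 4 * c - 5 * d + 4 * Real.log 2) / Real.log 2 := by
    intro a b c d e; field_simp
  rw [this _ _ _ _ 0]
  apply div_le_div_of_nonneg_right _ hl.le
  linarith

end EDB

/-- Lemma: there is an absolute constant `A > 0` such that for all real random variables
`X, Y` with bounded ranges (not necessarily independent) and all `n`,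
`Hₙ(X − Y) ≤ 3Hₙ(X+Y) + 4Hₙ(X) + 4Hₙ(Y) − 5Hₙ(X,Y) + A`. -/
theorem entropy_difference_bound :
    ∃ A : ℝ, 0 < A ∧
      ∀ (Ω : Type) (mΩ : MeasurableSpace Ω) (P : Measure Ω),
        IsProbabilityMeasure P →
        ∀ (X Y : Ω → ℝ), Measurable X → Measurable Y →
          ∀ c : ℝ, (∀ ω, |X ω| ≤ c ∧ |Y ω| ≤ c) →
            ∀ n : ℕ,
              Hn P n (fun ω => X ω - Y ω) ≤
                3 * Hn P n (fun ω => X ω + Y ω) + 4 * Hn P n X + 4 * Hn P n Y -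
                  5 * Hn2 P n X Y + A := by
  exact ⟨4, by norm_num, fun Ω mΩ P hP X Y hX hY c hc n => EDB.final P X Y hX hY c hc n⟩
end

section
/- There is an absolute constant A > 0 such that for all independent real random variables X, Y, Z with bounded ranges and all n ∈ ℕ: (a) Hₙ(X + Y + Z) ≤ Hₙ(X + Z) + Hₙ(Y + Z) − Hₙ(Z) + A; (b) Hₙ(X + Y) ≤ Hₙ(X + Z) + Hₙ(Y + Z) − Hₙ(Z) + A; and (c) Hₙ(X − Y) ≤ Hₙ(X + Z) + Hₙ(Y + Z) − Hₙ(Z) + A. -/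
open MeasureTheory ProbabilityTheory Real

open Classical in
/-- mass of the fibre of `f` through `a` -/
noncomputable def fibMass {α S : Type*} [Fintype α] (p : α → ℝ) (f : α → S) (a : α) : ℝ :=
  ∑ b, if f b = f a then p b else 0

/-- entropy of `f` on the finite probability space `(α, p)` -/
noncomputable def finEnt {α S : Type*} [Fintype α] (p : α → ℝ) (f : α → S) : ℝ :=
  ∑ a, -(p a * Real.logb 2 (fibMass p f a))

section fin
variable {α S T U : Type*} [Fintype α] {p : α → ℝ}

lemma fibMass_nonneg (hp : ∀ a, 0 ≤ p a) (f : α → S) (a : α) : 0 ≤ fibMass p f a := by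
  unfold fibMass
  refine Finset.sum_nonneg fun b _ => ?_
  split_ifs
  · exact hp b
  · exact le_rfl

lemma le_fibMass (hp : ∀ a, 0 ≤ p a) (f : α → S) (a : α) : p a ≤ fibMass p f a := by
  classical
  unfold fibMass
  have := Finset.single_le_sum (f := fun b => if f b = f a then p b else 0) (s := Finset.univ)
    (fun b _ => by split_ifs; exacts [hp b, le_rfl]) (Finset.mem_univ a)
  simpa using this

lemma fibMass_congr (f : α → S) {a b : α} (h : f a = f b) : fibMass p f a = fibMass p f b := by
  unfold fibMass; rw [h]

lemma finEnt_mono (hp : ∀ a, 0 ≤ p a) (f : α → S) (g : α → T)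
    (h : ∀ a b, f a = f b → g a = g b) : finEnt p g ≤ finEnt p f := by
  unfold finEnt
  refine Finset.sum_le_sum fun a _ => ?_
  rcases (hp a).eq_or_lt with h0 | h0
  · simp [← h0]
  have h1 := lt_of_lt_of_le h0 (le_fibMass hp f a)
  have h2 : fibMass p f a ≤ fibMass p g a := by
    unfold fibMass
    refine Finset.sum_le_sum fun b _ => ?_
    by_cases hb : f b = f a
    · simp [hb, h _ _ hb]
    · simp only [hb, if_false]
      split_ifs
      exacts [hp b, le_rfl]
  have := Real.logb_le_logb_of_le (b := 2) (by norm_num) h1 h2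
  nlinarith

lemma finEnt_congr (hp : ∀ a, 0 ≤ p a) (f : α → S) (g : α → T)
    (h : ∀ a b, f a = f b ↔ g a = g b) : finEnt p g = finEnt p f :=
  le_antisymm (finEnt_mono hp f g fun a b => (h a b).1) (finEnt_mono hp g f fun a b => (h a b).2)

lemma bracket (hp : ∀ a, 0 ≤ p a) (k : α → S) (r : α → Prop) [DecidablePred r]
    (hr : ∀ a b, r a → r b → k a = k b) :
    ∑ a, (if r a then p a / fibMass p k a else 0) ≤ 1 := by
  classical
  by_cases hex : ∃ a0, r a0
  · obtain ⟨a0, h0⟩ := hex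
    calc ∑ a, (if r a then p a / fibMass p k a else 0)
        ≤ ∑ a, (if k a = k a0 then p a else 0) / fibMass p k a0 := by
          refine Finset.sum_le_sum fun a _ => ?_
          by_cases h : r a
          · have := hr a a0 h h0
            simp [h, this, fibMass_congr k this]
          · simp only [h, if_false]
            refine div_nonneg ?_ (fibMass_nonneg hp k a0)
            split_ifs
            exacts [hp a, le_rfl]
      _ = fibMass p k a0 / fibMass p k a0 := by
          rw [← Finset.sum_div, fibMass]
      _ ≤ 1 := div_self_le_one _
  · push Not at hex
    simp [hex]

/-- Gibbs-type inequality. -/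
lemma gibbs (hp : ∀ a, 0 ≤ p a) (hs : ∑ a, p a = 1) (w : α → ℝ)
    (hw : ∀ a, 0 < p a → 0 < w a) (h : ∑ a, p a * w a ≤ 1) :
    ∑ a, p a * Real.logb 2 (w a) ≤ 0 := by
  have hl : 0 < Real.log 2 := Real.log_pos (by norm_num)
  have : ∑ a, p a * Real.log (w a) ≤ 0 := by
    calc ∑ a, p a * Real.log (w a) ≤ ∑ a, (p a * w a - p a) := by
          refine Finset.sum_le_sum fun a _ => ?_
          rcases (hp a).eq_or_lt with h0 | h0
          · simp [← h0]
          have := Real.log_le_sub_one_of_pos (hw a h0)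
          nlinarith
      _ ≤ 0 := by rw [Finset.sum_sub_distrib, hs]; linarith
  have h2 : ∑ a, p a * Real.logb 2 (w a) = (∑ a, p a * Real.log (w a)) / Real.log 2 := by
    rw [Finset.sum_div]
    refine Finset.sum_congr rfl fun a _ => ?_
    rw [Real.logb]; ring
  rw [h2]
  exact div_nonpos_of_nonpos_of_nonneg this hl.le

lemma finEnt_le_two (hp : ∀ a, 0 ≤ p a) (hs : ∑ a, p a = 1) (d : α → ℤ)
    (hd : ∀ a, -1 ≤ d a ∧ d a ≤ 2) : finEnt p d ≤ 2 := by
  classical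
  have key := gibbs hp hs (fun a => 1 / (4 * fibMass p d a))
    (fun a h => by have := lt_of_lt_of_le h (le_fibMass hp d a); positivity) (by
      have h1 : ∀ a, p a * (1 / (4 * fibMass p d a))
          = (1/4) * ∑ s ∈ Finset.Icc (-1:ℤ) 2, (if d a = s then p a / fibMass p d a else 0) := by
        intro a
        rw [Finset.sum_ite_eq, if_pos (Finset.mem_Icc.2 (hd a))]
        by_cases h : fibMass p d a = 0
        · simp [h]
        · field_simp
      simp_rw [h1]
      rw [← Finset.mul_sum, Finset.sum_comm]
      have : ∑ s ∈ Finset.Icc (-1:ℤ) 2, ∑ a, (if d a = s then p a / fibMass p d a else 0)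
          ≤ ∑ s ∈ Finset.Icc (-1:ℤ) 2, (1:ℝ) :=
        Finset.sum_le_sum fun s _ => bracket hp d (fun a => d a = s) (fun a b h h' => h.trans h'.symm)
      simp at this
      linarith)
  have h4 : Real.logb 2 4 = 2 := by
    rw [show (4:ℝ) = 2 ^ (2:ℕ) by norm_num, Real.logb_pow]; norm_num
  have : finEnt p d - 2 = ∑ a, p a * Real.logb 2 (1 / (4 * fibMass p d a)) := by
    have : (2:ℝ) = ∑ a, p a * 2 := by rw [← Finset.sum_mul, hs]; ring
    conv_lhs => rw [this]
    rw [finEnt, ← Finset.sum_sub_distrib]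
    refine Finset.sum_congr rfl fun a _ => ?_
    rcases (hp a).eq_or_lt with h0 | h0
    · simp [← h0]
    have h5 := lt_of_lt_of_le h0 (le_fibMass hp d a)
    rw [one_div, Real.logb_inv, Real.logb_mul (by norm_num) h5.ne', h4]
    ring
  linarith

lemma ssa (hp : ∀ a, 0 ≤ p a) (hs : ∑ a, p a = 1) (f : α → S) (g : α → T) (h : α → U) :
    finEnt p (fun a => (f a, g a, h a)) + finEnt p h
      ≤ finEnt p (fun a => (f a, h a)) + finEnt p (fun a => (g a, h a)) := by
  classical
  set F := fun a => (f a, h a) with hF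
  set G := fun a => (g a, h a) with hG
  set K := fun a => (f a, g a, h a) with hK
  have key := gibbs hp hs
    (fun a => fibMass p F a * fibMass p G a / (fibMass p K a * fibMass p h a))
    (fun a h0 => by
      have h1 := lt_of_lt_of_le h0 (le_fibMass hp F a)
      have h2 := lt_of_lt_of_le h0 (le_fibMass hp G a)
      have h3 := lt_of_lt_of_le h0 (le_fibMass hp K a)
      have h4 := lt_of_lt_of_le h0 (le_fibMass hp h a)
      positivity) (by
      have e1 : ∀ a, p a * (fibMass p F a * fibMass p G a / (fibMass p K a * fibMass p h a))
          = ∑ b, ∑ c, (if h c = h b then p b * p c / fibMass p h b else 0) *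
             (if F b = F a ∧ G c = G a then p a / fibMass p K a else 0) := by
        intro a
        have : p a * (fibMass p F a * fibMass p G a / (fibMass p K a * fibMass p h a))
          = (fibMass p F a * fibMass p G a) * (p a / (fibMass p K a * fibMass p h a)) := by ring
        rw [this]
        conv_lhs => rw [fibMass, fibMass, Finset.sum_mul_sum, Finset.sum_mul]
        refine Finset.sum_congr rfl fun b _ => ?_
        rw [Finset.sum_mul]
        refine Finset.sum_congr rfl fun c _ => ?_
        by_cases hb : F b = F a
        · by_cases hc : G c = G a
          · have hb' : h b = h a := congrArg Prod.snd hb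
            have hc' : h c = h a := congrArg Prod.snd hc
            rw [if_pos hb, if_pos hc, if_pos (hc'.trans hb'.symm), if_pos ⟨hb, hc⟩,
              fibMass_congr h hb']
            rw [div_mul_div_comm, mul_comm (fibMass p h a), mul_div_assoc]
          · simp [hc]
        · simp [hb]
      simp_rw [e1]
      rw [Finset.sum_comm]
      calc ∑ b, ∑ a, ∑ c, (if h c = h b then p b * p c / fibMass p h b else 0) *
             (if F b = F a ∧ G c = G a then p a / fibMass p K a else 0)
          = ∑ b, ∑ c, (if h c = h b then p b * p c / fibMass p h b else 0) *
             ∑ a, (if F b = F a ∧ G c = G a then p a / fibMass p K a else 0) := by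
            refine Finset.sum_congr rfl fun b _ => ?_
            rw [Finset.sum_comm]
            refine Finset.sum_congr rfl fun c _ => ?_
            rw [Finset.mul_sum]
        _ ≤ ∑ b, ∑ c, (if h c = h b then p b * p c / fibMass p h b else 0) * 1 := by
            refine Finset.sum_le_sum fun b _ => Finset.sum_le_sum fun c _ => ?_
            refine mul_le_mul_of_nonneg_left ?_ ?_
            · refine bracket hp K (fun a => F b = F a ∧ G c = G a) ?_
              rintro a a' ⟨h1, h2⟩ ⟨h3, h4⟩
              have h5 := h1.symm.trans h3
              have h6 := h2.symm.trans h4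
              simp only [hF, hG, Prod.mk.injEq] at h5 h6
              simp [hK, h5, h6]
            · split_ifs
              · exact div_nonneg (mul_nonneg (hp b) (hp c)) (fibMass_nonneg hp h b)
              · exact le_rfl
        _ = ∑ b, p b * (fibMass p h b / fibMass p h b) := by
            refine Finset.sum_congr rfl fun b _ => ?_
            conv_rhs => rw [fibMass, Finset.sum_div, Finset.mul_sum]
            refine Finset.sum_congr rfl fun c _ => ?_
            split_ifs
            · rw [fibMass]; ring
            · simp
        _ ≤ ∑ b, p b * 1 := Finset.sum_le_sum fun b _ =>
            mul_le_mul_of_nonneg_left (div_self_le_one _) (hp b)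
        _ ≤ 1 := by simp [hs])
  have : (finEnt p K + finEnt p h) - (finEnt p F + finEnt p G) = ∑ a, p a *
      Real.logb 2 (fibMass p F a * fibMass p G a / (fibMass p K a * fibMass p h a)) := by
    unfold finEnt
    rw [← Finset.sum_add_distrib, ← Finset.sum_add_distrib, ← Finset.sum_sub_distrib]
    refine Finset.sum_congr rfl fun a _ => ?_
    rcases (hp a).eq_or_lt with h0 | h0
    · simp [← h0]
    have h1 := lt_of_lt_of_le h0 (le_fibMass hp F a)
    have h2 := lt_of_lt_of_le h0 (le_fibMass hp G a)
    have h3 := lt_of_lt_of_le h0 (le_fibMass hp K a)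
    have h4 := lt_of_lt_of_le h0 (le_fibMass hp h a)
    rw [Real.logb_div (by positivity) (by positivity), Real.logb_mul h1.ne' h2.ne',
      Real.logb_mul h3.ne' h4.ne']
    ring
  linarith

lemma subadd (hp : ∀ a, 0 ≤ p a) (hs : ∑ a, p a = 1) (f : α → S) (g : α → T) :
    finEnt p (fun a => (f a, g a)) ≤ finEnt p f + finEnt p g := by
  have h := ssa hp hs f g (fun _ => ())
  have h0 : finEnt p (fun _ : α => ()) = 0 := by simp [finEnt, fibMass, hs]
  rw [h0, finEnt_congr hp (fun a => (f a, g a)) (fun a => (f a, g a, ())) (by simp),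
    finEnt_congr hp f (fun a => (f a, ())) (by simp),
    finEnt_congr hp g (fun a => (g a, ())) (by simp)] at h
  linarith

lemma indep_add (hp : ∀ a, 0 ≤ p a) (f : α → S) (g : α → T)
    (h : ∀ a, fibMass p (fun a => (f a, g a)) a = fibMass p f a * fibMass p g a) :
    finEnt p (fun a => (f a, g a)) = finEnt p f + finEnt p g := by
  unfold finEnt
  rw [← Finset.sum_add_distrib]
  refine Finset.sum_congr rfl fun a _ => ?_
  rcases (hp a).eq_or_lt with h0 | h0
  · simp [← h0]
  have h1 := lt_of_lt_of_le h0 (le_fibMass hp f a)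
  have h2 := lt_of_lt_of_le h0 (le_fibMass hp g a)
  rw [h, Real.logb_mul h1.ne' h2.ne']
  ring

lemma finEnt_close (hp : ∀ a, 0 ≤ p a) (hs : ∑ a, p a = 1) (f g : α → ℤ)
    (h : ∀ a, -1 ≤ f a - g a ∧ f a - g a ≤ 2) : finEnt p f ≤ finEnt p g + 2 := by
  have h1 := finEnt_le_two hp hs (fun a => f a - g a) h
  have h2 := subadd hp hs g (fun a => f a - g a)
  have h3 := finEnt_mono hp (fun a => (g a, f a - g a)) f (by
    intro a b hab
    simp only [Prod.mk.injEq] at hab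
    omega)
  linarith

/-- The integer inequalities. -/
lemma int_ineq (hp : ∀ a, 0 ≤ p a) (hs : ∑ a, p a = 1) (x y z : α → ℤ)
    (hxy : finEnt p (fun a => (x a, y a)) = finEnt p x + finEnt p y)
    (hxyz : finEnt p (fun a => ((x a, y a), z a)) = finEnt p (fun a => (x a, y a)) + finEnt p z)
    (hxpy : finEnt p (fun a => (x a + y a, z a)) = finEnt p (fun a => x a + y a) + finEnt p z) :
    finEnt p (fun a => x a + y a + z a) + finEnt p z
      ≤ finEnt p (fun a => x a + z a) + finEnt p (fun a => y a + z a) ∧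
    finEnt p (fun a => x a + y a) + finEnt p z
      ≤ finEnt p (fun a => x a + z a) + finEnt p (fun a => y a + z a) ∧
    finEnt p (fun a => x a - y a) + finEnt p z
      ≤ finEnt p (fun a => x a + z a) + finEnt p (fun a => y a + z a) := by
  have A : finEnt p (fun a => x a + y a + z a) + finEnt p z
      ≤ finEnt p (fun a => x a + z a) + finEnt p (fun a => y a + z a) := by
    have h := ssa hp hs x y (fun a => x a + y a + z a)
    have h1 := subadd hp hs x (fun a => y a + z a)
    have h2 := subadd hp hs y (fun a => x a + z a)
    have e0 := finEnt_congr hp (fun a => ((x a, y a), z a))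
      (fun a => (x a, y a, x a + y a + z a)) (by
        intro a b; simp only [Prod.mk.injEq]; omega)
    have e1 := finEnt_congr hp (fun a => (x a, y a + z a))
      (fun a => (x a, x a + y a + z a)) (by
        intro a b; simp only [Prod.mk.injEq]; omega)
    have e2 := finEnt_congr hp (fun a => (y a, x a + z a))
      (fun a => (y a, x a + y a + z a)) (by
        intro a b; simp only [Prod.mk.injEq]; omega)
    linarith
  refine ⟨A, ?_, ?_⟩
  · have h1 := subadd hp hs (fun a => x a + y a + z a) z
    have e1 := finEnt_congr hp (fun a => (x a + y a, z a))
      (fun a => (x a + y a + z a, z a)) (by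
        intro a b; simp only [Prod.mk.injEq]; omega)
    linarith
  · have h := ssa hp hs (fun a => (x a + z a, y a + z a)) (fun a => (x a, y a))
      (fun a => x a - y a)
    have h1 := subadd hp hs (fun a => x a + z a) (fun a => y a + z a)
    have e0 := finEnt_congr hp (fun a => ((x a, y a), z a))
      (fun a => ((x a + z a, y a + z a), (x a, y a), x a - y a)) (by
        intro a b; simp only [Prod.mk.injEq]; omega)
    have e1 := finEnt_congr hp (fun a => (x a + z a, y a + z a))
      (fun a => ((x a + z a, y a + z a), x a - y a)) (by
        intro a b; simp only [Prod.mk.injEq]; omega)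
    have e2 := finEnt_congr hp (fun a => (x a, y a))
      (fun a => ((x a, y a), x a - y a)) (by
        intro a b; simp only [Prod.mk.injEq]; omega)
    linarith

end fin

section link
variable {Ω : Type*} [MeasurableSpace Ω] {P : Measure Ω} [IsProbabilityMeasure P]
  {α S : Type*} [Fintype α] {W : Ω → α}

open Classical in
lemma real_fiber (hW : ∀ a, MeasurableSet (W ⁻¹' {a})) (g : α → S) (s : S) :
    (P ((fun ω => g (W ω)) ⁻¹' {s})).toReal
      = ∑ b, if g b = s then (P (W ⁻¹' {b})).toReal else 0 := by
  have h1 : (fun ω => g (W ω)) ⁻¹' {s} = ⋃ b ∈ Finset.univ.filter (fun b => g b = s), W ⁻¹' {b} := by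
    ext ω; simp
  have h2 := measureReal_biUnion_finset (μ := P) (s := Finset.univ.filter (fun b => g b = s))
    (f := fun b => W ⁻¹' {b}) (by
      intro a _ b _ hab
      refine Set.disjoint_left.2 fun ω h h' => hab ?_
      simp at h h'
      exact h.symm.trans h') (fun b _ => hW b)
  rw [← Finset.sum_filter, h1]
  exact h2

lemma fiber_sum (hW : ∀ a, MeasurableSet (W ⁻¹' {a})) :
    ∑ b, (P (W ⁻¹' {b})).toReal = 1 := by
  have := real_fiber (P := P) hW (fun _ => ()) ()
  have h : (fun _ : Ω => ()) ⁻¹' {()} = Set.univ := by ext; simp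
  rw [h] at this
  simpa using this.symm

lemma entOf_eq_s15 (hW : ∀ a, MeasurableSet (W ⁻¹' {a})) (g : α → S) :
    entOf P (fun ω => g (W ω)) = finEnt (fun a => (P (W ⁻¹' {a})).toReal) g := by
  classical
  unfold entOf finEnt
  rw [tsum_eq_sum (s := Finset.univ.image g)]
  · rw [← Finset.sum_fiberwise_of_maps_to (s := Finset.univ) (t := Finset.univ.image g) (g := g)
      (fun a _ => Finset.mem_image_of_mem g (Finset.mem_univ a))]
    refine Finset.sum_congr rfl fun s _ => ?_
    have : ∀ a ∈ Finset.univ.filter (fun a => g a = s),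
        -((P (W ⁻¹' {a})).toReal * Real.logb 2 (fibMass (fun a => (P (W ⁻¹' {a})).toReal) g a))
        = (P (W ⁻¹' {a})).toReal * -Real.logb 2 (P ((fun ω => g (W ω)) ⁻¹' {s})).toReal := by
      intro a ha
      simp only [Finset.mem_filter, Finset.mem_univ, true_and] at ha
      rw [real_fiber hW g s, fibMass, ha]
      ring
    rw [Finset.sum_congr rfl this, ← Finset.sum_mul, Finset.sum_filter, ← real_fiber hW g s]
    ring
  · intro s hs
    have : (fun ω => g (W ω)) ⁻¹' {s} = ∅ := by
      ext ω
      simp only [Set.mem_preimage, Set.mem_singleton_iff, Set.mem_empty_iff_false, iff_false]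
      rintro rfl
      exact hs (Finset.mem_image_of_mem g (Finset.mem_univ _))
    rw [this]; simp

lemma fibMass_eq (hW : ∀ a, MeasurableSet (W ⁻¹' {a})) (g : α → S) (a : α) :
    fibMass (fun a => (P (W ⁻¹' {a})).toReal) g a
      = (P ((fun ω => g (W ω)) ⁻¹' {g a})).toReal := by
  rw [real_fiber hW, fibMass]

lemma indep_fin (hW : ∀ a, MeasurableSet (W ⁻¹' {a})) {T : Type*}
    [MeasurableSpace S] [MeasurableSpace T] [MeasurableSingletonClass S]
    [MeasurableSingletonClass T] (f : α → S) (g : α → T)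
    (h : IndepFun (fun ω => f (W ω)) (fun ω => g (W ω)) P) :
    finEnt (fun a => (P (W ⁻¹' {a})).toReal) (fun a => (f a, g a)) =
      finEnt (fun a => (P (W ⁻¹' {a})).toReal) f + finEnt (fun a => (P (W ⁻¹' {a})).toReal) g := by
  refine indep_add (fun a => ENNReal.toReal_nonneg) f g fun a => ?_
  rw [fibMass_eq hW, fibMass_eq hW, fibMass_eq hW]
  have := h.measure_inter_preimage_eq_mul {f a} {g a} (measurableSet_singleton _)
    (measurableSet_singleton _)
  rw [← ENNReal.toReal_mul, ← this]
  congr 2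
  ext ω; simp

lemma Hn_eq_s15 (hW : ∀ a, MeasurableSet (W ⁻¹' {a})) (n : ℕ) (X : Ω → ℝ) (g : α → ℤ)
    (h : ∀ ω, g (W ω) = ⌊(2:ℝ) ^ n * X ω⌋) :
    Hn P n X = finEnt (fun a => (P (W ⁻¹' {a})).toReal) g := by
  have : (fun ω => Dn n (X ω)) = fun ω => (fun a => (g a : ℝ) / (2:ℝ) ^ n) (W ω) := by
    funext ω; simp [Dn, h]
  rw [Hn, this, entOf_eq_s15 hW (fun a => (g a : ℝ) / (2:ℝ) ^ n)]
  refine finEnt_congr (fun a => ENNReal.toReal_nonneg) _ _ fun a b => ?_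
  have : (2:ℝ) ^ n ≠ 0 := by positivity
  rw [div_left_inj' this]
  exact_mod_cast Iff.rfl

end link

/-- Lemma (Plünnecke–Ruzsa-type inequalities for discretized entropy): there is an absolute
constant `A > 0` such that for all mutually independent real random variables `X, Y, Z` with
bounded ranges and all `n`: (a) `Hₙ(X+Y+Z) ≤ Hₙ(X+Z) + Hₙ(Y+Z) − Hₙ(Z) + A`;
(b) `Hₙ(X+Y) ≤ Hₙ(X+Z) + Hₙ(Y+Z) − Hₙ(Z) + A`;
(c) `Hₙ(X−Y) ≤ Hₙ(X+Z) + Hₙ(Y+Z) − Hₙ(Z) + A`. -/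
theorem entropy_sum_triple_bound :
    ∃ A : ℝ, 0 < A ∧
      ∀ (Ω : Type) (mΩ : MeasurableSpace Ω) (P : Measure Ω),
        IsProbabilityMeasure P →
        ∀ (X Y Z : Ω → ℝ), Measurable X → Measurable Y → Measurable Z →
          IndepFun X Y P →
          IndepFun (fun ω => (X ω, Y ω)) Z P →
          ∀ c : ℝ, (∀ ω, |X ω| ≤ c ∧ |Y ω| ≤ c ∧ |Z ω| ≤ c) →
            ∀ n : ℕ,
              Hn P n (fun ω => X ω + Y ω + Z ω) ≤
                  Hn P n (fun ω => X ω + Z ω) + Hn P n (fun ω => Y ω + Z ω) -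
                    Hn P n Z + A ∧
              Hn P n (fun ω => X ω + Y ω) ≤
                  Hn P n (fun ω => X ω + Z ω) + Hn P n (fun ω => Y ω + Z ω) -
                    Hn P n Z + A ∧
              Hn P n (fun ω => X ω - Y ω) ≤
                  Hn P n (fun ω => X ω + Z ω) + Hn P n (fun ω => Y ω + Z ω) -
                    Hn P n Z + A := by
  refine ⟨6, by norm_num, ?_⟩
  intro Ω mΩ P hP X Y Z hX hY hZ hXY hXYZ c hc n
  let R : Fin 8 → Ω → ℝ := ![X, Y, Z, fun ω => X ω + Z ω, fun ω => Y ω + Z ω,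
    fun ω => X ω + Y ω + Z ω, fun ω => X ω + Y ω, fun ω => X ω - Y ω]
  have hR : ∀ i, Measurable (R i) := by
    intro i; fin_cases i <;> simp [R] <;> fun_prop
  have hRb : ∀ i ω, |R i ω| ≤ 3 * c := by
    intro i ω
    obtain ⟨h1, h2, h3⟩ := hc ω
    rw [abs_le] at *
    fin_cases i <;> simp [R] <;> constructor <;> linarith
  let V : Ω → Fin 8 → ℤ := fun ω i => ⌊(2:ℝ) ^ n * R i ω⌋
  have hV : Measurable V := measurable_pi_iff.2 fun i => ((hR i).const_mul _).floor
  have hfin : (Set.range V).Finite := by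
    refine (Set.finite_Icc (fun _ : Fin 8 => ⌊-((2:ℝ) ^ n * (3 * c))⌋)
      (fun _ => ⌊(2:ℝ) ^ n * (3 * c)⌋)).subset ?_
    rintro _ ⟨ω, rfl⟩
    have h2 : (0:ℝ) < 2 ^ n := by positivity
    refine ⟨fun i => Int.floor_le_floor ?_, fun i => Int.floor_le_floor ?_⟩
    · have := (abs_le.1 (hRb i ω)).1
      nlinarith
    · have := (abs_le.1 (hRb i ω)).2
      nlinarith
  have : Fintype (Set.range V) := hfin.fintype
  let W : Ω → Set.range V := fun ω => ⟨V ω, ω, rfl⟩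
  have hW : ∀ a, MeasurableSet (W ⁻¹' {a}) := by
    intro a
    have : W ⁻¹' {a} = V ⁻¹' {a.1} := by
      ext ω; simp [W, Subtype.ext_iff]
    rw [this]
    exact hV (measurableSet_singleton _)
  have E : ∀ i, Hn P n (R i) = finEnt (fun a => (P (W ⁻¹' {a})).toReal)
      (fun a : Set.range V => a.1 i) := fun i => Hn_eq_s15 hW n (R i) _ fun ω => rfl
  have E2 := E 2
  have E3 := E 3
  have E4 := E 4
  have E5 := E 5
  have E6 := E 6
  have E7 := E 7
  simp only [R, Matrix.cons_val] at E2 E3 E4 E5 E6 E7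
  have hp : ∀ a, 0 ≤ (fun a => (P (W ⁻¹' {a})).toReal) a := fun a => ENNReal.toReal_nonneg
  have hs := fiber_sum (P := P) hW
  have mf : Measurable fun t : ℝ => ⌊(2:ℝ) ^ n * t⌋ := (measurable_id.const_mul _).floor
  obtain ⟨I1, I2, I3⟩ := int_ineq hp hs (fun a => a.1 0) (fun a => a.1 1) (fun a => a.1 2)
    (indep_fin hW _ _ (hXY.comp mf mf))
    (indep_fin hW (fun a => (a.1 0, a.1 1)) (fun a => a.1 2)
      (hXYZ.comp (φ := fun t : ℝ × ℝ => (⌊(2:ℝ) ^ n * t.1⌋, ⌊(2:ℝ) ^ n * t.2⌋))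
        ((mf.comp measurable_fst).prodMk (mf.comp measurable_snd)) mf))
    (indep_fin hW (fun a => a.1 0 + a.1 1) (fun a => a.1 2)
      (hXYZ.comp (φ := fun t : ℝ × ℝ => ⌊(2:ℝ) ^ n * t.1⌋ + ⌊(2:ℝ) ^ n * t.2⌋)
        ((mf.comp measurable_fst).add (mf.comp measurable_snd)) mf))
  have fl : ∀ ω, (V ω 3 - (V ω 0 + V ω 2) = 0 ∨ V ω 3 - (V ω 0 + V ω 2) = 1) ∧
      (V ω 4 - (V ω 1 + V ω 2) = 0 ∨ V ω 4 - (V ω 1 + V ω 2) = 1) ∧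
      (-1 ≤ V ω 5 - (V ω 0 + V ω 1 + V ω 2) ∧ V ω 5 - (V ω 0 + V ω 1 + V ω 2) ≤ 2) ∧
      (-1 ≤ V ω 6 - (V ω 0 + V ω 1) ∧ V ω 6 - (V ω 0 + V ω 1) ≤ 2) ∧
      (-1 ≤ V ω 7 - (V ω 0 - V ω 1) ∧ V ω 7 - (V ω 0 - V ω 1) ≤ 2) := by
    intro ω
    have L : ∀ i, (V ω i : ℝ) ≤ (2:ℝ) ^ n * R i ω ∧ (2:ℝ) ^ n * R i ω < V ω i + 1 :=
      fun i => ⟨Int.floor_le _, Int.lt_floor_add_one _⟩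
    have L0 := L 0
    have L1 := L 1
    have L2 := L 2
    have L3 := L 3
    have L4 := L 4
    have L5 := L 5
    have L6 := L 6
    have L7 := L 7
    simp only [R, Matrix.cons_val, mul_add, mul_sub] at L0 L1 L2 L3 L4 L5 L6 L7
    generalize V ω = v at *
    generalize (2:ℝ) ^ n * X ω = x at *
    generalize (2:ℝ) ^ n * Y ω = y at *
    generalize (2:ℝ) ^ n * Z ω = z at *
    have a1 : v 3 < v 0 + v 2 + 2 := by
      have : (v 3 : ℝ) < v 0 + v 2 + 2 := by linarith
      exact_mod_cast this
    have a2 : v 0 + v 2 < v 3 + 1 := by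
      have : (v 0 + v 2 : ℝ) < v 3 + 1 := by linarith
      exact_mod_cast this
    have b1 : v 4 < v 1 + v 2 + 2 := by
      have : (v 4 : ℝ) < v 1 + v 2 + 2 := by linarith
      exact_mod_cast this
    have b2 : v 1 + v 2 < v 4 + 1 := by
      have : (v 1 + v 2 : ℝ) < v 4 + 1 := by linarith
      exact_mod_cast this
    have c1 : v 5 < v 0 + v 1 + v 2 + 3 := by
      have : (v 5 : ℝ) < v 0 + v 1 + v 2 + 3 := by linarith
      exact_mod_cast this
    have c2 : v 0 + v 1 + v 2 < v 5 + 1 := by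
      have : (v 0 + v 1 + v 2 : ℝ) < v 5 + 1 := by linarith
      exact_mod_cast this
    have d1 : v 6 < v 0 + v 1 + 2 := by
      have : (v 6 : ℝ) < v 0 + v 1 + 2 := by linarith
      exact_mod_cast this
    have d2 : v 0 + v 1 < v 6 + 1 := by
      have : (v 0 + v 1 : ℝ) < v 6 + 1 := by linarith
      exact_mod_cast this
    have e1 : v 7 < v 0 - v 1 + 1 := by
      have : (v 7 : ℝ) < v 0 - v 1 + 1 := by linarith
      exact_mod_cast this
    have e2 : v 0 - v 1 < v 7 + 2 := by
      have : (v 0 - v 1 : ℝ) < v 7 + 2 := by linarith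
      exact_mod_cast this
    omega
  have fl' : ∀ a : Set.range V, _ := fun a => a.2.choose_spec ▸ fl a.2.choose
  have C3 := finEnt_close hp hs (fun a => a.1 0 + a.1 2) (fun a => a.1 3) (by
    intro a; have := fl' a; omega)
  have C4 := finEnt_close hp hs (fun a => a.1 1 + a.1 2) (fun a => a.1 4) (by
    intro a; have := fl' a; omega)
  have C5 := finEnt_close hp hs (fun a => a.1 5) (fun a => a.1 0 + a.1 1 + a.1 2) (by
    intro a; have := fl' a; omega)
  have C6 := finEnt_close hp hs (fun a => a.1 6) (fun a => a.1 0 + a.1 1) (by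
    intro a; have := fl' a; omega)
  have C7 := finEnt_close hp hs (fun a => a.1 7) (fun a => a.1 0 - a.1 1) (by
    intro a; have := fl' a; omega)
  rw [E2, E3, E4, E5, E6, E7]
  refine ⟨?_, ?_, ?_⟩ <;> linarith
end
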